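/- arXiv:1604.00618 — 2 statements merged into one kernel-verified Lean document; each statement's English description precedes it below -/
import Mathlib

section
/- Let (Ω, Σ, μ) be a measure space and let Y be a Hilbert space. Then the pair (L₁(μ, c₀), Y) has the BPBp for compact operators, and for every measure space (Ω', Σ', ν) and every 1 < p < ∞, the pair (L₁(μ, L_p(ν)), Y) has the BPBp for compact operators. -/
open MeasureTheory
open scoped ENNReal NNReal

noncomputable section

/-- A pair `(X, Y)` of normed spaces has the Bishop–Phelps–Bollobás property for compact
operators with the function `η`. -/
def BPBpCompactWith (𝕜 : Type*) [RCLike 𝕜] (X Y : Type*) [NormedAddCommGroup X]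
    [NormedSpace 𝕜 X] [NormedAddCommGroup Y] [NormedSpace 𝕜 Y] (η : ℝ → ℝ) : Prop :=
  ∀ ε : ℝ, 0 < ε → 0 < η ε ∧
    ∀ T : X →L[𝕜] Y, IsCompactOperator T → ‖T‖ = 1 →
      ∀ x₀ : X, ‖x₀‖ = 1 → 1 - η ε < ‖T x₀‖ →
        ∃ S : X →L[𝕜] Y, ∃ x₁ : X, IsCompactOperator S ∧ ‖S‖ = 1 ∧ ‖x₁‖ = 1 ∧
          ‖S x₁‖ = 1 ∧ ‖x₀ - x₁‖ < ε ∧ ‖S - T‖ < ε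

/-- A pair `(X, Y)` has the Bishop–Phelps–Bollobás property for compact operators. -/
def BPBpCompact (𝕜 : Type*) [RCLike 𝕜] (X Y : Type*) [NormedAddCommGroup X]
    [NormedSpace 𝕜 X] [NormedAddCommGroup Y] [NormedSpace 𝕜 Y] : Prop :=
  ∃ η : ℝ → ℝ, BPBpCompactWith 𝕜 X Y η

set_option linter.unusedSectionVars false
set_option linter.unusedSimpArgs false
set_option linter.unusedVariables false


section PartA
variable {𝕜 : Type*} [RCLike 𝕜] {X : Type*} [NormedAddCommGroup X] [NormedSpace 𝕜 X]
  [NormedSpace ℝ X] [IsScalarTower ℝ 𝕜 X]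
  {Ω : Type*} [MeasurableSpace Ω] {μ : Measure Ω}

variable (𝕜) in
def IndL {B : Set Ω} (hB : MeasurableSet B) : Lp X 1 μ →L[𝕜] Lp X 1 μ :=
  LinearMap.mkContinuous
    { toFun := fun f => ((Lp.memLp f).indicator hB).toLp _
      map_add' := by
        intro f g
        rw [← MemLp.toLp_add]
        apply MemLp.toLp_congr
        filter_upwards [Lp.coeFn_add f g] with ω h
        by_cases hω : ω ∈ B
        · simpa only [Set.indicator_of_mem hω, Pi.add_apply] using h
        · simp [hω]
      map_smul' := by
        intro c f
        rw [RingHom.id_apply, ← MemLp.toLp_const_smul]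
        apply MemLp.toLp_congr
        filter_upwards [Lp.coeFn_smul c f] with ω h
        by_cases hω : ω ∈ B <;> simp [hω, h] } 1 (by
    intro f
    rw [one_mul]
    apply Lp.norm_le_norm_of_ae_le
    simp only [LinearMap.coe_mk, AddHom.coe_mk]
    filter_upwards [((Lp.memLp f).indicator hB).coeFn_toLp] with ω h
    rw [h]
    exact norm_indicator_le_norm_self _ _)

theorem IndL_coe {B : Set Ω} (hB : MeasurableSet B) (f : Lp X 1 μ) :
    (IndL 𝕜 hB f : Ω → X) =ᵐ[μ] B.indicator f :=
  ((Lp.memLp f).indicator hB).coeFn_toLp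

theorem Lp_int (f : Lp X 1 μ) : Integrable f μ := L1.integrable_coeFn f

theorem norm_IndL {B : Set Ω} (hB : MeasurableSet B) (f : Lp X 1 μ) :
    ‖IndL 𝕜 hB f‖ = ∫ x in B, ‖f x‖ ∂μ := by
  rw [L1.norm_eq_integral_norm, ← integral_indicator hB]
  apply integral_congr_ae
  filter_upwards [IndL_coe (𝕜 := 𝕜) hB f] with ω h
  rw [h, norm_indicator_eq_indicator_norm]

variable (𝕜) in
def JL (B : Set Ω) : Lp X 1 μ →L[𝕜] X :=
  haveI : SMulCommClass ℝ 𝕜 X := IsScalarTower.to_smulCommClass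
  LinearMap.mkContinuous
    { toFun := fun f => ∫ x in B, f x ∂μ
      map_add' := by
        intro f g
        rw [← integral_add (Lp_int f).integrableOn (Lp_int g).integrableOn]
        apply integral_congr_ae
        exact ae_restrict_of_ae (Lp.coeFn_add f g)
      map_smul' := by
        intro c f
        rw [RingHom.id_apply, ← integral_smul]
        apply integral_congr_ae
        exact ae_restrict_of_ae (Lp.coeFn_smul c f) } 1 (by
    intro f
    rw [one_mul, L1.norm_eq_integral_norm]
    refine (norm_integral_le_integral_norm _).trans ?_
    exact setIntegral_le_integral (Lp_int f).norm (Filter.Eventually.of_forall fun _ => norm_nonneg _))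

theorem JL_apply (B : Set Ω) (f : Lp X 1 μ) : JL 𝕜 B f = ∫ x in B, f x ∂μ := rfl

theorem norm_JL_le {B : Set Ω} (hB : MeasurableSet B) (f : Lp X 1 μ) :
    ‖JL 𝕜 B f‖ ≤ ‖IndL 𝕜 hB f‖ := by
  rw [norm_IndL, JL_apply]
  exact norm_integral_le_integral_norm _

theorem JL_IndL {B C : Set Ω} (hC : MeasurableSet C) (h : C ⊆ B) (f : Lp X 1 μ) :
    JL 𝕜 B (IndL 𝕜 hC f) = JL 𝕜 C f := by
  rw [JL_apply, JL_apply, integral_congr_ae (ae_restrict_of_ae (IndL_coe hC f)),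
    setIntegral_indicator hC, Set.inter_eq_right.2 h]

theorem IndL_IndL {B C : Set Ω} (hB : MeasurableSet B) (hC : MeasurableSet C) (h : C ⊆ B)
    (f : Lp X 1 μ) : IndL 𝕜 hB (IndL 𝕜 hC f) = IndL 𝕜 hC f := by
  apply Lp.ext
  filter_upwards [IndL_coe (𝕜 := 𝕜) hB (IndL 𝕜 hC f), IndL_coe (𝕜 := 𝕜) hC f] with ω h1 h2
  rw [h1]
  by_cases hω : ω ∈ B
  · simp [hω]
  · rw [h2]
    have : ω ∉ C := fun h' => hω (h h')
    simp [hω, this]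

theorem norm_IndL_le {B : Set Ω} (hB : MeasurableSet B) (f : Lp X 1 μ) :
    ‖IndL 𝕜 hB f‖ ≤ ‖f‖ := by
  rw [norm_IndL, L1.norm_eq_integral_norm]
  exact setIntegral_le_integral (Lp_int f).norm (Filter.Eventually.of_forall fun _ => norm_nonneg _)

variable (𝕜) in
def chiL {B : Set Ω} (hB : MeasurableSet B) (hf : μ B ≠ ∞) : X →L[𝕜] Lp X 1 μ :=
  LinearMap.mkContinuous
    { toFun := fun x => indicatorConstLp 1 hB hf x
      map_add' := by
        intro x y
        exact indicatorConstLp_add.symm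
      map_smul' := by
        intro c x
        simp only [indicatorConstLp, RingHom.id_apply]
        rw [← MemLp.toLp_const_smul]
        apply MemLp.toLp_congr
        refine Filter.Eventually.of_forall fun ω => ?_
        by_cases hω : ω ∈ B <;> simp [hω] } (μ.real B) (by
    intro x
    simp only [LinearMap.coe_mk, AddHom.coe_mk]
    rw [norm_indicatorConstLp one_ne_zero ENNReal.one_ne_top]
    simp [mul_comm])

theorem chiL_apply {B : Set Ω} (hB : MeasurableSet B) (hf : μ B ≠ ∞) (x : X) :
    chiL 𝕜 hB hf x = indicatorConstLp 1 hB hf x := rfl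

theorem norm_chiL {B : Set Ω} (hB : MeasurableSet B) (hf : μ B ≠ ∞) (x : X) :
    ‖chiL 𝕜 hB hf x‖ = μ.real B * ‖x‖ := by
  rw [chiL_apply, norm_indicatorConstLp one_ne_zero ENNReal.one_ne_top]
  simp [mul_comm]

theorem chiL_coe {B : Set Ω} (hB : MeasurableSet B) (hf : μ B ≠ ∞) (x : X) :
    (chiL 𝕜 hB hf x : Ω → X) =ᵐ[μ] B.indicator fun _ => x :=
  indicatorConstLp_coeFn (hs := hB) (hμs := hf)

theorem IndL_chiL {B C : Set Ω} (hB : MeasurableSet B) (hC : MeasurableSet C)  (hf : μ C ≠ ∞)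
    (h : μ (B ∩ C) ≠ ∞) (x : X) : IndL 𝕜 hB (chiL 𝕜 hC hf x) = chiL 𝕜 (hB.inter hC) h x := by
  apply Lp.ext
  filter_upwards [IndL_coe (𝕜 := 𝕜) hB (chiL 𝕜 hC hf x), chiL_coe (𝕜 := 𝕜) hC hf x,
    chiL_coe (𝕜 := 𝕜) (hB.inter hC) h x] with ω h1 h2 h3
  rw [h1, h3]
  by_cases hω : ω ∈ B <;> by_cases hω' : ω ∈ C <;> simp [hω, hω', h2]

theorem JL_chiL [CompleteSpace X] {B C : Set Ω} (hB : MeasurableSet B) (hC : MeasurableSet C)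
    (hf : μ C ≠ ∞) (x : X) :
    JL 𝕜 B (chiL 𝕜 hC hf x) = (μ.real (B ∩ C) : 𝕜) • x := by
  rw [JL_apply, chiL_apply, setIntegral_indicatorConstLp hB, Set.inter_comm,
    RCLike.real_smul_eq_coe_smul (K := 𝕜)]

theorem key_bound [CompleteSpace X] {Y : Type*} [NormedAddCommGroup Y] [NormedSpace 𝕜 Y]
    (T : Lp X 1 μ →L[𝕜] Y) (R : X →L[𝕜] Y) (ε : ℝ) {B : Set Ω} (hB : MeasurableSet B)
    (hf : μ B ≠ ∞)
    (h : ∀ D (hD : MeasurableSet D) (hDf : μ D ≠ ∞), D ⊆ B → ∀ x,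
      ‖T (chiL 𝕜 hD hDf x) - (μ.real D : 𝕜) • R x‖ ≤ ε * (μ.real D * ‖x‖)) (f : Lp X 1 μ) :
    ‖T (IndL 𝕜 hB f) - R (JL 𝕜 B f)‖ ≤ ε * ‖IndL 𝕜 hB f‖ := by
  induction f using Lp.induction ENNReal.one_ne_top with
  | indicatorConst c hs hμs =>
    rename_i s
    rw [Lp.simpleFunc.coe_indicatorConst, ← chiL_apply (𝕜 := 𝕜)]
    have hfi : μ (B ∩ s) ≠ ∞ := ne_top_of_le_ne_top hf (measure_mono Set.inter_subset_left)
    rw [IndL_chiL hB hs _ hfi, JL_chiL hB hs, map_smul, norm_chiL]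
    exact h _ _ _ Set.inter_subset_left _
  | add hf hg hd h1 h2 =>
    rename_i f g
    have : ‖IndL 𝕜 hB (hf.toLp f + hg.toLp g)‖
        = ‖IndL 𝕜 hB (hf.toLp f)‖ + ‖IndL 𝕜 hB (hg.toLp g)‖ := by
      rw [norm_IndL, norm_IndL, norm_IndL, ← integral_add (Lp_int _).norm.integrableOn
        (Lp_int _).norm.integrableOn]
      apply integral_congr_ae
      apply ae_restrict_of_ae
      filter_upwards [Lp.coeFn_add (hf.toLp f) (hg.toLp g), hf.coeFn_toLp, hg.coeFn_toLp]
        with ω e1 e2 e3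
      rw [e1, Pi.add_apply, e2, e3]
      by_cases hω : f ω = 0
      · simp [hω]
      · have : g ω = 0 := by
          by_contra h'
          exact Set.disjoint_left.1 hd (Function.mem_support.2 hω) (Function.mem_support.2 h')
        simp [this]
    rw [this]
    simp only [map_add]
    calc _ = ‖(T (IndL 𝕜 hB (hf.toLp f)) - R (JL 𝕜 B (hf.toLp f))) +
          (T (IndL 𝕜 hB (hg.toLp g)) - R (JL 𝕜 B (hg.toLp g)))‖ := by congr 1; abel
      _ ≤ _ := norm_add_le _ _
      _ ≤ _ := by linarith
  | isClosed =>
    apply isClosed_le <;> fun_prop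

end PartA

section PartB
variable {𝕜 : Type*} [RCLike 𝕜] {X : Type*} [NormedAddCommGroup X] [NormedSpace 𝕜 X]
  [NormedSpace ℝ X] [IsScalarTower ℝ 𝕜 X]
  {Ω : Type*} [MeasurableSpace Ω] {μ : Measure Ω}

theorem IndL_union {B C : Set Ω} (hB : MeasurableSet B) (hC : MeasurableSet C)
    (hd : Disjoint B C) (f : Lp X 1 μ) :
    IndL 𝕜 (hB.union hC) f = IndL 𝕜 hB f + IndL 𝕜 hC f := by
  apply Lp.ext
  filter_upwards [IndL_coe (𝕜 := 𝕜) hB f, IndL_coe (𝕜 := 𝕜) hC f,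
    IndL_coe (𝕜 := 𝕜) (hB.union hC) f, Lp.coeFn_add (IndL 𝕜 hB f) (IndL 𝕜 hC f)] with ω h1 h2 h3 h4
  rw [h4, Pi.add_apply, h1, h2, h3, Set.indicator_union_of_disjoint hd]

theorem IndL_congr {B C : Set Ω} (hB : MeasurableSet B) (hC : MeasurableSet C) (h : B = C)
    (f : Lp X 1 μ) : IndL 𝕜 hB f = IndL 𝕜 hC f := by
  subst h; rfl

theorem IndL_empty (h : MeasurableSet (∅ : Set Ω)) (f : Lp X 1 μ) : IndL 𝕜 h f = 0 := by
  rw [← norm_eq_zero, norm_IndL]; simp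

theorem IndL_hasSum (f : Lp X 1 μ) (D : ℕ → Set Ω) (hD : ∀ i, MeasurableSet (D i))
    (hd : Pairwise (Function.onFun Disjoint D)) :
    HasSum (fun i => IndL 𝕜 (hD i) f) (IndL 𝕜 (MeasurableSet.iUnion hD) f) := by
  have hs : Summable (fun i => ‖IndL 𝕜 (hD i) f‖) := by
    simp_rw [norm_IndL]
    exact (hasSum_integral_iUnion hD hd (Lp_int f).norm.integrableOn).summable
  rw [hasSum_iff_tendsto_nat_of_summable_norm hs]
  have hU : ∀ n, MeasurableSet (⋃ i ∈ Finset.range n, D i) :=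
    fun n => Finset.measurableSet_biUnion _ (fun i _ => hD i)
  have hps : ∀ n, ∑ i ∈ Finset.range n, IndL 𝕜 (hD i) f = IndL 𝕜 (hU n) f := by
    intro n
    induction n with
    | zero =>
      rw [IndL_congr (hU 0) MeasurableSet.empty (by simp), IndL_empty]; simp
    | succ n ih =>
      rw [Finset.sum_range_succ, ih, ← IndL_union]
      · apply IndL_congr
        rw [Finset.range_add_one, Finset.set_biUnion_insert, Set.union_comm]
      · rw [Set.disjoint_iUnion₂_left]
        intro i hi
        exact hd (by simp at hi; omega)
  have hV : ∀ n, MeasurableSet ((⋃ i, D i) \ ⋃ i ∈ Finset.range n, D i) :=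
    fun n => (MeasurableSet.iUnion hD).diff (hU n)
  have hdiff : ∀ n, IndL 𝕜 (MeasurableSet.iUnion hD) f - IndL 𝕜 (hU n) f = IndL 𝕜 (hV n) f := by
    intro n
    rw [sub_eq_iff_eq_add, ← IndL_union _ _ Set.disjoint_sdiff_left]
    apply IndL_congr
    rw [Set.diff_union_of_subset]
    exact Set.iUnion₂_subset fun i _ => Set.subset_iUnion D i
  rw [tendsto_iff_norm_sub_tendsto_zero]
  simp_rw [hps, norm_sub_rev _ (IndL 𝕜 (MeasurableSet.iUnion hD) f), hdiff, norm_IndL]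
  have := tendsto_setIntegral_of_antitone (μ := μ) (f := fun x => ‖f x‖) hV ?_ ⟨0, (Lp_int f).norm.integrableOn⟩
  · convert this using 2
    have he : (⋂ n, (⋃ i, D i) \ ⋃ i ∈ Finset.range n, D i) = ∅ := by
      ext ω
      simp only [Set.mem_iInter, Set.mem_diff, Set.mem_iUnion, Set.mem_empty_iff_false, iff_false]
      intro h
      obtain ⟨i, hi⟩ := (h 0).1
      exact (h (i+1)).2 ⟨i, by simp, hi⟩
    rw [he]; simp
  · intro m n hmn
    apply Set.diff_subset_diff_right
    apply Set.biUnion_subset_biUnion_left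
    intro i hi
    simp at hi ⊢
    omega

theorem chiL_congr {B C : Set Ω} (hB : MeasurableSet B) (hC : MeasurableSet C) (h : B = C)
    (hBf : μ B ≠ ∞) (hCf : μ C ≠ ∞) (x : X) : chiL 𝕜 hB hBf x = chiL 𝕜 hC hCf x := by
  subst h; rfl

open Classical in
def vm (φ : Lp X 1 μ →L[𝕜] 𝕜) (f : Lp X 1 μ) : SignedMeasure Ω where
  measureOf' := fun D => if h : MeasurableSet D then RCLike.re (φ (IndL 𝕜 h f)) else 0
  empty' := by simp [IndL_empty]
  not_measurable' := by intro i hi; simp [hi]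
  m_iUnion' := by
    intro D hD hd
    simp only [hD, MeasurableSet.iUnion hD, dif_pos]
    have h := IndL_hasSum (𝕜 := 𝕜) f D hD hd
    have h2 := (φ.hasSum h)
    exact h2.mapL (RCLike.reCLM (K := 𝕜))

theorem hahn (φ : Lp X 1 μ →L[𝕜] 𝕜) (x : X) {A : Set Ω} (hA : MeasurableSet A) (hAf : μ A ≠ ∞)
    (t : ℝ) (ht : t * μ.real A < RCLike.re (φ (chiL 𝕜 hA hAf x))) :
    ∃ B, B ⊆ A ∧ MeasurableSet B ∧ 0 < μ.real B ∧ ∀ D (hD : MeasurableSet D) (hDf : μ D ≠ ∞),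
      D ⊆ B → t * μ.real D ≤ RCLike.re (φ (chiL 𝕜 hD hDf x)) := by
  classical
  haveI : IsFiniteMeasure (μ.restrict A) := ⟨by simpa using hAf.lt_top⟩
  let v : SignedMeasure Ω := t • (μ.restrict A).toSignedMeasure - vm φ (chiL 𝕜 hA hAf x)
  have hv : ∀ D (hD : MeasurableSet D) (hDf : μ D ≠ ∞), D ⊆ A →
      v D = t * μ.real D - RCLike.re (φ (chiL 𝕜 hD hDf x)) := by
    intro D hD hDf hDA
    have h1 : vm φ (chiL 𝕜 hA hAf x) D = RCLike.re (φ (chiL 𝕜 hD hDf x)) := by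
      change (if h : MeasurableSet D then RCLike.re (φ (IndL 𝕜 h (chiL 𝕜 hA hAf x))) else 0) = _
      have hi : D ∩ A = D := Set.inter_eq_left.2 hDA
      rw [dif_pos hD, IndL_chiL hD hA hAf (by rwa [hi])]
      rw [chiL_congr _ hD hi _ hDf]
    simp only [v, VectorMeasure.sub_apply, VectorMeasure.smul_apply, h1, smul_eq_mul]
    rw [Measure.toSignedMeasure_apply_measurable hD, measureReal_restrict_apply hD,
      Set.inter_eq_left.2 hDA]
  have hneg : v A < 0 := by rw [hv A hA hAf subset_rfl]; linarith
  obtain ⟨B, hB, hBA, hB1, hB2⟩ := SignedMeasure.exists_subset_restrict_nonpos hneg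
  have hfin : ∀ D ⊆ B, μ D ≠ ∞ := fun D h => ne_top_of_le_ne_top hAf (measure_mono (h.trans hBA))
  refine ⟨B, hBA, hB, ?_, ?_⟩
  · rw [hv B hB (hfin B subset_rfl) hBA] at hB2
    by_contra hc
    have h0 : μ.real B = 0 := le_antisymm (not_lt.1 hc) measureReal_nonneg
    have : chiL 𝕜 hB (hfin B subset_rfl) x = 0 := by
      rw [← norm_eq_zero, norm_chiL, h0, zero_mul]
    rw [this, h0] at hB2
    simp at hB2
  · intro D hD hDf hDB
    have := (VectorMeasure.restrict_le_restrict_iff _ _ hB).1 hB1 hD hDB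
    rw [hv D hD hDf (hDB.trans hBA)] at this
    simp at this
    linarith

end PartB

section PartC
variable {𝕜 : Type*} [RCLike 𝕜] {X : Type*} [NormedAddCommGroup X] [NormedSpace 𝕜 X]
  [NormedSpace ℝ X] [IsScalarTower ℝ 𝕜 X]
  {Ω : Type*} [MeasurableSpace Ω] {μ : Measure Ω}

variable (𝕜 X μ) in
def Osc : Prop := ∀ (φ : Lp X 1 μ →L[𝕜] 𝕜) (A : Set Ω), MeasurableSet A → μ A ≠ ∞ → 0 < μ.real A →
  ∀ ε : ℝ, 0 < ε → ∃ B, B ⊆ A ∧ MeasurableSet B ∧ 0 < μ.real B ∧ ∃ ψ : X →L[𝕜] 𝕜,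
    ∀ D (hD : MeasurableSet D) (hDf : μ D ≠ ∞), D ⊆ B → ∀ x,
      ‖φ (chiL 𝕜 hD hDf x) - (μ.real D : 𝕜) • ψ x‖ ≤ ε * (μ.real D * ‖x‖)

def avg (φ : Lp X 1 μ →L[𝕜] 𝕜) {D : Set Ω} (hD : MeasurableSet D) (hDf : μ D ≠ ∞) : X →L[𝕜] 𝕜 :=
  (μ.real D : 𝕜)⁻¹ • (φ.comp (chiL 𝕜 hD hDf))

theorem avg_apply (φ : Lp X 1 μ →L[𝕜] 𝕜) {D : Set Ω} (hD : MeasurableSet D) (hDf : μ D ≠ ∞) (x : X) :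
    avg φ hD hDf x = (μ.real D : 𝕜)⁻¹ • φ (chiL 𝕜 hD hDf x) := rfl

theorem norm_avg_le (φ : Lp X 1 μ →L[𝕜] 𝕜) {D : Set Ω} (hD : MeasurableSet D) (hDf : μ D ≠ ∞) :
    ‖avg φ hD hDf‖ ≤ ‖φ‖ := by
  refine ContinuousLinearMap.opNorm_le_bound _ (norm_nonneg _) fun x => ?_
  rw [avg_apply, norm_smul, norm_inv, RCLike.norm_ofReal, abs_of_nonneg measureReal_nonneg]
  have h1 := φ.le_opNorm (chiL 𝕜 hD hDf x)
  rw [norm_chiL] at h1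
  rcases eq_or_lt_of_le (measureReal_nonneg (μ := μ) (s := D)) with h | h
  · rw [← h]; simp; positivity
  · rw [inv_mul_le_iff₀ h]
    linarith

theorem re_avg (φ : Lp X 1 μ →L[𝕜] 𝕜) {D : Set Ω} (hD : MeasurableSet D) (hDf : μ D ≠ ∞) (x : X) :
    RCLike.re (avg φ hD hDf x) = (μ.real D)⁻¹ * RCLike.re (φ (chiL 𝕜 hD hDf x)) := by
  rw [avg_apply, ← RCLike.ofReal_inv, smul_eq_mul, RCLike.re_ofReal_mul]

theorem hahn' (φ : Lp X 1 μ →L[𝕜] 𝕜) (x : X) {A : Set Ω} (hA : MeasurableSet A) (hAf : μ A ≠ ∞)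
    (hA0 : 0 < μ.real A) (t : ℝ) (ht : t < RCLike.re (avg φ hA hAf x)) :
    ∃ B, B ⊆ A ∧ MeasurableSet B ∧ 0 < μ.real B ∧ ∀ D (hD : MeasurableSet D) (hDf : μ D ≠ ∞),
      D ⊆ B → 0 < μ.real D → t ≤ RCLike.re (avg φ hD hDf x) := by
  rw [re_avg, lt_inv_mul_iff₀ hA0] at ht
  obtain ⟨B, h1, h2, h3, h4⟩ := hahn φ x hA hAf t (by linarith)
  refine ⟨B, h1, h2, h3, fun D hD hDf hDB hD0 => ?_⟩
  rw [re_avg, le_inv_mul_iff₀ hD0]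
  linarith [h4 D hD hDf hDB]

theorem osc_of_avg (φ : Lp X 1 μ →L[𝕜] 𝕜) (ε : ℝ) (hε : 0 < ε) {B : Set Ω} (ψ : X →L[𝕜] 𝕜)
    (h : ∀ D (hD : MeasurableSet D) (hDf : μ D ≠ ∞), D ⊆ B → 0 < μ.real D →
      ‖avg φ hD hDf - ψ‖ ≤ ε) : ∀ D (hD : MeasurableSet D) (hDf : μ D ≠ ∞), D ⊆ B → ∀ x,
      ‖φ (chiL 𝕜 hD hDf x) - (μ.real D : 𝕜) • ψ x‖ ≤ ε * (μ.real D * ‖x‖) := by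
  intro D hD hDf hDB x
  rcases eq_or_lt_of_le (measureReal_nonneg (μ := μ) (s := D)) with h0 | h0
  · have : chiL 𝕜 hD hDf x = 0 := by
      rw [← norm_eq_zero, norm_chiL, ← h0, zero_mul]
    rw [this, ← h0]; simp
  · have h1 := (avg φ hD hDf - ψ).le_of_opNorm_le (h D hD hDf hDB h0) x
    have hne : (μ.real D : 𝕜) ≠ 0 := by exact_mod_cast h0.ne'
    have h2 : φ (chiL 𝕜 hD hDf x) - (μ.real D : 𝕜) • ψ x = (μ.real D : 𝕜) • ((avg φ hD hDf - ψ) x) := by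
      rw [sub_apply, avg_apply, smul_sub, smul_inv_smul₀ hne]
    rw [h2, norm_smul, RCLike.norm_ofReal, abs_of_pos h0]
    nlinarith

theorem re_attain (f : X →L[𝕜] 𝕜) (r : ℝ) (h : r < ‖f‖) : ∃ x, ‖x‖ ≤ 1 ∧ r < RCLike.re (f x) := by
  obtain ⟨x, hx, hr⟩ := f.exists_lt_apply_of_lt_opNorm h
  obtain ⟨c, hc, hc'⟩ := RCLike.exists_norm_eq_mul_self (f x)
  refine ⟨c • x, by rw [norm_smul, hc, one_mul]; exact hx.le, ?_⟩
  rw [map_smul, smul_eq_mul, ← hc', RCLike.ofReal_re]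
  exact hr

theorem norm_le_of_re (f : X →L[𝕜] 𝕜) (C : ℝ) (h : ∀ x, ‖x‖ ≤ 1 → RCLike.re (f x) ≤ C) : ‖f‖ ≤ C := by
  by_contra hc
  obtain ⟨x, hx, hr⟩ := re_attain f C (not_le.1 hc)
  linarith [h x hx]

theorem peak (φ : Lp X 1 μ →L[𝕜] 𝕜) {A : Set Ω} (hA : MeasurableSet A) (hAf : μ A ≠ ∞)
    (hA0 : 0 < μ.real A) (δ : ℝ) (hδ : 0 < δ) :
    ∃ B, B ⊆ A ∧ MeasurableSet B ∧ 0 < μ.real B ∧ ∃ M ≤ ‖φ‖, ∃ x : X, ‖x‖ ≤ 1 ∧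
      ∀ D (hD : MeasurableSet D) (hDf : μ D ≠ ∞), D ⊆ B → 0 < μ.real D →
        ‖avg φ hD hDf‖ ≤ M ∧ M - δ ≤ RCLike.re (avg φ hD hDf x) := by
  let S : Set ℝ := {r | ∃ D, ∃ (hD : MeasurableSet D) (hDf : μ D ≠ ∞), D ⊆ A ∧ 0 < μ.real D ∧
    r = ‖avg φ hD hDf‖}
  have hne : S.Nonempty := ⟨_, A, hA, hAf, subset_rfl, hA0, rfl⟩
  have hb : ∀ r ∈ S, r ≤ ‖φ‖ := by
    rintro r ⟨D, hD, hDf, _, _, rfl⟩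
    exact norm_avg_le _ _ _
  have hbd : BddAbove S := ⟨_, hb⟩
  obtain ⟨r, ⟨D, hD, hDf, hDA, hD0, rfl⟩, hr⟩ := exists_lt_of_lt_csSup hne (sub_lt_self (sSup S) hδ)
  obtain ⟨x, hx, hxr⟩ := re_attain _ _ hr
  obtain ⟨B, h1, h2, h3, h4⟩ := hahn' φ x hD hDf hD0 _ hxr
  refine ⟨B, h1.trans hDA, h2, h3, sSup S, csSup_le hne hb, x, hx, ?_⟩
  intro E hE hEf hEB hE0
  exact ⟨le_csSup hbd ⟨E, hE, hEf, (hEB.trans h1).trans hDA, hE0, rfl⟩, h4 E hE hEf hEB hE0⟩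

theorem peak_re (φ : Lp X 1 μ →L[𝕜] 𝕜) (x : X) {A : Set Ω} (hA : MeasurableSet A) (hAf : μ A ≠ ∞)
    (hA0 : 0 < μ.real A) (δ : ℝ) (hδ : 0 < δ) :
    ∃ B, B ⊆ A ∧ MeasurableSet B ∧ 0 < μ.real B ∧ ∃ c : ℝ,
      ∀ D (hD : MeasurableSet D) (hDf : μ D ≠ ∞), D ⊆ B → 0 < μ.real D →
        |RCLike.re (avg φ hD hDf x) - c| ≤ δ := by
  let S : Set ℝ := {r | ∃ D, ∃ (hD : MeasurableSet D) (hDf : μ D ≠ ∞), D ⊆ A ∧ 0 < μ.real D ∧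
    r = RCLike.re (avg φ hD hDf x)}
  have hne : S.Nonempty := ⟨_, A, hA, hAf, subset_rfl, hA0, rfl⟩
  have hb : ∀ r ∈ S, r ≤ ‖φ‖ * ‖x‖ := by
    rintro r ⟨D, hD, hDf, _, _, rfl⟩
    exact (RCLike.re_le_norm _).trans ((avg φ hD hDf).le_of_opNorm_le (norm_avg_le _ _ _) x)
  have hbd : BddAbove S := ⟨_, hb⟩
  obtain ⟨r, ⟨D, hD, hDf, hDA, hD0, rfl⟩, hr⟩ := exists_lt_of_lt_csSup hne (sub_lt_self (sSup S) hδ)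
  obtain ⟨B, h1, h2, h3, h4⟩ := hahn' φ x hD hDf hD0 _ hr
  refine ⟨B, h1.trans hDA, h2, h3, sSup S, ?_⟩
  intro E hE hEf hEB hE0
  have e1 := le_csSup hbd ⟨E, hE, hEf, (hEB.trans h1).trans hDA, hE0, rfl⟩
  have e2 := h4 E hE hEf hEB hE0
  rw [abs_le]; constructor <;> linarith

theorem rc_norm_le (z : 𝕜) : ‖z‖ ≤ |RCLike.re z| + |RCLike.im z| := by
  apply le_of_sq_le_sq _ (by positivity)
  rw [← RCLike.normSq_eq_def', RCLike.normSq_apply]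
  have h1 := abs_mul_abs_self (RCLike.re z)
  have h2 := abs_mul_abs_self (RCLike.im z)
  nlinarith [mul_nonneg (abs_nonneg (RCLike.re z)) (abs_nonneg (RCLike.im z))]

theorem peak_scalar (φ : Lp X 1 μ →L[𝕜] 𝕜) (x : X) {A : Set Ω} (hA : MeasurableSet A)
    (hAf : μ A ≠ ∞) (hA0 : 0 < μ.real A) (δ : ℝ) (hδ : 0 < δ) :
    ∃ B, B ⊆ A ∧ MeasurableSet B ∧ 0 < μ.real B ∧
      ∀ D (hD : MeasurableSet D) (hDf : μ D ≠ ∞), D ⊆ B → 0 < μ.real D →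
      ∀ E (hE : MeasurableSet E) (hEf : μ E ≠ ∞), E ⊆ B → 0 < μ.real E →
        ‖avg φ hD hDf x - avg φ hE hEf x‖ ≤ δ := by
  obtain ⟨B, h1, h2, h3, c, h4⟩ := peak_re φ x hA hAf hA0 (δ/4) (by positivity)
  obtain ⟨C, h1', h2', h3', c', h4'⟩ := peak_re φ ((RCLike.I : 𝕜) • x) h2
    (ne_top_of_le_ne_top hAf (measure_mono h1)) h3 (δ/4) (by positivity)
  refine ⟨C, h1'.trans h1, h2', h3', ?_⟩
  intro D hD hDf hDC hD0 E hE hEf hEC hE0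
  have a1 := abs_le.1 (h4 D hD hDf (hDC.trans h1') hD0)
  have a2 := abs_le.1 (h4 E hE hEf (hEC.trans h1') hE0)
  have b1 := abs_le.1 (h4' D hD hDf hDC hD0)
  have b2 := abs_le.1 (h4' E hE hEf hEC hE0)
  rw [map_smul, smul_eq_mul, RCLike.I_mul_re] at b1 b2
  refine (rc_norm_le _).trans ?_
  rw [map_sub, map_sub]
  have u1 : |RCLike.re (avg φ hD hDf x) - RCLike.re (avg φ hE hEf x)| ≤ δ / 2 := by
    rw [abs_le]; constructor <;> linarith
  have u2 : |RCLike.im (avg φ hD hDf x) - RCLike.im (avg φ hE hEf x)| ≤ δ / 2 := by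
    rw [abs_le]; constructor <;> linarith
  linarith

theorem peak_finset {ι : Type*} (φ : Lp X 1 μ →L[𝕜] 𝕜) (x : ι → X) (s : Finset ι) {A : Set Ω}
    (hA : MeasurableSet A)
    (hAf : μ A ≠ ∞) (hA0 : 0 < μ.real A) (δ : ℝ) (hδ : 0 < δ) :
    ∃ B, B ⊆ A ∧ MeasurableSet B ∧ 0 < μ.real B ∧ ∀ i ∈ s,
      ∀ D (hD : MeasurableSet D) (hDf : μ D ≠ ∞), D ⊆ B → 0 < μ.real D →
      ∀ E (hE : MeasurableSet E) (hEf : μ E ≠ ∞), E ⊆ B → 0 < μ.real E →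
        ‖avg φ hD hDf (x i) - avg φ hE hEf (x i)‖ ≤ δ := by
  classical
  induction s using Finset.induction_on with
  | empty => exact ⟨A, subset_rfl, hA, hA0, by simp⟩
  | insert i s hi ih =>
    obtain ⟨B, h1, h2, h3, h4⟩ := ih
    obtain ⟨C, h1', h2', h3', h4'⟩ := peak_scalar φ (x i) h2
      (ne_top_of_le_ne_top hAf (measure_mono h1)) h3 δ hδ
    refine ⟨C, h1'.trans h1, h2', h3', ?_⟩
    intro j hj D hD hDf hDC hD0 E hE hEf hEC hE0
    rcases Finset.mem_insert.1 hj with rfl | hj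
    · exact h4' D hD hDf hDC hD0 E hE hEf hEC hE0
    · exact h4 j hj D hD hDf (hDC.trans h1') hD0 E hE hEf (hEC.trans h1') hE0

variable (𝕜 X) in
def Smo : Prop := ∀ ε : ℝ, 0 < ε → ∃ t : ℝ, 0 < t ∧ ∀ x y : X, ‖x‖ ≤ 1 → ‖y‖ ≤ 1 →
  ‖x + (t : 𝕜) • y‖ + ‖x - (t : 𝕜) • y‖ ≤ 2 + ε * t

theorem osc_of_smo (h : Smo 𝕜 X) : Osc 𝕜 X μ := by
  intro φ A hA hAf hA0 ε hε
  obtain ⟨t, ht, hs⟩ := h (ε / (2 * (‖φ‖ + 1))) (by positivity)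
  obtain ⟨B, h1, h2, h3, M, hM, x, hx, h4⟩ := peak φ hA hAf hA0 (t * ε / 4) (by positivity)
  have hBf := ne_top_of_le_ne_top hAf (measure_mono h1)
  refine ⟨B, h1, h2, h3, avg φ h2 hBf, osc_of_avg φ ε hε _ ?_⟩
  intro D hD hDf hDB hD0
  apply norm_le_of_re
  intro y hy
  obtain ⟨a1, a2⟩ := h4 D hD hDf hDB hD0
  obtain ⟨b1, b2⟩ := h4 B h2 hBf subset_rfl h3
  have hM0 : 0 ≤ M := (norm_nonneg _).trans a1
  have c1 := (RCLike.re_le_norm _).trans ((avg φ hD hDf).le_of_opNorm_le a1 (x + (t : 𝕜) • y))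
  have c2 := (RCLike.re_le_norm _).trans ((avg φ h2 hBf).le_of_opNorm_le b1 (x - (t : 𝕜) • y))
  rw [map_add, map_smul, smul_eq_mul, map_add, RCLike.re_ofReal_mul] at c1
  rw [map_sub, map_smul, smul_eq_mul, map_sub, RCLike.re_ofReal_mul] at c2
  rw [sub_apply, map_sub]
  have c3 := mul_le_mul_of_nonneg_left (hs x y hx hy) hM0
  have c4 : M * (ε / (2 * (‖φ‖ + 1)) * t) ≤ ε / 2 * t := by
    have : M * (ε / (2 * (‖φ‖ + 1))) ≤ ε / 2 := by
      rw [mul_div_assoc', div_le_iff₀ (by positivity)]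
      nlinarith
    nlinarith
  have c5 : t * (RCLike.re (avg φ hD hDf y) - RCLike.re (avg φ h2 hBf y)) ≤ t * ε := by
    nlinarith
  exact le_of_mul_le_mul_left c5 ht

end PartC

section PartD
variable {𝕜 : Type*} [RCLike 𝕜] {X : Type*} [NormedAddCommGroup X] [NormedSpace 𝕜 X]
  [NormedSpace ℝ X] [IsScalarTower ℝ 𝕜 X]
  {Ω : Type*} [MeasurableSpace Ω] {μ : Measure Ω}
  {Y : Type*} [NormedAddCommGroup Y] [InnerProductSpace 𝕜 Y]

theorem osc_finset (hO : Osc 𝕜 X μ) {ι : Type*} (φ : ι → (Lp X 1 μ →L[𝕜] 𝕜)) (s : Finset ι)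
    {A : Set Ω} (hA : MeasurableSet A) (hAf : μ A ≠ ∞) (hA0 : 0 < μ.real A) (ε : ℝ) (hε : 0 < ε) :
    ∃ B, B ⊆ A ∧ MeasurableSet B ∧ 0 < μ.real B ∧ ∃ ψ : ι → (X →L[𝕜] 𝕜), ∀ i ∈ s,
    ∀ D (hD : MeasurableSet D) (hDf : μ D ≠ ∞), D ⊆ B → ∀ x,
      ‖φ i (chiL 𝕜 hD hDf x) - (μ.real D : 𝕜) • ψ i x‖ ≤ ε * (μ.real D * ‖x‖) := by
  classical
  induction s using Finset.induction_on with
  | empty => exact ⟨A, subset_rfl, hA, hA0, 0, by simp⟩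
  | insert a s ha ih =>
    obtain ⟨B, h1, h2, h3, ψ, h4⟩ := ih
    obtain ⟨C, g1, g2, g3, ψ', g4⟩ := hO (φ a) B h2
      (ne_top_of_le_ne_top hAf (measure_mono h1)) h3 ε hε
    refine ⟨C, g1.trans h1, g2, g3, Function.update ψ a ψ', fun i hi D hD hDf hDC x => ?_⟩
    by_cases hia : i = a
    · subst hia
      simpa using g4 D hD hDf hDC x
    · rw [Function.update_of_ne hia]
      exact h4 i (Finset.mem_of_mem_insert_of_ne hi hia) D hD hDf (hDC.trans g1) x

theorem compact_approx {E : Type*} [NormedAddCommGroup E] [NormedSpace 𝕜 E] (T : E →L[𝕜] Y)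
    (hT : IsCompactOperator T) (ε : ℝ) (hε : 0 < ε) :
    ∃ n : ℕ, ∃ b : Fin n → Y, (∀ i, ‖b i‖ = 1) ∧
      ∀ f, ‖T f - ∑ i, inner 𝕜 (b i) (T f) • b i‖ ≤ ε * ‖f‖ := by
  have h1 : TotallyBounded (T '' Metric.closedBall 0 1) :=
    (hT.isCompact_closure_image_closedBall 1).totallyBounded.subset subset_closure
  obtain ⟨t, ht, hcov⟩ := Metric.totallyBounded_iff.1 h1 ε hε
  let V : Submodule 𝕜 Y := Submodule.span 𝕜 t
  have : FiniteDimensional 𝕜 V := FiniteDimensional.span_of_finite 𝕜 ht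
  let b := stdOrthonormalBasis 𝕜 V
  refine ⟨_, fun i => (b i : Y), fun i => ?_, ?_⟩
  · have := b.orthonormal.1 i
    exact this
  have hP : ∀ y : Y, V.starProjection y = ∑ i, inner 𝕜 (b i : Y) y • (b i : Y) := by
    intro y
    rw [b.starProjection_eq_sum_rankOne]
    simp
  have hu : ∀ f, ‖f‖ ≤ 1 → ‖T f - V.starProjection (T f)‖ ≤ ε := by
    intro f hf
    have : T f ∈ ⋃ y ∈ t, Metric.ball y ε := hcov ⟨f, by simpa using hf, rfl⟩
    simp only [Set.mem_iUnion] at this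
    obtain ⟨y, hy, hyb⟩ := this
    rw [V.starProjection_minimal]
    rw [mem_ball_iff_norm] at hyb
    exact (ciInf_le ⟨0, by rintro _ ⟨z, rfl⟩; positivity⟩ (⟨y, Submodule.subset_span hy⟩ : V)).trans hyb.le
  intro f
  rw [← hP]
  let Q : E →L[𝕜] Y := T - V.starProjection.comp T
  have hQ : ‖Q‖ ≤ ε := by
    apply ContinuousLinearMap.opNorm_le_of_unit_norm hε.le
    intro f hf
    exact hu f hf.le
  exact Q.le_of_opNorm_le hQ f

variable (X) in
def Nice (T : Lp X 1 μ →L[𝕜] Y) (ε : ℝ) (B : Set Ω) : Prop :=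
  μ B ≠ ∞ ∧ ∃ hB : MeasurableSet B, ∃ R : X →L[𝕜] Y, IsCompactOperator R ∧ ‖R‖ ≤ 1 ∧
    ∀ f, ‖T (IndL 𝕜 hB f) - R (JL 𝕜 B f)‖ ≤ ε * ‖IndL 𝕜 hB f‖

theorem Nice.mono {T : Lp X 1 μ →L[𝕜] Y} {ε : ℝ} {B C : Set Ω} (h : Nice X T ε B)
    (hC : MeasurableSet C) (hCB : C ⊆ B) : Nice X T ε C := by
  obtain ⟨h1, hB, R, h2, h3, h4⟩ := h
  refine ⟨ne_top_of_le_ne_top h1 (measure_mono hCB), hC, R, h2, h3, fun f => ?_⟩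
  have := h4 (IndL 𝕜 hC f)
  rwa [IndL_IndL hB hC hCB, JL_IndL hC hCB] at this

theorem exists_nice [CompleteSpace X] (hO : Osc 𝕜 X μ) (T : Lp X 1 μ →L[𝕜] Y)
    (hT : IsCompactOperator T) (hT1 : ‖T‖ ≤ 1) (ε : ℝ) (hε : 0 < ε)
    {A : Set Ω} (hA : MeasurableSet A) (hAf : μ A ≠ ∞) (hA0 : 0 < μ.real A) :
    ∃ B, B ⊆ A ∧ MeasurableSet B ∧ 0 < μ.real B ∧ Nice X T ε B := by
  obtain ⟨n, b, hb, hapx⟩ := compact_approx T hT (ε / 4) (by positivity)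
  obtain ⟨B, h1, h2, h3, ψ, h4⟩ := osc_finset hO (fun i : Fin n => (innerSL 𝕜 (b i)).comp T)
    Finset.univ hA hAf hA0 (ε / (4 * (n + 1))) (by positivity)
  have hBf : μ B ≠ ∞ := ne_top_of_le_ne_top hAf (measure_mono h1)
  let R' : X →L[𝕜] Y := ∑ i, (ψ i).smulRight (b i)
  let R : X →L[𝕜] Y := (μ.real B : 𝕜)⁻¹ • T.comp (chiL 𝕜 h2 hBf)
  have hne : (μ.real B : 𝕜) ≠ 0 := by exact_mod_cast h3.ne'
  have k1 : ∀ D (hD : MeasurableSet D) (hDf : μ D ≠ ∞), D ⊆ B → ∀ x,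
      ‖T (chiL 𝕜 hD hDf x) - (μ.real D : 𝕜) • R' x‖ ≤ ε / 2 * (μ.real D * ‖x‖) := by
    intro D hD hDf hDB x
    have e1 := hapx (chiL 𝕜 hD hDf x)
    rw [norm_chiL] at e1
    have e2 : ‖∑ i, inner 𝕜 (b i) (T (chiL 𝕜 hD hDf x)) • b i - (μ.real D : 𝕜) • R' x‖
        ≤ ε / 4 * (μ.real D * ‖x‖) := by
      have : ∑ i, inner 𝕜 (b i) (T (chiL 𝕜 hD hDf x)) • b i - (μ.real D : 𝕜) • R' x
          = ∑ i, (inner 𝕜 (b i) (T (chiL 𝕜 hD hDf x)) - (μ.real D : 𝕜) • ψ i x) • b i := by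
        simp only [R', FunLike.coe_sum, Finset.sum_apply,
          ContinuousLinearMap.smulRight_apply, Finset.smul_sum, sub_smul, Finset.sum_sub_distrib,
          smul_assoc]
      rw [this]
      refine (norm_sum_le _ _).trans ?_
      have hc : ∀ i ∈ (Finset.univ : Finset (Fin n)),
          ‖(inner 𝕜 (b i) (T (chiL 𝕜 hD hDf x)) - (μ.real D : 𝕜) • ψ i x) • b i‖
          ≤ ε / (4 * (n + 1)) * (μ.real D * ‖x‖) := by
        intro i _
        rw [norm_smul, hb, mul_one]
        exact h4 i (Finset.mem_univ _) D hD hDf hDB x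
      refine (Finset.sum_le_card_nsmul _ _ _ hc).trans ?_
      rw [Finset.card_univ, Fintype.card_fin, nsmul_eq_mul, ← mul_assoc]
      apply mul_le_mul_of_nonneg_right _ (by positivity)
      rw [← mul_div_assoc, div_le_div_iff₀ (by positivity) (by positivity)]
      nlinarith
    calc _ = ‖(T (chiL 𝕜 hD hDf x) - ∑ i, inner 𝕜 (b i) (T (chiL 𝕜 hD hDf x)) • b i) +
        (∑ i, inner 𝕜 (b i) (T (chiL 𝕜 hD hDf x)) • b i - (μ.real D : 𝕜) • R' x)‖ := by
            congr 1; abel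
      _ ≤ _ := norm_add_le _ _
      _ ≤ _ := by linarith
  have k2 : ∀ x, ‖R x - R' x‖ ≤ ε / 2 * ‖x‖ := by
    intro x
    have e := k1 B h2 hBf subset_rfl x
    have : R x - R' x = (μ.real B : 𝕜)⁻¹ • (T (chiL 𝕜 h2 hBf x) - (μ.real B : 𝕜) • R' x) := by
      rw [smul_sub, inv_smul_smul₀ hne]; rfl
    rw [this, norm_smul, norm_inv, RCLike.norm_ofReal, abs_of_pos h3, inv_mul_le_iff₀ h3]
    linarith
  refine ⟨B, h1, h2, h3, hBf, h2, R, ?_, ?_, ?_⟩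
  · exact (hT.comp_clm _).smul _
  · refine ContinuousLinearMap.opNorm_le_bound _ zero_le_one fun x => ?_
    show ‖(μ.real B : 𝕜)⁻¹ • T (chiL 𝕜 h2 hBf x)‖ ≤ _
    rw [norm_smul, norm_inv, RCLike.norm_ofReal, abs_of_pos h3, inv_mul_le_iff₀ h3, one_mul,
      ← norm_chiL (𝕜 := 𝕜) h2 hBf]
    have := T.le_of_opNorm_le hT1 (chiL 𝕜 h2 hBf x)
    linarith
  · apply key_bound T R ε h2 hBf
    intro D hD hDf hDB x
    have e := k1 D hD hDf hDB x
    have e' := k2 x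
    calc _ = ‖(T (chiL 𝕜 hD hDf x) - (μ.real D : 𝕜) • R' x) - (μ.real D : 𝕜) • (R x - R' x)‖ := by
            congr 1; rw [smul_sub]; abel
      _ ≤ _ := norm_sub_le _ _
      _ ≤ _ := by
        rw [norm_smul, RCLike.norm_ofReal, abs_of_nonneg measureReal_nonneg]
        have := mul_le_mul_of_nonneg_left e' (measureReal_nonneg (μ := μ) (s := D))
        linarith

variable (𝕜) in
theorem nice_dense (P : Set Ω → Prop)
    (hP : ∀ A, MeasurableSet A → μ A ≠ ∞ → 0 < μ.real A →
      ∃ B, B ⊆ A ∧ MeasurableSet B ∧ 0 < μ.real B ∧ P B) :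
    (Submodule.span 𝕜 {f : Lp X 1 μ | ∃ B, ∃ hB : MeasurableSet B, ∃ hBf : μ B ≠ ∞, ∃ x : X,
      P B ∧ f = chiL 𝕜 hB hBf x}).topologicalClosure = ⊤ := by
  by_contra hne
  set W := (Submodule.span 𝕜 {f : Lp X 1 μ | ∃ B, ∃ hB : MeasurableSet B, ∃ hBf : μ B ≠ ∞, ∃ x : X,
      P B ∧ f = chiL 𝕜 hB hBf x}).topologicalClosure with hW
  have hex : ∃ f, f ∉ W := by
    by_contra! h
    exact hne (Submodule.eq_top_iff'.2 h)
  obtain ⟨f, hf⟩ := hex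
  have hcl : IsClosed (W : Set (Lp X 1 μ)) := Submodule.isClosed_topologicalClosure _
  obtain ⟨φ, hφ0, hφ⟩ : ∃ φ : Lp X 1 μ →L[𝕜] 𝕜, φ f ≠ 0 ∧ ∀ g ∈ W, φ g = 0 := by
    have hne : (W.mkQ f) ≠ 0 := by simpa using hf
    obtain ⟨g, -, hg⟩ := exists_dual_vector 𝕜 (W.mkQ f) (norm_ne_zero_iff.2 hne)
    refine ⟨g.comp W.mkQL, ?_, fun u hu => ?_⟩
    · show g (W.mkQ f) ≠ 0
      rw [hg]
      exact_mod_cast norm_ne_zero_iff.2 hne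
    · show g (W.mkQ u) = 0
      have : W.mkQ u = 0 := by simpa using hu
      rw [this, map_zero]
  have hz : ∀ A (hA : MeasurableSet A) (hAf : μ A ≠ ∞) (x : X), ¬ 0 < RCLike.re (φ (chiL 𝕜 hA hAf x)) := by
    intro A hA hAf x hpos
    have hA0 : 0 < μ.real A := by
      by_contra h0
      have h0 : μ.real A = 0 := le_antisymm (not_lt.1 h0) measureReal_nonneg
      have : chiL 𝕜 hA hAf x = 0 := by
        rw [← norm_eq_zero, norm_chiL, h0, zero_mul]
      rw [this] at hpos
      simp at hpos
    set r := RCLike.re (φ (chiL 𝕜 hA hAf x)) with hr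
    obtain ⟨B, h1, h2, h3, h4⟩ := hahn φ x hA hAf (r / (2 * μ.real A)) (by
      rw [div_mul_eq_mul_div, ← hr, div_lt_iff₀ (by positivity)]; nlinarith)
    have hBf : μ B ≠ ∞ := ne_top_of_le_ne_top hAf (measure_mono h1)
    obtain ⟨D, g1, g2, g3, g4⟩ := hP B h2 hBf h3
    have hDf : μ D ≠ ∞ := ne_top_of_le_ne_top hBf (measure_mono g1)
    have k := h4 D g2 hDf g1
    have : φ (chiL 𝕜 g2 hDf x) = 0 := by
      have : chiL 𝕜 g2 hDf x ∈ W :=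
        Submodule.le_topologicalClosure _ (Submodule.subset_span ⟨D, g2, hDf, x, g4, rfl⟩)
      exact hφ _ this
    rw [this] at k
    simp only [map_zero] at k
    have : 0 < r / (2 * μ.real A) * μ.real D := by positivity
    linarith
  have hz' : ∀ A (hA : MeasurableSet A) (hAf : μ A ≠ ∞) (x : X), φ (chiL 𝕜 hA hAf x) = 0 := by
    intro A hA hAf x
    by_contra h0
    apply hz A hA hAf ((starRingEnd 𝕜 (φ (chiL 𝕜 hA hAf x))) • x)
    rw [map_smul, map_smul, smul_eq_mul, RCLike.conj_mul]
    have : 0 < ‖φ (chiL 𝕜 hA hAf x)‖ ^ 2 := by positivity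
    exact_mod_cast this
  apply hφ0
  clear hφ0 hf
  induction f using Lp.induction ENNReal.one_ne_top with
  | indicatorConst c hs hμs =>
    rw [Lp.simpleFunc.coe_indicatorConst, ← chiL_apply (𝕜 := 𝕜)]
    exact hz' _ _ _ _
  | add hf hg hd h1 h2 => rw [map_add, h1, h2, add_zero]
  | isClosed => exact isClosed_eq (by fun_prop) continuous_const

end PartD

section PartE1
variable {𝕜 : Type*} [RCLike 𝕜] {X : Type*} [NormedAddCommGroup X] [NormedSpace 𝕜 X]
  {E : Type*} [NormedAddCommGroup E] [NormedSpace 𝕜 E]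
  {Y : Type*} [NormedAddCommGroup Y] [InnerProductSpace 𝕜 Y]

theorem re_inner_le (y z : Y) (hy : ‖y‖ = 1) : RCLike.re (inner 𝕜 y z) ≤ ‖z‖ := by
  have := re_inner_le_norm (𝕜 := 𝕜) y z
  rwa [hy, one_mul] at this

theorem assemble {ι : Type*} [Fintype ι] [DecidableEq ι] (I : ι → E →L[𝕜] E) (J : ι → E →L[𝕜] X)
    (C : ι → X →L[𝕜] E) (N : Finset ι) (hI : ∀ f, ∑ i, I i f = f) (hIn : ∀ f, ∑ i, ‖I i f‖ = ‖f‖)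
    (hJ : ∀ i f, ‖J i f‖ ≤ ‖I i f‖)
    (hIC : ∀ i ∈ N, ∀ j x, I j (C i x) = if j = i then C i x else 0)
    (hCn : ∀ i ∈ N, ∀ x, ‖C i x‖ = ‖x‖) (hJC : ∀ i ∈ N, ∀ x, J i (C i x) = x)
    (T : E →L[𝕜] Y) (hTc : IsCompactOperator T) (hT1 : ‖T‖ ≤ 1) (δ : ℝ)
    (R : ι → X →L[𝕜] Y) (hRc : ∀ i ∈ N, IsCompactOperator (R i)) (hR1 : ∀ i ∈ N, ‖R i‖ ≤ 1)
    (hTR : ∀ i ∈ N, ∀ f, ‖T (I i f) - R i (J i f)‖ ≤ δ * ‖I i f‖)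
    (g : E) (hg0 : ∀ i ∉ N, I i g = 0) (hgC : ∀ i ∈ N, I i g = C i (J i g))
    (y : Y) (hy : ‖y‖ = 1) (ε η : ℝ) (hε : 0 < ε) (hε' : ε ≤ 1 / 4) (hη : 0 < η) (hδ : 0 < δ)
    (hδε : δ ≤ ε) (hδη : 5 * δ ≤ ε * η)
    (hPt : ∀ R : X →L[𝕜] Y, IsCompactOperator R → ‖R‖ ≤ 1 → ∀ x, ‖x‖ = 1 →
      1 - η < RCLike.re (inner 𝕜 y (R x)) → ∃ (S : X →L[𝕜] Y) (z : X), IsCompactOperator S ∧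
        ‖S‖ ≤ 1 ∧ ‖z‖ = 1 ∧ S z = y ∧ ‖S - R‖ ≤ ε ∧ ‖z - x‖ ≤ ε)
    (hg1 : ‖g‖ ≤ 1 + δ) (hg2 : 1 - δ ≤ ‖g‖) (hTg : 1 - 2 * δ ≤ RCLike.re (inner 𝕜 y (T g))) :
    ∃ (S : E →L[𝕜] Y) (f : E), IsCompactOperator S ∧ ‖S‖ ≤ 1 ∧ ‖f‖ = 1 ∧ S f = y ∧
      ‖f - g‖ ≤ 6 * ε ∧ ‖S - T‖ ≤ 2 * ε := by
  set w : ι → ℝ := fun i => ‖I i g‖ with hw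
  have hw0 : ∀ i, 0 ≤ w i := fun i => norm_nonneg _
  have hwJ : ∀ i ∈ N, ‖J i g‖ = w i := fun i hi => by
    rw [hw]; simp only; rw [hgC i hi, hCn i hi]
  set a : ι → ℝ := fun i => RCLike.re (inner 𝕜 y (R i (J i g))) with ha
  have haw : ∀ i ∈ N, a i ≤ w i := by
    intro i hi
    refine (re_inner_le _ _ hy).trans ?_
    refine ((R i).le_of_opNorm_le (hR1 i hi) _).trans ?_
    rw [one_mul, hwJ i hi]
  set G : Finset ι := N.filter (fun i => (1 - η) * w i < a i) with hG
  have hGN : ∀ i ∈ G, i ∈ N := fun i hi => (Finset.mem_filter.1 hi).1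
  have hGa : ∀ i ∈ G, (1 - η) * w i < a i := fun i hi => (Finset.mem_filter.1 hi).2
  have hGw : ∀ i ∈ G, 0 < w i := by
    intro i hi
    have h1 := haw i (hGN i hi)
    have h2 := hGa i hi
    by_contra h0
    have h0 : w i = 0 := le_antisymm (not_lt.1 h0) (hw0 i)
    rw [h0] at h1 h2
    linarith
  have hwN : ∀ i ∉ N, w i = 0 := fun i hi => by rw [hw]; simp [hg0 i hi]
  have hsw : ∑ i, w i = ‖g‖ := hIn g
  have hswN : ∑ i ∈ N, w i = ‖g‖ := by
    rw [← hsw]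
    exact Finset.sum_subset (Finset.subset_univ _) (fun i _ hi => hwN i hi)
  have hsa : 1 - 4 * δ ≤ ∑ i ∈ N, a i := by
    have e1 : RCLike.re (inner 𝕜 y (T g)) = ∑ i ∈ N, RCLike.re (inner 𝕜 y (T (I i g))) := by
      conv_lhs => rw [← hI g]
      rw [map_sum, inner_sum, map_sum]
      symm
      apply Finset.sum_subset (Finset.subset_univ _)
      intro i _ hi
      rw [hg0 i hi]; simp
    have e2 : ∀ i ∈ N, RCLike.re (inner 𝕜 y (T (I i g))) ≤ a i + δ * w i := by
      intro i hi
      have := (re_inner_le (𝕜 := 𝕜) y (T (I i g) - R i (J i g)) hy).trans (hTR i hi g)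
      rw [inner_sub_right, map_sub] at this
      simp only [ha, hw]
      linarith
    have e3 := Finset.sum_le_sum e2
    rw [Finset.sum_add_distrib, ← Finset.mul_sum, hswN] at e3
    nlinarith
  have hbad : ∑ i ∈ N \ G, w i ≤ ε := by
    have e1 : ∀ i ∈ N \ G, η * w i ≤ w i - a i := by
      intro i hi
      rw [Finset.mem_sdiff] at hi
      have : ¬ (1 - η) * w i < a i := fun h => hi.2 (Finset.mem_filter.2 ⟨hi.1, h⟩)
      linarith
    have e2 := Finset.sum_le_sum e1
    have e3 : ∑ i ∈ N \ G, (w i - a i) ≤ ∑ i ∈ N, (w i - a i) :=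
      Finset.sum_le_sum_of_subset_of_nonneg Finset.sdiff_subset
        (fun i hi _ => by linarith [haw i hi])
    rw [← Finset.mul_sum] at e2
    rw [Finset.sum_sub_distrib, Finset.sum_sub_distrib, hswN] at e3
    rw [Finset.sum_sub_distrib] at e2
    have : η * ∑ i ∈ N \ G, w i ≤ η * ε := by nlinarith
    exact le_of_mul_le_mul_left this hη
  set W : ℝ := ∑ i ∈ G, w i with hW
  have hsplit : ∑ i ∈ N \ G, w i + W = ‖g‖ := by
    rw [← hswN]; exact Finset.sum_sdiff (Finset.filter_subset _ _)
  have hbad0 : 0 ≤ ∑ i ∈ N \ G, w i := Finset.sum_nonneg fun i _ => hw0 i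
  have hW1 : 1 - 2 * ε ≤ W := by linarith
  have hW2 : W ≤ 1 + ε := by linarith
  have hWpos : 0 < W := by linarith
  have hu : ∀ i ∈ G, ∃ (S : X →L[𝕜] Y) (z : X), IsCompactOperator S ∧
        ‖S‖ ≤ 1 ∧ ‖z‖ = 1 ∧ S z = y ∧ ‖S - R i‖ ≤ ε ∧ ‖z - ((w i)⁻¹ : 𝕜) • J i g‖ ≤ ε := by
    intro i hi
    have hwi := hGw i hi
    apply hPt (R i) (hRc i (hGN i hi)) (hR1 i (hGN i hi))
    · rw [norm_smul, norm_inv, RCLike.norm_ofReal, abs_of_pos hwi, hwJ i (hGN i hi),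
        inv_mul_cancel₀ hwi.ne']
    · rw [map_smul, inner_smul_right, ← RCLike.ofReal_inv, RCLike.re_ofReal_mul,
        lt_inv_mul_iff₀ hwi]
      have := hGa i hi
      linarith
  choose! S z hSc hS1 hz hSz hSR hzu using hu
  have hJI : ∀ i ∈ G, ∀ j, j ≠ i → ∀ x, J j (C i x) = 0 := by
    intro i hi j hji x
    rw [← norm_le_zero_iff]
    refine (hJ _ _).trans ?_
    rw [hIC i (hGN i hi), if_neg hji, norm_zero]
  set f : E := ∑ i ∈ G, ((w i / W : ℝ) : 𝕜) • C i (z i) with hf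
  have hIf : ∀ j ∈ G, I j f = ((w j / W : ℝ) : 𝕜) • C j (z j) := by
    intro j hj
    rw [hf, map_sum, Finset.sum_eq_single j]
    · rw [map_smul, hIC j (hGN j hj), if_pos rfl]
    · intro i hi hij
      rw [map_smul, hIC i (hGN i hi), if_neg hij.symm, smul_zero]
    · intro h; exact absurd hj h
  have hIf0 : ∀ j ∉ G, I j f = 0 := by
    intro j hj
    rw [hf, map_sum]
    apply Finset.sum_eq_zero
    intro i hi
    rw [map_smul, hIC i (hGN i hi), if_neg (by rintro rfl; exact hj hi), smul_zero]
  have hJf : ∀ j ∈ G, J j f = ((w j / W : ℝ) : 𝕜) • z j := by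
    intro j hj
    rw [hf, map_sum, Finset.sum_eq_single j]
    · rw [map_smul, hJC j (hGN j hj)]
    · intro i hi hij
      rw [map_smul, hJI i hi j hij.symm, smul_zero]
    · intro h; exact absurd hj h
  have hnf : ‖f‖ = 1 := by
    rw [← hIn f, ← Finset.sum_subset (Finset.subset_univ G)
      (fun i _ hi => by rw [hIf0 i hi, norm_zero])]
    have : ∀ i ∈ G, ‖I i f‖ = w i / W := by
      intro i hi
      rw [hIf i hi, norm_smul, RCLike.norm_ofReal, abs_of_nonneg (div_nonneg (hw0 i) hWpos.le),
        hCn i (hGN i hi), hz i hi, mul_one]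
    rw [Finset.sum_congr rfl this, ← Finset.sum_div, ← hW, div_self hWpos.ne']
  set Δ : E →L[𝕜] Y := ∑ i ∈ G, ((S i).comp (J i) - T.comp (I i)) with hΔ
  have hΔa : ∀ h, Δ h = ∑ i ∈ G, (S i (J i h) - T (I i h)) := by
    intro h
    simp [hΔ, FunLike.coe_sum, Finset.sum_apply]
  have hTs : ∀ h, T h = ∑ i ∈ G, T (I i h) + ∑ i ∈ Gᶜ, T (I i h) := by
    intro h
    conv_lhs => rw [← hI h]
    rw [map_sum, Finset.sum_add_sum_compl]
  have hSa : ∀ h, (T + Δ) h = ∑ i ∈ G, S i (J i h) + ∑ i ∈ Gᶜ, T (I i h) := by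
    intro h
    rw [add_apply, hΔa, hTs, Finset.sum_sub_distrib]
    abel
  refine ⟨T + Δ, f, ?_, ?_, hnf, ?_, ?_, ?_⟩
  · have : IsCompactOperator Δ := by
      have : Δ ∈ compactOperator (RingHom.id 𝕜) E Y := by
        apply Submodule.sum_mem
        intro i hi
        exact Submodule.sub_mem _ ((hSc i hi).comp_clm _) (hTc.comp_clm _)
      exact this
    exact hTc.add this
  · refine ContinuousLinearMap.opNorm_le_bound _ zero_le_one fun h => ?_
    rw [hSa, one_mul, ← hIn h, ← Finset.sum_add_sum_compl G (fun i => ‖I i h‖)]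
    refine (norm_add_le _ _).trans (add_le_add (norm_sum_le_of_le _ ?_) (norm_sum_le_of_le _ ?_))
    · intro i hi
      refine ((S i).le_of_opNorm_le (hS1 i hi) _).trans ?_
      rw [one_mul]; exact hJ i h
    · intro i hi
      refine (T.le_of_opNorm_le hT1 _).trans ?_
      rw [one_mul]
  · rw [hSa, Finset.sum_eq_zero (s := Gᶜ), add_zero]
    · have : ∀ i ∈ G, S i (J i f) = ((w i / W : ℝ) : 𝕜) • y := by
        intro i hi
        rw [hJf i hi, map_smul, hSz i hi]
      rw [Finset.sum_congr rfl this, ← Finset.sum_smul, ← RCLike.ofReal_sum, ← Finset.sum_div, ← hW,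
        div_self hWpos.ne', RCLike.ofReal_one, one_smul]
    · intro i hi
      rw [hIf0 i (Finset.mem_compl.1 hi), map_zero]
  · rw [← hIn (f - g), ← Finset.sum_subset (Finset.subset_univ N), ← Finset.sum_sdiff
      (Finset.filter_subset _ _ : G ⊆ N)]
    · have e1 : ∀ i ∈ N \ G, ‖I i (f - g)‖ = w i := by
        intro i hi
        rw [map_sub, hIf0 i (Finset.mem_sdiff.1 hi).2, zero_sub, norm_neg]
      have e2 : ∀ i ∈ G, ‖I i (f - g)‖ ≤ w i / W * |1 - W| + w i * ε := by
        intro i hi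
        have hwi := hGw i hi
        rw [map_sub, hIf i hi, hgC i (hGN i hi), ← map_smul, ← map_sub, hCn i (hGN i hi)]
        have : ((w i / W : ℝ) : 𝕜) • z i - J i g = ((w i / W * (1 - W) : ℝ) : 𝕜) • z i +
            (w i : 𝕜) • (z i - ((w i)⁻¹ : 𝕜) • J i g) := by
          have hne : (w i : 𝕜) ≠ 0 := by exact_mod_cast hwi.ne'
          rw [smul_sub, smul_inv_smul₀ hne, ← add_sub_assoc, ← add_smul, ← RCLike.ofReal_add]
          congr 3
          field_simp
          ring
        rw [this]
        refine (norm_add_le _ _).trans ?_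
        rw [norm_smul, norm_smul, RCLike.norm_ofReal, RCLike.norm_ofReal, hz i hi, mul_one, abs_mul,
          abs_of_pos hwi, abs_of_pos (div_pos hwi hWpos)]
        gcongr
        exact hzu i hi
      rw [Finset.sum_congr rfl e1]
      have e3 := Finset.sum_le_sum e2
      rw [Finset.sum_add_distrib, ← Finset.sum_mul, ← Finset.sum_mul, ← Finset.sum_div, ← hW,
        div_self hWpos.ne', one_mul] at e3
      have e4 : |1 - W| ≤ 2 * ε := by rw [abs_le]; constructor <;> linarith
      nlinarith
    · intro i _ hi
      have : i ∉ G := fun h => hi (hGN i h)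
      rw [map_sub, hIf0 i this, hg0 i hi, sub_zero, norm_zero]
  · rw [add_sub_cancel_left]
    refine ContinuousLinearMap.opNorm_le_bound _ (by positivity) fun h => ?_
    rw [hΔa, ← hIn h, Finset.mul_sum]
    refine le_trans (norm_sum_le_of_le G (n := fun i => 2 * ε * ‖I i h‖) ?_)
      (Finset.sum_le_sum_of_subset_of_nonneg (Finset.subset_univ _) fun i _ _ => by positivity)
    intro i hi
    have e1 := hTR i (hGN i hi) h
    have e2 := (S i - R i).le_of_opNorm_le (hSR i hi) (J i h)
    have e3 := hJ i h
    rw [sub_apply] at e2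
    calc _ = ‖(S i (J i h) - R i (J i h)) - (T (I i h) - R i (J i h))‖ := by congr 1; abel
      _ ≤ _ := norm_sub_le _ _
      _ ≤ _ := by nlinarith [norm_nonneg (I i h)]

end PartE1

section PartE2
variable {𝕜 : Type*} [RCLike 𝕜] {X : Type*} [NormedAddCommGroup X] [NormedSpace 𝕜 X]
  [NormedSpace ℝ X] [IsScalarTower ℝ 𝕜 X]
  {Ω : Type*} [MeasurableSpace Ω] {μ : Measure Ω}
  {Y : Type*} [NormedAddCommGroup Y] [InnerProductSpace 𝕜 Y]

variable (𝕜 X Y) in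
def Pt (X : Type*) [NormedAddCommGroup X] [NormedSpace 𝕜 X] : Prop := ∀ ε : ℝ, 0 < ε → ∃ η : ℝ, 0 < η ∧ ∀ y : Y, ‖y‖ = 1 →
  ∀ R : X →L[𝕜] Y, IsCompactOperator R → ‖R‖ ≤ 1 → ∀ x, ‖x‖ = 1 →
      1 - η < RCLike.re (inner 𝕜 y (R x)) → ∃ (S : X →L[𝕜] Y) (z : X), IsCompactOperator S ∧
        ‖S‖ ≤ 1 ∧ ‖z‖ = 1 ∧ S z = y ∧ ‖S - R‖ ≤ ε ∧ ‖z - x‖ ≤ ε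

def Stp (P : Set Ω → Prop) (g : Lp X 1 μ) : Prop :=
  ∃ (ι : Type) (_ : Fintype ι) (l : Ω → ι) (F : ι → X), (∀ i, MeasurableSet (l ⁻¹' {i})) ∧
    (∀ i, F i ≠ 0 → P (l ⁻¹' {i})) ∧ g =ᵐ[μ] F ∘ l

variable (𝕜) in
theorem stp_span (P : Set Ω → Prop) (hP : ∀ B C, P B → MeasurableSet C → C ⊆ B → P C)
    (g : Lp X 1 μ) (hg : g ∈ Submodule.span 𝕜 {f : Lp X 1 μ | ∃ B, ∃ hB : MeasurableSet B,
      ∃ hBf : μ B ≠ ∞, ∃ x : X, P B ∧ f = chiL 𝕜 hB hBf x}) : Stp P g := by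
  classical
  induction hg using Submodule.span_induction with
  | mem f hf =>
    obtain ⟨B, hB, hBf, x, hPB, rfl⟩ := hf
    have hpt : (fun ω => decide (ω ∈ B)) ⁻¹' {true} = B := by ext ω; simp
    have hpf : (fun ω => decide (ω ∈ B)) ⁻¹' {false} = Bᶜ := by ext ω; simp
    refine ⟨Bool, inferInstance, fun ω => decide (ω ∈ B), fun b => if b then x else 0, ?_, ?_, ?_⟩
    · rintro (_ | _)
      · rw [hpf]; exact hB.compl
      · rw [hpt]; exact hB
    · rintro (_ | _) h
      · simp at h
      · rw [hpt]; exact hPB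
    · filter_upwards [chiL_coe (𝕜 := 𝕜) hB hBf x] with ω h
      rw [h]
      by_cases hω : ω ∈ B <;> simp [hω]
  | zero =>
    refine ⟨Unit, inferInstance, fun _ => (), fun _ => 0, ?_, ?_, ?_⟩
    · intro i; simp
    · intro i h; simp at h
    · exact Lp.coeFn_zero _ _ _
  | add f g _ _ hf hg =>
    obtain ⟨ι, _, l, F, h1, h2, h3⟩ := hf
    obtain ⟨κ, _, m, G, k1, k2, k3⟩ := hg
    have hpre : ∀ i j, (fun ω => (l ω, m ω)) ⁻¹' {(i, j)} = l ⁻¹' {i} ∩ m ⁻¹' {j} := by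
      intro i j; ext ω; simp
    refine ⟨ι × κ, inferInstance, fun ω => (l ω, m ω), fun p => F p.1 + G p.2, ?_, ?_, ?_⟩
    · rintro ⟨i, j⟩
      rw [hpre]; exact (h1 i).inter (k1 j)
    · rintro ⟨i, j⟩ h
      rw [hpre]
      by_cases hi : F i = 0
      · by_cases hj : G j = 0
        · simp [hi, hj] at h
        · exact hP _ _ (k2 j hj) ((h1 i).inter (k1 j)) Set.inter_subset_right
      · exact hP _ _ (h2 i hi) ((h1 i).inter (k1 j)) Set.inter_subset_left
    · filter_upwards [Lp.coeFn_add f g, h3, k3] with ω e1 e2 e3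
      rw [e1, Pi.add_apply, e2, e3]; rfl
  | smul c f _ hf =>
    obtain ⟨ι, _, l, F, h1, h2, h3⟩ := hf
    refine ⟨ι, inferInstance, l, fun i => c • F i, h1, ?_, ?_⟩
    · intro i h
      exact h2 i (fun h0 => h (by simp [h0]))
    · filter_upwards [Lp.coeFn_smul c f, h3] with ω e1 e2
      rw [e1, Pi.smul_apply, e2]; rfl

theorem Lp_coe_sum {ι : Type*} (s : Finset ι) (F : ι → Lp X 1 μ) :
    ((∑ i ∈ s, F i : Lp X 1 μ) : Ω → X) =ᵐ[μ] fun ω => ∑ i ∈ s, F i ω := by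
  classical
  induction s using Finset.induction_on with
  | empty => exact Lp.coeFn_zero X 1 μ
  | insert a s ha ih =>
    rw [Finset.sum_insert ha]
    filter_upwards [Lp.coeFn_add (F a) (∑ i ∈ s, F i), ih] with ω h1 h2
    rw [h1, Pi.add_apply, h2, Finset.sum_insert ha]

theorem IndL_sum {ι : Type*} [Fintype ι] (l : Ω → ι) (hl : ∀ i, MeasurableSet (l ⁻¹' {i}))
    (f : Lp X 1 μ) : ∑ i, IndL 𝕜 (hl i) f = f := by
  classical
  apply Lp.ext
  have h : ∀ᵐ ω ∂μ, ∀ i, (IndL 𝕜 (hl i) f : Ω → X) ω = (l ⁻¹' {i}).indicator f ω :=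
    ae_all_iff.2 fun i => IndL_coe (hl i) f
  have h2 := Lp_coe_sum Finset.univ (fun i => IndL 𝕜 (hl i) f)
  filter_upwards [h, h2] with ω e1 e2
  rw [e2, Finset.sum_eq_single (l ω)]
  · rw [e1]; simp
  · intro i _ hi
    rw [e1]; simp [hi.symm]
  · simp

theorem IndL_sum_norm {ι : Type*} [Fintype ι] (l : Ω → ι) (hl : ∀ i, MeasurableSet (l ⁻¹' {i}))
    (f : Lp X 1 μ) : ∑ i, ‖IndL 𝕜 (hl i) f‖ = ‖f‖ := by
  simp_rw [norm_IndL]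
  rw [L1.norm_eq_integral_norm, ← setIntegral_univ]
  have : (Set.univ : Set Ω) = ⋃ i, l ⁻¹' {i} := by ext ω; simp
  rw [this, integral_iUnion_fintype hl]
  · intro i j hij
    exact (Set.disjoint_singleton.2 hij).preimage l
  · intro i; exact (Lp_int f).norm.integrableOn

set_option maxHeartbeats 400000 in
theorem bpbp_of [CompleteSpace X] (hO : Osc 𝕜 X μ) (hP : Pt 𝕜 Y X) : BPBpCompact 𝕜 (Lp X 1 μ) Y := by
  classical
  suffices H : ∀ ε : ℝ, 0 < ε → ∃ δ : ℝ, 0 < δ ∧ ∀ T : Lp X 1 μ →L[𝕜] Y, IsCompactOperator T →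
      ‖T‖ = 1 → ∀ x₀ : Lp X 1 μ, ‖x₀‖ = 1 → 1 - δ < ‖T x₀‖ →
        ∃ S : Lp X 1 μ →L[𝕜] Y, ∃ x₁, IsCompactOperator S ∧ ‖S‖ = 1 ∧ ‖x₁‖ = 1 ∧
          ‖S x₁‖ = 1 ∧ ‖x₀ - x₁‖ < ε ∧ ‖S - T‖ < ε by
    choose! η h1 h2 using H
    exact ⟨η, fun ε hε => ⟨h1 ε hε, h2 ε hε⟩⟩
  intro ε₀ hε₀
  set ε : ℝ := min (1 / 4) (ε₀ / 8) with hεd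
  have hε : 0 < ε := by positivity
  have hε1 : ε ≤ 1 / 4 := min_le_left _ _
  have hε2 : ε ≤ ε₀ / 8 := min_le_right _ _
  obtain ⟨η, hη, hPt⟩ := hP ε hε
  set δ : ℝ := min ε (ε * η / 5) with hδd
  have hδ : 0 < δ := by positivity
  have hδ1 : δ ≤ ε := min_le_left _ _
  have hδ2 : δ ≤ ε * η / 5 := min_le_right _ _
  refine ⟨δ, hδ, fun T hT hT1 f₀ hf₀ hTf => ?_⟩
  have hTpos : 0 < ‖T f₀‖ := by linarith
  set y : Y := ((‖T f₀‖ : 𝕜)⁻¹) • T f₀ with hyd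
  have hy : ‖y‖ = 1 := by
    rw [hyd, norm_smul, norm_inv, RCLike.norm_ofReal, abs_norm, inv_mul_cancel₀ hTpos.ne']
  have hyT : RCLike.re (inner 𝕜 y (T f₀)) = ‖T f₀‖ := by
    rw [hyd, inner_smul_left, ← RCLike.ofReal_inv, RCLike.conj_ofReal, RCLike.re_ofReal_mul,
      inner_self_eq_norm_sq]
    field_simp
  have hdense := nice_dense (X := X) (μ := μ) 𝕜 (Nice X T δ) (fun A hA hAf hA0 =>
    exists_nice hO T hT hT1.le δ hδ hA hAf hA0)
  have hmem : f₀ ∈ closure ((Submodule.span 𝕜 {f : Lp X 1 μ | ∃ B, ∃ hB : MeasurableSet B,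
      ∃ hBf : μ B ≠ ∞, ∃ x : X, Nice X T δ B ∧ f = chiL 𝕜 hB hBf x} : Submodule 𝕜 (Lp X 1 μ)) :
      Set (Lp X 1 μ)) := by
    rw [← Submodule.topologicalClosure_coe, hdense]; trivial
  obtain ⟨g, hg, hgd⟩ := Metric.mem_closure_iff.1 hmem δ hδ
  rw [dist_eq_norm] at hgd
  obtain ⟨ι, _, l, F, hl, hF, hgF⟩ := stp_span 𝕜 (Nice X T δ) (fun B C h1 h2 h3 => h1.mono h2 h3) g hg
  have hFf : ∀ i, F i ≠ 0 → μ (l ⁻¹' {i}) ≠ ∞ := fun i hi => (hF i hi).1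
  have hFR : ∀ i, F i ≠ 0 → ∃ R : X →L[𝕜] Y, IsCompactOperator R ∧ ‖R‖ ≤ 1 ∧
      ∀ f, ‖T (IndL 𝕜 (hl i) f) - R (JL 𝕜 (l ⁻¹' {i}) f)‖ ≤ δ * ‖IndL 𝕜 (hl i) f‖ := by
    intro i hi
    obtain ⟨_, _, R, h⟩ := hF i hi
    exact ⟨R, h⟩
  choose! R hRc hR1 hTR using hFR
  set N : Finset ι := Finset.univ.filter (fun i => F i ≠ 0 ∧ 0 < μ.real (l ⁻¹' {i})) with hN
  have hN1 : ∀ i ∈ N, F i ≠ 0 := fun i hi => (Finset.mem_filter.1 hi).2.1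
  have hN2 : ∀ i ∈ N, 0 < μ.real (l ⁻¹' {i}) := fun i hi => (Finset.mem_filter.1 hi).2.2
  let C : ι → X →L[𝕜] Lp X 1 μ := fun i => if h : F i ≠ 0 then
    ((μ.real (l ⁻¹' {i}))⁻¹ : 𝕜) • chiL 𝕜 (hl i) (hFf i h) else 0
  have hC : ∀ i (hi : i ∈ N) x, C i x =
      ((μ.real (l ⁻¹' {i}))⁻¹ : 𝕜) • chiL 𝕜 (hl i) (hFf i (hN1 i hi)) x := by
    intro i hi x
    simp only [C]
    rw [dif_pos (hN1 i hi)]; rfl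
  have hIg : ∀ i (hi : F i ≠ 0), IndL 𝕜 (hl i) g = chiL 𝕜 (hl i) (hFf i hi) (F i) := by
    intro i hi
    apply Lp.ext
    filter_upwards [hgF, IndL_coe (𝕜 := 𝕜) (hl i) g, chiL_coe (𝕜 := 𝕜) (hl i) (hFf i hi) (F i)]
      with ω e1 e2 e3
    rw [e2, e3]
    by_cases hω : ω ∈ l ⁻¹' {i}
    · rw [Set.indicator_of_mem hω, Set.indicator_of_mem hω, e1]
      have : l ω = i := hω
      simp [this]
    · rw [Set.indicator_of_notMem hω, Set.indicator_of_notMem hω]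
  have hnorm1 : |‖f₀‖ - ‖g‖| < δ := (abs_norm_sub_norm_le _ _).trans_lt hgd
  rw [hf₀, abs_lt] at hnorm1
  let I : ι → Lp X 1 μ →L[𝕜] Lp X 1 μ := fun i => IndL 𝕜 (hl i)
  let J : ι → Lp X 1 μ →L[𝕜] X := fun i => JL 𝕜 (l ⁻¹' {i})
  have hIC : ∀ i ∈ N, ∀ j x, I j (C i x) = if j = i then C i x else 0 := by
    intro i hi j x
    show IndL 𝕜 (hl j) (C i x) = _
    rw [hC i hi]
    simp only [map_smul]
    have hfin : μ (l ⁻¹' {j} ∩ l ⁻¹' {i}) ≠ ∞ :=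
      ne_top_of_le_ne_top (hFf i (hN1 i hi)) (measure_mono Set.inter_subset_right)
    rw [IndL_chiL _ _ _ hfin]
    split_ifs with h
    · subst h
      congr 1
      exact chiL_congr _ _ (Set.inter_self _) _ _ _
    · have : l ⁻¹' {j} ∩ l ⁻¹' {i} = ∅ :=
        ((Set.disjoint_singleton.2 h).preimage l).inter_eq
      have h0 : chiL 𝕜 ((hl j).inter (hl i)) hfin x = 0 := by
        rw [← norm_eq_zero, norm_chiL, this]; simp
      rw [h0, smul_zero]
  have hCn : ∀ i ∈ N, ∀ x, ‖C i x‖ = ‖x‖ := by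
    intro i hi x
    rw [hC i hi, norm_smul, norm_chiL, norm_inv, RCLike.norm_ofReal, abs_of_pos (hN2 i hi),
      ← mul_assoc, inv_mul_cancel₀ (hN2 i hi).ne', one_mul]
  have hJC : ∀ i ∈ N, ∀ x, J i (C i x) = x := by
    intro i hi x
    show JL 𝕜 (l ⁻¹' {i}) (C i x) = _
    rw [hC i hi, map_smul, JL_chiL (hl i), Set.inter_self, inv_smul_smul₀]
    exact_mod_cast (hN2 i hi).ne'
  have hg0 : ∀ i ∉ N, I i g = 0 := by
    intro i hi
    show IndL 𝕜 (hl i) g = 0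
    by_cases h0 : F i = 0
    · apply Lp.ext
      filter_upwards [hgF, IndL_coe (𝕜 := 𝕜) (hl i) g, Lp.coeFn_zero X 1 μ] with ω e1 e2 e3
      rw [e2, e3]
      by_cases hω : ω ∈ l ⁻¹' {i}
      · rw [Set.indicator_of_mem hω, e1]
        have : l ω = i := hω
        simp [this, h0]
      · rw [Set.indicator_of_notMem hω]; rfl
    · rw [hIg i h0, ← norm_eq_zero, norm_chiL]
      have : ¬ 0 < μ.real (l ⁻¹' {i}) := fun h => hi (Finset.mem_filter.2 ⟨Finset.mem_univ _, h0, h⟩)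
      rw [le_antisymm (not_lt.1 this) measureReal_nonneg, zero_mul]
  have hgC : ∀ i ∈ N, I i g = C i (J i g) := by
    intro i hi
    have e : JL 𝕜 (l ⁻¹' {i}) g = (μ.real (l ⁻¹' {i}) : 𝕜) • F i := by
      rw [← JL_IndL (hl i) subset_rfl, hIg i (hN1 i hi), JL_chiL (hl i), Set.inter_self]
    show IndL 𝕜 (hl i) g = C i (JL 𝕜 (l ⁻¹' {i}) g)
    rw [hC i hi, e, map_smul, inv_smul_smul₀ (by exact_mod_cast (hN2 i hi).ne'), hIg i (hN1 i hi)]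
  have hTg : 1 - 2 * δ ≤ RCLike.re (inner 𝕜 y (T g)) := by
    have e1 : RCLike.re (inner 𝕜 y (T (f₀ - g))) ≤ δ := by
      refine (re_inner_le _ _ hy).trans ((T.le_of_opNorm_le hT1.le _).trans ?_)
      linarith
    rw [map_sub, inner_sub_right, map_sub, hyT] at e1
    linarith
  have hTR' : ∀ i ∈ N, ∀ f, ‖T (I i f) - R i (J i f)‖ ≤ δ * ‖I i f‖ := fun i hi => hTR i (hN1 i hi)
  have hI : ∀ f, ∑ i, I i f = f := IndL_sum l hl
  have hIn : ∀ f, ∑ i, ‖I i f‖ = ‖f‖ := IndL_sum_norm l hl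
  have hJ : ∀ i f, ‖J i f‖ ≤ ‖I i f‖ := fun i f => norm_JL_le (hl i) f
  clear_value I J C
  have H := assemble I J C N hI hIn hJ hIC hCn hJC T hT hT1.le δ R (fun i hi => hRc i (hN1 i hi))
    (fun i hi => hR1 i (hN1 i hi)) hTR' g hg0 hgC y hy ε η hε hε1 hη hδ hδ1
    (by linarith) (hPt y hy) (by linarith) (by linarith) hTg
  obtain ⟨S, f, hSc, hS1, hf1, hSf, hfg, hST⟩ := H
  have hSf1 : ‖S f‖ = 1 := by rw [hSf, hy]
  refine ⟨S, f, hSc, ?_, hf1, hSf1, ?_, by linarith⟩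
  · apply le_antisymm hS1
    have := S.le_opNorm f
    rwa [hSf1, hf1, mul_one] at this
  · calc ‖f₀ - f‖ = ‖(f₀ - g) - (f - g)‖ := by congr 1; abel
      _ ≤ _ := norm_sub_le _ _
      _ < ε₀ := by linarith

end PartE2

section PartF
variable {𝕜 : Type*} [RCLike 𝕜] {X : Type*} [NormedAddCommGroup X] [NormedSpace 𝕜 X]
  {Y : Type*} [NormedAddCommGroup Y] [InnerProductSpace 𝕜 Y]

theorem HF (R : X →L[𝕜] Y) (hR : ‖R‖ ≤ 1) (y : Y) (hy : ‖y‖ = 1) (m h : X) (η : ℝ)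
    (hm : 1 - η ≤ RCLike.re (inner 𝕜 y (R m))) (h1 : ‖m + h‖ ≤ 1) (h2 : ‖m - h‖ ≤ 1) :
    ‖R h‖ ^ 2 ≤ 2 * η := by
  have p := parallelogram_law_with_norm 𝕜 (R m) (R h)
  have a1 : ‖R m + R h‖ ≤ 1 := by
    rw [← map_add]
    exact (R.le_of_opNorm_le hR _).trans (by linarith)
  have a2 : ‖R m - R h‖ ≤ 1 := by
    rw [← map_sub]
    exact (R.le_of_opNorm_le hR _).trans (by linarith)
  have a3 : 1 - η ≤ ‖R m‖ := hm.trans (re_inner_le _ _ hy)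
  have := norm_nonneg (R m + R h)
  have := norm_nonneg (R m - R h)
  have b0 := norm_nonneg (R m)
  have b : 1 - 2 * η ≤ ‖R m‖ ^ 2 := by
    rcases le_or_gt (1 - η) 0 with h | h
    · nlinarith
    · have := mul_self_le_mul_self h.le a3
      nlinarith [sq_nonneg η]
  nlinarith

theorem refl_norm (u : Y) (c : 𝕜) (hc : c ≠ 0) (h : ‖u‖ ^ 2 = 2 * RCLike.re c) (v : Y) :
    ‖v - (inner 𝕜 u v / c) • u‖ = ‖v‖ := by
  have hc' : 0 < ‖c‖ ^ 2 := by positivity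
  have e : RCLike.re (inner 𝕜 v ((inner 𝕜 u v / c) • u)) = ‖inner 𝕜 u v‖ ^ 2 * RCLike.re c / ‖c‖ ^ 2 := by
    rw [inner_smul_right, div_mul_eq_mul_div, ← inner_conj_symm v u, RCLike.mul_conj]
    rw [div_eq_mul_inv, RCLike.inv_def]
    have : ((‖inner 𝕜 u v‖ : 𝕜) ^ 2) * ((starRingEnd 𝕜) c * (((‖c‖ ^ 2)⁻¹ : ℝ) : 𝕜)) =
      ((‖inner 𝕜 u v‖ ^ 2 * (‖c‖ ^ 2)⁻¹ : ℝ) : 𝕜) * (starRingEnd 𝕜) c := by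
      push_cast; ring
    rw [this, RCLike.re_ofReal_mul, RCLike.conj_re]
    ring
  have k := norm_sub_sq (𝕜 := 𝕜) v ((inner 𝕜 u v / c) • u)
  rw [e, norm_smul, mul_pow, h, norm_div, div_pow] at k
  have : ‖v - (inner 𝕜 u v / c) • u‖ ^ 2 = ‖v‖ ^ 2 := by
    rw [k]; field_simp; ring
  exact (sq_eq_sq₀ (norm_nonneg _) (norm_nonneg _)).1 this

def reflL (u : Y) (c : 𝕜) : Y →L[𝕜] Y :=
  ContinuousLinearMap.id 𝕜 Y - (c⁻¹ • innerSL 𝕜 u).smulRight u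

theorem reflL_apply (u : Y) (c : 𝕜) (v : Y) : reflL u c v = v - (inner 𝕜 u v / c) • u := by
  simp [reflL, div_eq_inv_mul]

theorem rot_near (w y : Y) (hw : ‖w‖ = 1) (hy : ‖y‖ = 1) (e : ℝ) (he : ‖w - y‖ ≤ e) (he1 : e ≤ 1) :
    ∃ V : Y →L[𝕜] Y, ‖V‖ ≤ 1 ∧ V w = y ∧ ∀ v, ‖V v - v‖ ≤ 7 * e * ‖v‖ := by
  set d := y - w with hd
  have hde : ‖d‖ ≤ e := by rw [hd, norm_sub_rev]; exact he
  have he0 : 0 ≤ e := (norm_nonneg _).trans hde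
  set u := w + y with hu
  have hud : u = (2 : 𝕜) • w + d := by rw [hu, hd, two_smul]; abel
  set c : 𝕜 := inner 𝕜 u w with hc
  have hww : inner 𝕜 w w = (1 : 𝕜) := by rw [inner_self_eq_norm_sq_to_K, hw]; simp
  have hcd : c = 2 + inner 𝕜 d w := by
    rw [hc, hud, inner_add_left, inner_smul_left, hww, map_ofNat]; simp
  have hdw : ‖inner 𝕜 d w‖ ≤ e := (norm_inner_le_norm _ _).trans (by rw [hw]; linarith)
  have hc1 : 1 ≤ ‖c‖ := by
    have := norm_sub_norm_le (2 : 𝕜) (-inner 𝕜 d w)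
    rw [norm_neg, sub_neg_eq_add, ← hcd, RCLike.norm_ofNat] at this
    linarith
  have hc0 : c ≠ 0 := by
    rintro h; rw [h, norm_zero] at hc1; linarith
  have huc : ‖u‖ ^ 2 = 2 * RCLike.re c := by
    rw [hc, hu, norm_add_sq (𝕜 := 𝕜), hw, hy, inner_add_left, map_add, hww, inner_re_symm w y]
    simp; ring
  have hG : ∀ v, ‖reflL w (1 / 2 : 𝕜) v‖ = ‖v‖ := by
    intro v
    rw [reflL_apply]
    apply refl_norm
    · norm_num
    · rw [hw]
      have : (1 / 2 : 𝕜) = ((1 / 2 : ℝ) : 𝕜) := by push_cast; rfl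
      rw [this, RCLike.ofReal_re]; norm_num
  have hGw : reflL w (1 / 2 : 𝕜) w = -w := by
    rw [reflL_apply, hww]
    have : (1 / (1 / 2) : 𝕜) = 2 := by norm_num
    rw [this, two_smul]; abel
  have hGG : ∀ v, reflL w (1 / 2 : 𝕜) (reflL w (1 / 2 : 𝕜) v) = v := by
    intro v
    have : reflL w (1 / 2 : 𝕜) v = v - (inner 𝕜 w v / (1 / 2)) • w := reflL_apply _ _ _
    conv_lhs => rw [this, map_sub, map_smul, hGw, this]
    simp
  have hH : ∀ v, ‖reflL u c v‖ = ‖v‖ := by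
    intro v
    rw [reflL_apply]
    exact refl_norm u c hc0 huc v
  have hHw : reflL u c w = -y := by
    rw [reflL_apply, ← hc, div_self hc0, one_smul, hu]; abel
  have hHG : ∀ v, ‖reflL u c v - reflL w (1 / 2 : 𝕜) v‖ ≤ 7 * e * ‖v‖ := by
    intro v
    set α : 𝕜 := inner 𝕜 w v with hα
    set β : 𝕜 := inner 𝕜 d v with hβ
    have hαn : ‖α‖ ≤ ‖v‖ := (norm_inner_le_norm _ _).trans (by rw [hw, one_mul])
    have hβn : ‖β‖ ≤ e * ‖v‖ := (norm_inner_le_norm _ _).trans (by gcongr)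
    have hiu : inner 𝕜 u v = 2 * α + β := by
      rw [hud, inner_add_left, inner_smul_left, map_ofNat]
    have e1 : reflL u c v - reflL w (1 / 2 : 𝕜) v =
        (c⁻¹ * (2 * α * inner 𝕜 d w)) • w - c⁻¹ • ((2 * α) • d + β • u) := by
      rw [reflL_apply, reflL_apply, hiu, ← hα, sub_sub_sub_cancel_left]
      have : α / (1 / 2) = c⁻¹ * (2 * α * c) := by field_simp
      rw [this, hcd, hud]
      module
    rw [e1]
    have hci : ‖c⁻¹‖ ≤ 1 := by
      rw [norm_inv]; exact inv_le_one_of_one_le₀ hc1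
    have n1 : ‖(c⁻¹ * (2 * α * inner 𝕜 d w)) • w‖ ≤ 2 * e * ‖v‖ := by
      rw [norm_smul, hw, mul_one, norm_mul, norm_mul, norm_mul, RCLike.norm_ofNat]
      calc _ ≤ 1 * (2 * ‖v‖ * e) := by gcongr
        _ = _ := by ring
    have hun : ‖u‖ ≤ 2 := (norm_add_le _ _).trans (by rw [hw, hy]; norm_num)
    have n2 : ‖c⁻¹ • ((2 * α) • d + β • u)‖ ≤ 4 * e * ‖v‖ := by
      rw [norm_smul]
      calc _ ≤ 1 * (2 * ‖v‖ * e + e * ‖v‖ * 2) := by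
            gcongr
            refine (norm_add_le _ _).trans ?_
            rw [norm_smul, norm_smul, norm_mul, RCLike.norm_ofNat]
            gcongr
        _ = _ := by ring
    refine (norm_sub_le _ _).trans ?_
    nlinarith [norm_nonneg v, mul_nonneg he0 (norm_nonneg v)]
  refine ⟨(reflL u c).comp (reflL w (1 / 2 : 𝕜)), ?_, ?_, ?_⟩
  · refine ContinuousLinearMap.opNorm_le_bound _ zero_le_one fun v => ?_
    rw [ContinuousLinearMap.comp_apply, hH, hG, one_mul]
  · rw [ContinuousLinearMap.comp_apply, hGw, map_neg, hHw, neg_neg]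
  · intro v
    have := hHG (reflL w (1 / 2 : 𝕜) v)
    rwa [hGG, hG] at this

theorem fin_lemma (R T : X →L[𝕜] Y) (y : Y) (x z : X) (e : ℝ) (hR : ‖R‖ ≤ 1) (hy : ‖y‖ = 1)
    (hz : ‖z‖ = 1) (hx : ‖x‖ = 1) (hTc : IsCompactOperator T) (hTz : ‖T z‖ = ‖T‖)
    (hTR : ‖T - R‖ ≤ e) (hzx : ‖z - x‖ ≤ e) (he : e ≤ 1 / 10)
    (hyR : 1 - e ^ 2 ≤ RCLike.re (inner 𝕜 y (R x))) :
    ∃ S : X →L[𝕜] Y, IsCompactOperator S ∧ ‖S‖ ≤ 1 ∧ S z = y ∧ ‖S - R‖ ≤ 60 * e := by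
  have he0 : 0 ≤ e := (norm_nonneg _).trans hzx
  set a := ‖T‖ with ha
  have n1 : ‖T z - R x‖ ≤ 2 * e := by
    have k1 := (T - R).le_of_opNorm_le hTR z
    have k2 := R.le_of_opNorm_le hR (z - x)
    rw [sub_apply, hz] at k1
    rw [map_sub] at k2
    calc _ = ‖(T z - R z) + (R z - R x)‖ := by congr 1; abel
      _ ≤ _ := norm_add_le _ _
      _ ≤ _ := by linarith
  have hRx : ‖R x‖ ≤ 1 := (R.le_of_opNorm_le hR x).trans (by rw [hx, one_mul])
  have hRx' : 1 - e ^ 2 ≤ ‖R x‖ := hyR.trans (re_inner_le _ _ hy)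
  have n2 : ‖R x - y‖ ≤ 2 * e := by
    have k := norm_sub_sq (𝕜 := 𝕜) (R x) y
    rw [hy, inner_re_symm] at k
    have : ‖R x - y‖ ^ 2 ≤ (2 * e) ^ 2 := by nlinarith [norm_nonneg (R x)]
    exact (sq_le_sq₀ (norm_nonneg _) (by positivity)).1 this
  have hae : |1 - a| ≤ 3 * e := by
    have := abs_norm_sub_norm_le (T z) (R x)
    rw [hTz] at this
    have h2 := abs_le.1 (this.trans n1)
    rw [abs_le]; constructor <;> nlinarith
  have ha1 := abs_le.1 hae
  have hapos : 0 < a := by linarith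
  have hane : (a : 𝕜) ≠ 0 := by exact_mod_cast hapos.ne'
  set w : Y := (a : 𝕜)⁻¹ • T z with hw
  have hsub : ∀ v : Y, ‖(a : 𝕜)⁻¹ • v - v‖ * a = |1 - a| * ‖v‖ := by
    intro v
    have : (a : 𝕜)⁻¹ • v - v = ((a⁻¹ * (1 - a) : ℝ) : 𝕜) • v := by
      rw [mul_sub, inv_mul_cancel₀ hapos.ne', RCLike.ofReal_sub, sub_smul]; simp
    rw [this, norm_smul, RCLike.norm_ofReal, abs_mul, abs_of_pos (inv_pos.2 hapos)]
    field_simp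
  have hw1 : ‖w‖ = 1 := by
    rw [hw, norm_smul, norm_inv, RCLike.norm_ofReal, abs_of_pos hapos, hTz, inv_mul_cancel₀ hapos.ne']
  have n3 : ‖w - T z‖ ≤ 3 * e := by
    have := hsub (T z)
    rw [hTz] at this
    exact (mul_right_cancel₀ hapos.ne' this).le.trans hae
  have hwy : ‖w - y‖ ≤ 7 * e := by
    calc _ = ‖(w - T z) + (T z - R x) + (R x - y)‖ := by congr 1; abel
      _ ≤ _ := norm_add₃_le
      _ ≤ _ := by linarith
  obtain ⟨V, hV1, hVw, hV⟩ := rot_near (𝕜 := 𝕜) w y hw1 hy (7 * e) hwy (by linarith)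
  have hTn : ∀ v, ‖(a : 𝕜)⁻¹ • T v‖ ≤ ‖v‖ := by
    intro v
    rw [norm_smul, norm_inv, RCLike.norm_ofReal, abs_of_pos hapos, inv_mul_le_iff₀ hapos]
    exact T.le_opNorm v
  refine ⟨V.comp ((a : 𝕜)⁻¹ • T), ?_, ?_, ?_, ?_⟩
  · exact (hTc.smul _).clm_comp _
  · refine ContinuousLinearMap.opNorm_le_bound _ zero_le_one fun v => ?_
    refine (V.le_of_opNorm_le hV1 _).trans ?_
    rw [one_mul, one_mul]; exact hTn v
  · exact hVw
  · refine ContinuousLinearMap.opNorm_le_bound _ (by positivity) fun v => ?_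
    have k1 := hV ((a : 𝕜)⁻¹ • T v)
    have k2 := hTn v
    have k3 : ‖(a : 𝕜)⁻¹ • T v - T v‖ ≤ 3 * e * ‖v‖ := by
      have h1 := hsub (T v)
      have h2 := T.le_opNorm v
      have : ‖(a : 𝕜)⁻¹ • T v - T v‖ * a ≤ (3 * e * ‖v‖) * a := by
        rw [h1]
        calc _ ≤ 3 * e * (a * ‖v‖) := by gcongr
          _ = _ := by ring
      exact le_of_mul_le_mul_right this hapos
    have k4 := (T - R).le_of_opNorm_le hTR v
    rw [sub_apply] at k4
    have k5 : 7 * (7 * e) * ‖(a : 𝕜)⁻¹ • T v‖ ≤ 49 * e * ‖v‖ := by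
      nlinarith
    show ‖V ((a : 𝕜)⁻¹ • T v) - R v‖ ≤ _
    calc _ = ‖(V ((a : 𝕜)⁻¹ • T v) - (a : 𝕜)⁻¹ • T v) + ((a : 𝕜)⁻¹ • T v - T v) + (T v - R v)‖ := by
            congr 1; abel
      _ ≤ _ := norm_add₃_le
      _ ≤ _ := by nlinarith [norm_nonneg v, mul_nonneg he0 (norm_nonneg v)]

end PartF

section PartG
variable {𝕜 : Type*} [RCLike 𝕜] {X : Type*} [NormedAddCommGroup X] [NormedSpace 𝕜 X]
  {Y : Type*} [NormedAddCommGroup Y] [InnerProductSpace 𝕜 Y]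

def UC (X : Type*) [NormedAddCommGroup X] : Prop := ∀ ε : ℝ, 0 < ε → ∃ δ : ℝ, 0 < δ ∧
  ∀ f g : X, ‖f‖ ≤ 1 → ‖g‖ ≤ 1 → 2 - δ ≤ ‖f + g‖ → ‖f - g‖ ≤ ε

theorem uc_attain [CompleteSpace X] (h : UC X) (T : X →L[𝕜] Y) (hT : IsCompactOperator T)
    (hpos : 0 < ‖T‖) : ∃ z, ‖z‖ = 1 ∧ ‖T z‖ = ‖T‖ := by
  set M := ‖T‖ with hM
  have hx : ∀ n : ℕ, ∃ x, ‖x‖ < 1 ∧ M - 1 / ((n : ℝ) + 1) < ‖T x‖ := by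
    intro n
    apply T.exists_lt_apply_of_lt_opNorm
    have : (0 : ℝ) < 1 / ((n : ℝ) + 1) := by positivity
    linarith
  choose x hx1 hx2 using hx
  have hmem : ∀ n, T (x n) ∈ closure (T '' Metric.closedBall 0 1) := fun n =>
    subset_closure ⟨x n, by simpa using (hx1 n).le, rfl⟩
  obtain ⟨y, -, φ, hφ, hlim⟩ := (hT.isCompact_closure_image_closedBall 1).tendsto_subseq hmem
  have hyM : M ≤ ‖y‖ := by
    have l1 : Filter.Tendsto (fun n : ℕ => M - 1 / ((φ n : ℝ) + 1)) Filter.atTop (nhds (M - 0)) :=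
      (tendsto_one_div_add_atTop_nhds_zero_nat.comp hφ.tendsto_atTop).const_sub M
    rw [sub_zero] at l1
    exact le_of_tendsto_of_tendsto' l1 hlim.norm (fun n => (hx2 (φ n)).le)
  have hc : CauchySeq (x ∘ φ) := by
    rw [Metric.cauchySeq_iff]
    intro ε hε
    obtain ⟨δ, hδ, hd⟩ := h (ε / 2) (by positivity)
    obtain ⟨N, hN⟩ := Metric.tendsto_atTop.1 hlim (M * δ / 2) (by positivity)
    refine ⟨N, fun m hm n hn => ?_⟩
    rw [dist_eq_norm]
    have h1 := hN m hm
    have h2 := hN n hn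
    rw [dist_eq_norm] at h1 h2
    refine lt_of_le_of_lt (hd _ _ (hx1 _).le (hx1 _).le ?_) (by linarith)
    have k : 2 * ‖y‖ ≤ ‖T (x (φ m)) + T (x (φ n))‖ + (M * δ / 2 + M * δ / 2) := by
      have e : (2 : 𝕜) • y = (T (x (φ m)) + T (x (φ n))) - ((T (x (φ m)) - y) + (T (x (φ n)) - y)) := by
        rw [two_smul]; abel
      calc 2 * ‖y‖ = ‖(2 : 𝕜) • y‖ := by rw [norm_smul, RCLike.norm_ofNat]
        _ ≤ ‖T (x (φ m)) + T (x (φ n))‖ + ‖(T (x (φ m)) - y) + (T (x (φ n)) - y)‖ := by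
          rw [e]; exact norm_sub_le _ _
        _ ≤ _ := by
          gcongr
          exact (norm_add_le _ _).trans (add_le_add h1.le h2.le)
    rw [← map_add] at k
    have k2 := T.le_opNorm (x (φ m) + x (φ n))
    have : M * (2 - δ) ≤ M * ‖x (φ m) + x (φ n)‖ := by
      rw [← hM] at k2; linarith
    exact le_of_mul_le_mul_left this hpos
  obtain ⟨z, hz⟩ := cauchySeq_tendsto_of_complete hc
  have hTz : T z = y := tendsto_nhds_unique ((T.continuous.tendsto z).comp hz) hlim
  have hz1 : ‖z‖ ≤ 1 := le_of_tendsto' hz.norm (fun n => (hx1 _).le)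
  have k := T.le_opNorm z
  rw [hTz, ← hM] at k
  have hz2 : ‖z‖ = 1 := by
    apply le_antisymm hz1
    have : M * 1 ≤ M * ‖z‖ := by linarith
    exact le_of_mul_le_mul_left this hpos
  refine ⟨z, hz2, ?_⟩
  rw [hTz]
  rw [hz2] at k
  linarith

theorem unimod (a : 𝕜) : ∃ u : 𝕜, ‖u‖ = 1 ∧ u * a = (‖a‖ : 𝕜) := by
  by_cases h : a = 0
  · exact ⟨1, by simp, by simp [h]⟩
  · have h' : ‖a‖ ≠ 0 := norm_ne_zero_iff.2 h
    refine ⟨(‖a‖ : 𝕜) / a, ?_, by field_simp⟩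
    rw [norm_div, RCLike.norm_ofReal, abs_norm, div_self h']

theorem compact_rankOne (φ : X →L[𝕜] 𝕜) (y : Y) : IsCompactOperator (φ.smulRight y) := by
  have h : IsCompactOperator φ :=
    (isCompactOperator_id_iff_locallyCompactSpace (E := 𝕜)).2 inferInstance |>.comp_clm φ
  exact h.clm_comp ((ContinuousLinearMap.id 𝕜 𝕜).smulRight y)

theorem pt_of_uc [CompleteSpace X] (h : UC X) : Pt 𝕜 Y X := by
  intro ε hε
  set e : ℝ := min (1 / 10) (ε / 60) with he
  have he0 : 0 < e := by positivity
  have he1 : e ≤ 1 / 10 := min_le_left _ _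
  have he2 : e ≤ ε / 60 := min_le_right _ _
  obtain ⟨δ, hδ, hd⟩ := h e he0
  refine ⟨min (e * δ) (e ^ 2), by positivity, fun y hy R hRc hR x hx hyx => ?_⟩
  have hyx1 : 1 - e * δ < RCLike.re (inner 𝕜 y (R x)) :=
    lt_of_le_of_lt (by linarith [min_le_left (e * δ) (e ^ 2)]) hyx
  have hyx2 : 1 - e ^ 2 < RCLike.re (inner 𝕜 y (R x)) :=
    lt_of_le_of_lt (by linarith [min_le_right (e * δ) (e ^ 2)]) hyx
  obtain ⟨φ, hφ1, hφx⟩ := exists_dual_vector'' 𝕜 x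
  rw [hx, RCLike.ofReal_one] at hφx
  let T : X →L[𝕜] Y := R + (e : 𝕜) • φ.smulRight y
  have hTa : ∀ v, T v = R v + (e : 𝕜) • φ v • y := fun v => rfl
  have hTc : IsCompactOperator T := hRc.add ((compact_rankOne φ y).smul _)
  have hTR : ‖T - R‖ ≤ e := by
    refine ContinuousLinearMap.opNorm_le_bound _ he0.le fun v => ?_
    rw [sub_apply, hTa, add_sub_cancel_left, norm_smul, norm_smul, hy, mul_one, RCLike.norm_ofReal,
      abs_of_pos he0]
    have := φ.le_of_opNorm_le hφ1 v
    rw [one_mul] at this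
    gcongr
  have hTx : 1 - e * δ + e < ‖T‖ := by
    have k := T.le_opNorm x
    rw [hx, mul_one] at k
    have k2 := re_inner_le (𝕜 := 𝕜) y (T x) hy
    rw [hTa, hφx, one_smul, inner_add_right, inner_smul_right, inner_self_eq_norm_sq_to_K, hy,
      map_add] at k2
    simp at k2
    rw [hTa, hφx, one_smul] at k
    linarith
  have hTpos : 0 < ‖T‖ := by
    have k := T.le_opNorm x
    rw [hx, mul_one] at k
    have k2 := re_inner_le (𝕜 := 𝕜) y (T x) hy
    rw [hTa, hφx, one_smul, inner_add_right, inner_smul_right, inner_self_eq_norm_sq_to_K, hy,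
      map_add] at k2
    simp at k2
    rw [hTa, hφx, one_smul] at k
    nlinarith
  obtain ⟨z₀, hz₀, hTz₀⟩ := uc_attain h T hTc hTpos
  obtain ⟨u, hu, huφ⟩ := unimod (φ z₀)
  have hz : ‖u • z₀‖ = 1 := by rw [norm_smul, hu, hz₀, one_mul]
  have hTz : ‖T (u • z₀)‖ = ‖T‖ := by rw [map_smul, norm_smul, hu, hTz₀, one_mul]
  have hφz : 1 - δ < ‖φ z₀‖ := by
    have k : ‖T z₀‖ ≤ 1 + e * ‖φ z₀‖ := by
      rw [hTa]
      refine (norm_add_le _ _).trans ?_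
      rw [norm_smul, norm_smul, hy, mul_one, RCLike.norm_ofReal, abs_of_pos he0]
      gcongr
      have := R.le_of_opNorm_le hR z₀
      rwa [hz₀, mul_one] at this
    have : e * (1 - δ) < e * ‖φ z₀‖ := by linarith
    exact lt_of_mul_lt_mul_left this he0.le
  have hzx : ‖u • z₀ - x‖ ≤ e := by
    apply hd _ _ hz.le hx.le
    have k := φ.le_of_opNorm_le hφ1 (u • z₀ + x)
    rw [map_add, map_smul, smul_eq_mul, huφ, hφx, one_mul, ← RCLike.ofReal_one, ← RCLike.ofReal_add,
      RCLike.norm_ofReal] at k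
    have := le_abs_self (‖φ z₀‖ + 1)
    linarith
  obtain ⟨S, hS1, hS2, hS3, hS4⟩ := fin_lemma R T y x (u • z₀) e hR hy hz hx hTc hTz hTR hzx he1 hyx2.le
  exact ⟨S, u • z₀, hS1, hS2, hz, hS3, by linarith, by linarith⟩

end PartG

section PartH1
variable {E : Type*} [NormedAddCommGroup E] [InnerProductSpace ℝ E]

theorem pw_pos (r : ℝ) (hr : 1 < r) (a b : E) (h : a ≠ b) :
    (‖a + b‖ / 2) ^ r < (‖a‖ ^ r + ‖b‖ ^ r) / 2 := by
  rcases eq_or_ne ‖a‖ ‖b‖ with e | e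
  · have p := parallelogram_law_with_norm ℝ a b
    have hd : 0 < ‖a - b‖ := norm_pos_iff.2 (sub_ne_zero.2 h)
    have : ‖a + b‖ / 2 < ‖a‖ := by
      by_contra! hh
      rw [← e] at p
      have := norm_nonneg a
      nlinarith [mul_pos hd hd, mul_self_le_mul_self this hh]
    rw [← e]
    have := Real.rpow_lt_rpow (by positivity) this (by linarith : 0 < r)
    linarith
  · have h1 : (‖a + b‖ / 2) ^ r ≤ ((‖a‖ + ‖b‖) / 2) ^ r :=
      Real.rpow_le_rpow (by positivity) (by linarith [norm_add_le a b]) (by linarith)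
    obtain ⟨-, hsc⟩ := strictConvexOn_rpow hr
    have := hsc (x := ‖a‖) (norm_nonneg a) (y := ‖b‖) (norm_nonneg b) e
      (a := 1 / 2) (b := 1 / 2) (by norm_num) (by norm_num) (by norm_num)
    simp only [smul_eq_mul] at this
    rw [show (1 : ℝ) / 2 * ‖a‖ + 1 / 2 * ‖b‖ = (‖a‖ + ‖b‖) / 2 by ring] at this
    linarith

theorem pw_nonneg (r : ℝ) (hr : 1 < r) (a b : E) :
    (‖a + b‖ / 2) ^ r ≤ (‖a‖ ^ r + ‖b‖ ^ r) / 2 := by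
  rcases eq_or_ne a b with rfl | h
  · have : ‖a + a‖ / 2 = ‖a‖ := by rw [← two_smul ℝ, norm_smul]; norm_num
    rw [this]; linarith
  · exact (pw_pos r hr a b h).le

theorem pw_uc [ProperSpace E] (r : ℝ) (hr : 1 < r) (ε : ℝ) (hε : 0 < ε) : ∃ C : ℝ, 0 ≤ C ∧ ∀ a b : E,
    ‖a - b‖ ^ r ≤ ε * (‖a‖ ^ r + ‖b‖ ^ r) + C * ((‖a‖ ^ r + ‖b‖ ^ r) / 2 - (‖a + b‖ / 2) ^ r) := by
  have hr0 : 0 ≤ r := by linarith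
  let D : E × E → ℝ := fun q => (‖q.1‖ ^ r + ‖q.2‖ ^ r) / 2 - (‖q.1 + q.2‖ / 2) ^ r
  have hDc : Continuous D := by
    have (f : E × E → ℝ) (hf : Continuous f) : Continuous fun q => f q ^ r := hf.rpow_const (fun _ => Or.inr hr0)
    exact (((this _ (by fun_prop)).add (this _ (by fun_prop))).div_const 2).sub (this _ (by fun_prop))
  let K : Set (E × E) := Metric.sphere 0 1 ∩ {q | ε * (‖q.1‖ ^ r + ‖q.2‖ ^ r) ≤ ‖q.1 - q.2‖ ^ r}
  have hK : IsCompact K := by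
    refine (isCompact_sphere _ _).inter_right (isClosed_le ?_ ?_)
    · exact (((continuous_fst.norm).rpow_const (fun _ => Or.inr hr0)).add
        ((continuous_snd.norm).rpow_const (fun _ => Or.inr hr0))).const_mul ε |>.congr (fun _ => rfl)
    · exact (continuous_fst.sub continuous_snd).norm.rpow_const (fun _ => Or.inr hr0)
  have key : ∃ C : ℝ, 0 ≤ C ∧ ∀ q ∈ K, ‖q.1 - q.2‖ ^ r ≤ C * D q := by
    rcases K.eq_empty_or_nonempty with h | h
    · exact ⟨0, le_rfl, by simp [h]⟩
    obtain ⟨q0, hq0, hmin⟩ := hK.exists_isMinOn h hDc.continuousOn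
    have hd : 0 < D q0 := by
      have : q0.1 ≠ q0.2 := by
        intro e
        have h1 := hq0.1
        have h2 := hq0.2
        simp only [Set.mem_ofPred_eq, e, sub_self, norm_zero] at h2
        rw [Real.zero_rpow (by linarith)] at h2
        have h3 : ‖q0.2‖ = 1 := by
          have : ‖q0‖ = 1 := by simpa using h1
          rw [Prod.norm_def, e, max_self] at this; exact this
        rw [h3, Real.one_rpow] at h2
        linarith
      exact sub_pos.2 (pw_pos r hr _ _ this)
    refine ⟨2 ^ r / D q0, by positivity, fun q hq => ?_⟩
    have h1 : ‖q.1 - q.2‖ ≤ 2 := by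
      have : ‖q‖ = 1 := by simpa using hq.1
      have a1 := norm_fst_le q
      have a2 := norm_snd_le q
      linarith [norm_sub_le q.1 q.2]
    calc ‖q.1 - q.2‖ ^ r ≤ 2 ^ r := Real.rpow_le_rpow (norm_nonneg _) h1 hr0
      _ = 2 ^ r / D q0 * D q0 := by field_simp
      _ ≤ _ := by
        have : D q0 ≤ D q := hmin hq
        gcongr
  obtain ⟨C, hC, hk⟩ := key
  refine ⟨C, hC, fun a b => ?_⟩
  by_cases h0 : ‖(a, b)‖ = 0
  · have : (a, b) = 0 := norm_eq_zero.1 h0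
    obtain ⟨rfl, rfl⟩ := Prod.mk_eq_zero.1 this
    simp [Real.zero_rpow (show r ≠ 0 by linarith)]
  set s := ‖(a, b)‖ with hs
  have hs0 : 0 < s := lt_of_le_of_ne (norm_nonneg _) (Ne.symm h0)
  have hsc : ∀ c : E, ‖c‖ ^ r = s ^ r * ‖s⁻¹ • c‖ ^ r := by
    intro c
    rw [← Real.mul_rpow hs0.le (norm_nonneg _), norm_smul, Real.norm_of_nonneg (by positivity)]
    congr 1; field_simp
  have hsc2 : (‖a + b‖ / 2) ^ r = s ^ r * (‖s⁻¹ • a + s⁻¹ • b‖ / 2) ^ r := by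
    rw [Real.div_rpow (norm_nonneg _) (by norm_num), Real.div_rpow (norm_nonneg _) (by norm_num),
      hsc, smul_add]; ring
  rw [hsc2, hsc a, hsc b, hsc (a - b), smul_sub]
  have main : ‖s⁻¹ • a - s⁻¹ • b‖ ^ r ≤ ε * (‖s⁻¹ • a‖ ^ r + ‖s⁻¹ • b‖ ^ r)
      + C * ((‖s⁻¹ • a‖ ^ r + ‖s⁻¹ • b‖ ^ r) / 2 - (‖s⁻¹ • a + s⁻¹ • b‖ / 2) ^ r) := by
    have hD0 : 0 ≤ C * ((‖s⁻¹ • a‖ ^ r + ‖s⁻¹ • b‖ ^ r) / 2 - (‖s⁻¹ • a + s⁻¹ • b‖ / 2) ^ r) :=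
      mul_nonneg hC (sub_nonneg.2 (pw_nonneg r hr _ _))
    by_cases hle : ε * (‖s⁻¹ • a‖ ^ r + ‖s⁻¹ • b‖ ^ r) ≤ ‖s⁻¹ • a - s⁻¹ • b‖ ^ r
    · have : (s⁻¹ • a, s⁻¹ • b) ∈ K := by
        refine ⟨?_, hle⟩
        rw [mem_sphere_zero_iff_norm, ← Prod.smul_mk, norm_smul, Real.norm_of_nonneg (by positivity), ← hs]
        field_simp
      have := hk _ this
      have h2 : 0 ≤ ε * (‖s⁻¹ • a‖ ^ r + ‖s⁻¹ • b‖ ^ r) := by positivity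
      simp only [D] at this
      linarith
    · linarith [not_le.1 hle]
  have := mul_le_mul_of_nonneg_left main (Real.rpow_nonneg hs0.le r)
  linarith

theorem pw_smo [ProperSpace E] (r : ℝ) (hr : 1 < r) (ε : ℝ) (hε : 0 < ε) : ∃ t : ℝ, 0 < t ∧ ∀ a b : E,
    ‖a + t • b‖ ^ r + ‖a - t • b‖ ^ r ≤ 2 * ‖a‖ ^ r + ε * t * (‖a‖ ^ r + ‖b‖ ^ r) := by
  have hr0 : 0 ≤ r := by linarith
  have hcd := contDiff_norm_rpow (E := E) hr
  have hcont : Continuous (fderiv ℝ (fun x : E => ‖x‖ ^ r)) := hcd.continuous_fderiv one_ne_zero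
  have huc := (isCompact_closedBall (0 : E) 2).uniformContinuousOn_of_continuous hcont.continuousOn
  rw [Metric.uniformContinuousOn_iff_le] at huc
  obtain ⟨δ, hδ, hu⟩ := huc (ε / 2) (by positivity)
  have hdf : ∀ x : E, DifferentiableAt ℝ (fun x : E => ‖x‖ ^ r) x :=
    fun x => (hcd.differentiable one_ne_zero) x
  refine ⟨min δ 1, by positivity, ?_⟩
  set t := min δ 1 with ht
  have ht0 : 0 < t := by positivity
  have ht1 : t ≤ 1 := min_le_right _ _
  have htδ : t ≤ δ := min_le_left _ _
  have loc : ∀ a h : E, ‖a‖ ≤ 1 → ‖h‖ ≤ t →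
      ‖a + h‖ ^ r ≤ ‖a‖ ^ r + fderiv ℝ (fun x : E => ‖x‖ ^ r) a h + ε / 2 * t := by
    intro a h ha hh
    have := (convex_closedBall a t).norm_image_sub_le_of_norm_fderiv_le' (𝕜 := ℝ) (f := fun x : E => ‖x‖ ^ r)
      (φ := fderiv ℝ (fun x : E => ‖x‖ ^ r) a) (C := ε / 2) (x := a) (y := a + h) (fun x _ => hdf x) ?_
      (Metric.mem_closedBall_self ht0.le) (by simpa using hh)
    · rw [add_sub_cancel_left] at this
      have h1 := (le_abs_self _).trans this
      have h2 : ε / 2 * ‖h‖ ≤ ε / 2 * t := by gcongr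
      linarith
    · intro x hx
      rw [← dist_eq_norm]
      have hx' : dist x a ≤ t := hx
      refine hu x ?_ a ?_ (hx'.trans htδ)
      · rw [mem_closedBall_zero_iff]
        rw [dist_eq_norm] at hx'
        have := norm_add_le (x - a) a
        rw [sub_add_cancel] at this
        linarith
      · rw [mem_closedBall_zero_iff]; linarith
  have base : ∀ a b : E, ‖a‖ ≤ 1 → ‖b‖ ≤ 1 → ‖a + t • b‖ ^ r + ‖a - t • b‖ ^ r ≤ 2 * ‖a‖ ^ r + ε * t := by
    intro a b ha hb
    have hn : ‖t • b‖ ≤ t := by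
      rw [norm_smul, Real.norm_of_nonneg ht0.le]; nlinarith
    have h1 := loc a (t • b) ha hn
    have h2 := loc a (-(t • b)) ha (by rwa [norm_neg])
    rw [map_neg, ← sub_eq_add_neg] at h2
    linarith
  intro a b
  by_cases h0 : ‖(a, b)‖ = 0
  · have : (a, b) = 0 := norm_eq_zero.1 h0
    obtain ⟨rfl, rfl⟩ := Prod.mk_eq_zero.1 this
    simp [Real.zero_rpow (show r ≠ 0 by linarith)]
  set s := ‖(a, b)‖ with hs
  have hs0 : 0 < s := lt_of_le_of_ne (norm_nonneg _) (Ne.symm h0)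
  have hsc : ∀ c : E, ‖c‖ ^ r = s ^ r * ‖s⁻¹ • c‖ ^ r := by
    intro c
    rw [← Real.mul_rpow hs0.le (norm_nonneg _), norm_smul, Real.norm_of_nonneg (by positivity)]
    congr 1; field_simp
  have hle : ∀ c : E, ‖c‖ ≤ s → ‖s⁻¹ • c‖ ≤ 1 := by
    intro c hc
    rw [norm_smul, Real.norm_of_nonneg (by positivity), inv_mul_le_one₀ hs0]; exact hc
  have hb := base (s⁻¹ • a) (s⁻¹ • b) (hle a (norm_fst_le (a, b))) (hle b (norm_snd_le (a, b)))
  rw [smul_comm t, ← smul_add, ← smul_sub] at hb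
  have := mul_le_mul_of_nonneg_left hb (Real.rpow_nonneg hs0.le r)
  rw [mul_add, ← hsc, ← hsc, mul_add, mul_left_comm, ← hsc] at this
  have hsr : s ^ r ≤ ‖a‖ ^ r + ‖b‖ ^ r := by
    have ha := Real.rpow_nonneg (norm_nonneg a) r
    have hb := Real.rpow_nonneg (norm_nonneg b) r
    rcases max_choice ‖a‖ ‖b‖ with h | h
    · rw [hs, Prod.norm_def, h]; linarith
    · rw [hs, Prod.norm_def, h]; linarith
  have : s ^ r * (ε * t) ≤ (‖a‖ ^ r + ‖b‖ ^ r) * (ε * t) := by gcongr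
  linarith
end PartH1

section PartH2
variable {𝕜 : Type*} [RCLike 𝕜] {Ω' : Type*} [MeasurableSpace Ω'] {ν : Measure Ω'} {p : ℝ≥0∞} [Fact (1 ≤ p)]

theorem lp_int (hp : 1 < p) (hpt : p ≠ ∞) (f : Lp 𝕜 p ν) : Integrable (fun x => ‖f x‖ ^ p.toReal) ν :=
  (Lp.memLp f).integrable_norm_rpow (by positivity) hpt

theorem lp_norm (hp : 1 < p) (hpt : p ≠ ∞) (f : Lp 𝕜 p ν) :
    ‖f‖ ^ p.toReal = ∫ x, ‖f x‖ ^ p.toReal ∂ν := by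
  have hr : 0 < p.toReal := ENNReal.toReal_pos (by positivity) hpt
  have h0 : 0 ≤ ∫ x, ‖f x‖ ^ p.toReal ∂ν := integral_nonneg (fun x => by positivity)
  rw [Lp.norm_def, (Lp.memLp f).eLpNorm_eq_integral_rpow_norm (by positivity) hpt,
    ENNReal.toReal_ofReal (by positivity), Real.rpow_inv_rpow h0 hr.ne']

theorem lp_r (hp : 1 < p) (hpt : p ≠ ∞) : 1 < p.toReal := by
  rw [← ENNReal.toReal_one]; exact (ENNReal.toReal_lt_toReal (by simp) hpt).2 hp

theorem uc_lp (hp : 1 < p) (hpt : p ≠ ∞) : UC (Lp 𝕜 p ν) := by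
  intro ε hε
  have : ProperSpace 𝕜 := FiniteDimensional.proper_rclike 𝕜 𝕜
  let _ := InnerProductSpace.rclikeToReal 𝕜 𝕜
  have hr := lp_r hp hpt
  set r := p.toReal with hrdef
  obtain ⟨C, hC, hk⟩ := pw_uc (E := 𝕜) r hr (ε ^ r / 4) (by positivity)
  have hεr : 0 < ε ^ r := by positivity
  have hden : 0 < C * r + 1 := by positivity
  refine ⟨min 1 (ε ^ r / (C * r + 1)), by positivity, fun f g hf hg hfg => ?_⟩
  set δ := min 1 (ε ^ r / (C * r + 1)) with hδ
  have hδ1 : δ ≤ 1 := min_le_left _ _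
  have hδ2 : δ * (C * r + 1) ≤ ε ^ r := (le_div_iff₀ hden).1 (min_le_right _ _)
  have hδ0 : 0 < δ := by positivity
  have hfg2 : ‖f - g‖ ^ r ≤ ε ^ r / 4 * (‖f‖ ^ r + ‖g‖ ^ r) + C * ((‖f‖ ^ r + ‖g‖ ^ r) / 2 - (‖f + g‖ / 2) ^ r) := by
    have hI1 : Integrable (fun a => (‖f a‖ ^ p.toReal + ‖g a‖ ^ p.toReal) / 2) ν :=
      ((lp_int hp hpt f).add (lp_int hp hpt g)).div_const 2
    rw [Real.div_rpow (norm_nonneg _) (by norm_num), lp_norm hp hpt, lp_norm hp hpt, lp_norm hp hpt, lp_norm hp hpt,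
      ← integral_add (lp_int hp hpt f) (lp_int hp hpt g), ← integral_const_mul, ← integral_div, ← integral_div,
      ← integral_sub hI1 ((lp_int hp hpt _).div_const _),
      ← integral_const_mul, ← integral_add]
    · refine integral_mono_ae (lp_int hp hpt _) ?_ ?_
      · exact (((lp_int hp hpt f).add (lp_int hp hpt g)).const_mul _).add
          (((((lp_int hp hpt f).add (lp_int hp hpt g)).div_const 2).sub ((lp_int hp hpt _).div_const _)).const_mul C)
      · filter_upwards [Lp.coeFn_sub f g, Lp.coeFn_add f g] with x h1 h2
        rw [h1, h2]
        have := hk (f x) (g x)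
        rw [Real.div_rpow (norm_nonneg _) (by norm_num)] at this
        exact this
    · exact ((lp_int hp hpt f).add (lp_int hp hpt g)).const_mul _
    · exact (((((lp_int hp hpt f).add (lp_int hp hpt g)).div_const 2).sub ((lp_int hp hpt _).div_const _)).const_mul C)
  have hf1 : ‖f‖ ^ r ≤ 1 := Real.rpow_le_one (norm_nonneg _) hf (by linarith)
  have hg1 : ‖g‖ ^ r ≤ 1 := Real.rpow_le_one (norm_nonneg _) hg (by linarith)
  have hb : 1 - r * (δ / 2) ≤ (‖f + g‖ / 2) ^ r := by
    have h1 := one_add_mul_self_le_rpow_one_add (s := -(δ / 2)) (by linarith) hr.le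
    have h2 : (1 + -(δ / 2)) ^ r ≤ (‖f + g‖ / 2) ^ r := Real.rpow_le_rpow (by linarith) (by linarith) (by linarith)
    linarith
  have h3 : C * ((‖f‖ ^ r + ‖g‖ ^ r) / 2 - (‖f + g‖ / 2) ^ r) ≤ C * (r * (δ / 2)) := by gcongr; linarith
  have h4 : ε ^ r / 4 * (‖f‖ ^ r + ‖g‖ ^ r) ≤ ε ^ r / 4 * 2 := by gcongr; linarith
  have h5 : ‖f - g‖ ^ r ≤ ε ^ r := by nlinarith
  exact (Real.rpow_le_rpow_iff (norm_nonneg _) hε.le (by linarith)).1 h5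

theorem smo_lp (hp : 1 < p) (hpt : p ≠ ∞) : Smo 𝕜 (Lp 𝕜 p ν) := by
  intro ε hε
  have hr := lp_r hp hpt
  have key : ∃ t : ℝ, 0 < t ∧ ∀ a b : 𝕜, ‖a + (t : 𝕜) * b‖ ^ p.toReal + ‖a - (t : 𝕜) * b‖ ^ p.toReal
      ≤ 2 * ‖a‖ ^ p.toReal + ε / 2 * t * (‖a‖ ^ p.toReal + ‖b‖ ^ p.toReal) := by
    have : ProperSpace 𝕜 := FiniteDimensional.proper_rclike 𝕜 𝕜
    let _ := InnerProductSpace.rclikeToReal 𝕜 𝕜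
    obtain ⟨t, ht, hk⟩ := pw_smo (E := 𝕜) p.toReal hr (ε / 2) (by positivity)
    exact ⟨t, ht, hk⟩
  set r := p.toReal with hrdef
  obtain ⟨t, ht, hk⟩ := key
  refine ⟨t, ht, fun f g hf hg => ?_⟩
  have h1 : ‖f + (t : 𝕜) • g‖ ^ r + ‖f - (t : 𝕜) • g‖ ^ r ≤ 2 * ‖f‖ ^ r + ε / 2 * t * (‖f‖ ^ r + ‖g‖ ^ r) := by
    rw [lp_norm hp hpt, lp_norm hp hpt, lp_norm hp hpt, lp_norm hp hpt,
      ← integral_add (lp_int hp hpt f) (lp_int hp hpt g), ← integral_const_mul, ← integral_const_mul,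
      ← integral_add (lp_int hp hpt _) (lp_int hp hpt _), ← integral_add]
    · refine integral_mono_ae ((lp_int hp hpt _).add (lp_int hp hpt _)) ?_ ?_
      · exact ((lp_int hp hpt _).const_mul _).add (((lp_int hp hpt f).add (lp_int hp hpt g)).const_mul _)
      · filter_upwards [Lp.coeFn_sub f ((t : 𝕜) • g), Lp.coeFn_add f ((t : 𝕜) • g), Lp.coeFn_smul (t : 𝕜) g] with x h1 h2 h3
        rw [h1, h2, Pi.sub_apply, Pi.add_apply, h3]
        exact hk (f x) (g x)
    · exact (lp_int hp hpt _).const_mul _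
    · exact ((lp_int hp hpt f).add (lp_int hp hpt g)).const_mul _
  have hf1 : ‖f‖ ^ r ≤ 1 := Real.rpow_le_one (norm_nonneg _) hf (by linarith)
  have hg1 : ‖g‖ ^ r ≤ 1 := Real.rpow_le_one (norm_nonneg _) hg (by linarith)
  set u := ‖f + (t : 𝕜) • g‖ with hu
  set v := ‖f - (t : 𝕜) • g‖ with hv
  have hu0 : 0 ≤ u := norm_nonneg _
  have hv0 : 0 ≤ v := norm_nonneg _
  have h2 := pw_nonneg r hr u v
  rw [Real.norm_of_nonneg hu0, Real.norm_of_nonneg hv0, Real.norm_of_nonneg (by positivity)] at h2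
  have h4 : ε / 2 * t * (‖f‖ ^ r + ‖g‖ ^ r) ≤ ε / 2 * t * 2 := by gcongr; linarith
  have h5 : ((u + v) / 2) ^ r ≤ 1 + ε / 2 * t := by linarith
  have h6 : 1 + ε / 2 * t ≤ (1 + ε / 2 * t) ^ r := by
    have : 0 < ε / 2 * t := by positivity
    exact Real.self_le_rpow_of_one_le (by linarith) hr.le
  have h7 := (Real.rpow_le_rpow_iff (by positivity) (by positivity) (by linarith)).1 (h5.trans h6)
  linarith
end PartH2

section PartI
open ZeroAtInfty
variable {𝕜 : Type*} [RCLike 𝕜]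

theorem c0_norm_le (x : C₀(ℕ, 𝕜)) (C : ℝ) (hC : 0 ≤ C) : ‖x‖ ≤ C ↔ ∀ i, ‖x i‖ ≤ C := by
  rw [← ZeroAtInftyContinuousMap.norm_toBCF_eq_norm, BoundedContinuousFunction.norm_le hC]
  rfl

theorem c0_coord (x : C₀(ℕ, 𝕜)) (i : ℕ) : ‖x i‖ ≤ ‖x‖ := (c0_norm_le x _ (norm_nonneg _)).1 le_rfl i

theorem c0_finite (x : C₀(ℕ, 𝕜)) (c : ℝ) (hc : 0 < c) : {i | c < ‖x i‖}.Finite := by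
  have h := x.zero_at_infty'
  rw [Filter.cocompact_eq_cofinite] at h
  have := (h.norm).eventually (gt_mem_nhds (by simpa using hc : ‖(0 : 𝕜)‖ < c))
  refine (Filter.eventually_cofinite.1 this).subset ?_
  intro i hi
  exact not_lt.2 (le_of_lt hi)

def c0mul (d : ℕ → 𝕜) (hd : ∀ i, ‖d i‖ ≤ 1) : C₀(ℕ, 𝕜) →L[𝕜] C₀(ℕ, 𝕜) :=
  LinearMap.mkContinuous
    { toFun := fun x =>
        { toFun := fun i => d i * x i
          continuous_toFun := continuous_of_discreteTopology
          zero_at_infty' := by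
            have h := x.zero_at_infty'
            refine squeeze_zero_norm (fun i => ?_) (by simpa using h.norm)
            rw [norm_mul]
            exact mul_le_of_le_one_left (norm_nonneg _) (hd i) }
      map_add' := fun x y => by ext i; exact mul_add _ _ _
      map_smul' := fun c x => by ext i; exact mul_left_comm _ _ _ } 1
    (fun x => by
      rw [one_mul, c0_norm_le _ _ (norm_nonneg _)]
      intro i
      change ‖d i * x i‖ ≤ _
      rw [norm_mul]
      exact (mul_le_of_le_one_left (norm_nonneg _) (hd i)).trans (c0_coord x i))

theorem c0mul_apply (d : ℕ → 𝕜) (hd : ∀ i, ‖d i‖ ≤ 1) (x : C₀(ℕ, 𝕜)) (i : ℕ) :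
    c0mul d hd x i = d i * x i := rfl

theorem c0mul_norm (d : ℕ → 𝕜) (hd : ∀ i, ‖d i‖ ≤ 1) : ‖c0mul d hd‖ ≤ 1 :=
  LinearMap.mkContinuous_norm_le _ zero_le_one _

def c0e (𝕜 : Type*) [RCLike 𝕜] (i : ℕ) : C₀(ℕ, 𝕜) where
  toFun := fun j => if j = i then 1 else 0
  continuous_toFun := continuous_of_discreteTopology
  zero_at_infty' := by
    rw [Filter.cocompact_eq_cofinite, Nat.cofinite_eq_atTop]
    refine tendsto_const_nhds.congr' ?_
    filter_upwards [Filter.eventually_gt_atTop i] with j hj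
    simp [hj.ne']

theorem c0e_apply (i j : ℕ) : c0e 𝕜 i j = if j = i then 1 else 0 := rfl

theorem c0sum_apply (s : Finset ℕ) (a : ℕ → 𝕜) (j : ℕ) :
    (∑ i ∈ s, a i • c0e 𝕜 i) j = if j ∈ s then a j else 0 := by
  induction s using Finset.induction_on with
  | empty => simp
  | insert i s hi ih =>
    rw [Finset.sum_insert hi, ZeroAtInftyContinuousMap.add_apply, ih, ZeroAtInftyContinuousMap.smul_apply, c0e_apply]
    by_cases h : j = i
    · subst h; simp [hi]
    · simp [h]

theorem c0_osc {Ω : Type*} [MeasurableSpace Ω] {μ : Measure Ω} : Osc 𝕜 C₀(ℕ, 𝕜) μ := by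
  intro φ A hA hAf hA0 ε hε
  obtain ⟨B₁, h1, h2, h3, M, hM, x, hx, h4⟩ := peak φ hA hAf hA0 (ε / 8) (by positivity)
  have hB1f := ne_top_of_le_ne_top hAf (measure_mono h1)
  have hfin := c0_finite x (1 / 2) (by norm_num)
  set s := hfin.toFinset with hs
  obtain ⟨B, k1, k2, k3, k4⟩ := peak_finset φ (c0e 𝕜) s h2 hB1f h3 (ε / (2 * (s.card + 1))) (by positivity)
  have hBf := ne_top_of_le_ne_top hB1f (measure_mono k1)
  refine ⟨B, k1.trans h1, k2, k3, avg φ k2 hBf, osc_of_avg φ ε hε _ ?_⟩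
  have hoff : ∀ (D : Set Ω) (hD : MeasurableSet D) (hDf : μ D ≠ ∞), D ⊆ B → 0 < μ.real D →
      ∀ v : C₀(ℕ, 𝕜), ‖v‖ ≤ 1 → (∀ i ∈ s, v i = 0) → RCLike.re (avg φ hD hDf v) ≤ ε / 4 := by
    intro D hD hDf hDB hD0 v hv hvs
    obtain ⟨a1, a2⟩ := h4 D hD hDf (hDB.trans k1) hD0
    have hn : ‖x + ((1 / 2 : ℝ) : 𝕜) • v‖ ≤ 1 := by
      rw [c0_norm_le _ _ zero_le_one]
      intro i
      rw [ZeroAtInftyContinuousMap.add_apply, ZeroAtInftyContinuousMap.smul_apply]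
      by_cases hi : i ∈ s
      · rw [hvs i hi, smul_zero, add_zero]; exact (c0_coord x i).trans hx
      · have hxi : ‖x i‖ ≤ 1 / 2 := by
          by_contra! hh
          exact hi (by simpa [hs] using hh)
        refine (norm_add_le _ _).trans ?_
        rw [norm_smul, RCLike.norm_ofReal, abs_of_pos (by norm_num)]
        linarith [(c0_coord v i).trans hv]
    have c1 := (RCLike.re_le_norm _).trans ((avg φ hD hDf).le_of_opNorm_le a1 (x + ((1 / 2 : ℝ) : 𝕜) • v))
    rw [map_add, map_smul, map_add, smul_eq_mul, RCLike.re_ofReal_mul] at c1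
    have hM0 : 0 ≤ M := (norm_nonneg _).trans a1
    have : M * ‖x + ((1 / 2 : ℝ) : 𝕜) • v‖ ≤ M := mul_le_of_le_one_right hM0 hn
    linarith
  intro D hD hDf hDB hD0
  apply norm_le_of_re
  intro v hv
  set w := ∑ i ∈ s, v i • c0e 𝕜 i with hw
  have hvw0 : ∀ i ∈ s, (v - w) i = 0 := by
    intro i hi
    rw [ZeroAtInftyContinuousMap.sub_apply, hw, c0sum_apply, if_pos hi, sub_self]
  have hvw1 : ‖v - w‖ ≤ 1 := by
    rw [c0_norm_le _ _ zero_le_one]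
    intro i
    by_cases hi : i ∈ s
    · rw [hvw0 i hi]; simp
    · rw [ZeroAtInftyContinuousMap.sub_apply, hw, c0sum_apply, if_neg hi, sub_zero]
      exact (c0_coord v i).trans hv
  have e1 := hoff D hD hDf hDB hD0 (v - w) hvw1 hvw0
  have e2 := hoff B k2 hBf subset_rfl k3 (-(v - w)) (by rwa [norm_neg])
    (fun i hi => by rw [ZeroAtInftyContinuousMap.neg_apply, hvw0 i hi, neg_zero])
  rw [map_neg, map_neg] at e2
  have e3 : ‖avg φ hD hDf w - avg φ k2 hBf w‖ ≤ ε / 2 := by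
    have : avg φ hD hDf w - avg φ k2 hBf w =
        ∑ i ∈ s, v i • (avg φ hD hDf (c0e 𝕜 i) - avg φ k2 hBf (c0e 𝕜 i)) := by
      rw [hw]
      simp only [map_sum, map_smul, smul_sub, Finset.sum_sub_distrib]
    rw [this]
    calc _ ≤ ∑ i ∈ s, ε / (2 * ((s.card : ℝ) + 1)) := by
          refine norm_sum_le_of_le _ (fun i hi => ?_)
          rw [norm_smul]
          have := k4 i hi D hD hDf hDB hD0 B k2 hBf subset_rfl k3
          calc _ ≤ 1 * (ε / (2 * ((s.card : ℝ) + 1))) :=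
                mul_le_mul ((c0_coord v i).trans hv) this (norm_nonneg _) zero_le_one
            _ = _ := one_mul _
      _ ≤ ε / 2 := by
        rw [Finset.sum_const, nsmul_eq_mul, ← mul_div_assoc, div_le_div_iff₀ (by positivity) (by norm_num)]
        nlinarith
  have e4 := (RCLike.re_le_norm _).trans e3
  have e5 : v = (v - w) + w := by abel
  rw [map_sub] at e4
  rw [sub_apply, map_sub]
  conv_lhs => rw [e5]
  rw [map_add, map_add, map_add, map_add]
  linarith
end PartI

section PartI2
open ZeroAtInfty
variable {𝕜 : Type*} [RCLike 𝕜] {Y : Type*} [NormedAddCommGroup Y] [InnerProductSpace 𝕜 Y]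

theorem c0_small (R : C₀(ℕ, 𝕜) →L[𝕜] Y) (hR : ‖R‖ ≤ 1) (y : Y) (hy : ‖y‖ = 1) (m : C₀(ℕ, 𝕜)) (η : ℝ)
    (hm : 1 - η ≤ RCLike.re (inner 𝕜 y (R m))) (hm1 : ‖m‖ ≤ 1) (c τ : ℝ) (hc : 0 < c) (hτ : 0 ≤ τ)
    (hη : 2 * η ≤ (c * τ) ^ 2) (v : C₀(ℕ, 𝕜)) (hv : ‖v‖ ≤ 1)
    (hs : ∀ i, v i = 0 ∨ ‖m i‖ ≤ 1 - c) : ‖R v‖ ≤ τ := by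
  have hn : ∀ i, ‖m i‖ + ‖(c : 𝕜) • v i‖ ≤ 1 := by
    intro i
    rcases hs i with h | h
    · rw [h, smul_zero, norm_zero, add_zero]; exact (c0_coord m i).trans hm1
    · rw [norm_smul, RCLike.norm_ofReal, abs_of_pos hc]
      nlinarith [(c0_coord v i).trans hv]
  have h := HF R hR y hy m ((c : 𝕜) • v) η hm ?_ ?_
  · rw [map_smul, norm_smul, RCLike.norm_ofReal, abs_of_pos hc] at h
    have := (abs_le_of_sq_le_sq' (h.trans hη) (by positivity)).2
    exact le_of_mul_le_mul_left this hc
  · rw [c0_norm_le _ _ zero_le_one]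
    intro i
    exact (norm_add_le _ _).trans (hn i)
  · rw [c0_norm_le _ _ zero_le_one]
    intro i
    exact (norm_sub_le _ _).trans (hn i)

theorem c0_attain (G : C₀(ℕ, 𝕜) →L[𝕜] Y) (s : Finset ℕ) : ∃ a : ℕ → 𝕜, (∀ i, ‖a i‖ ≤ 1) ∧
    ∀ v : C₀(ℕ, 𝕜), ‖v‖ ≤ 1 → (∀ i, i ∉ s → v i = 0) → ‖G v‖ ≤ ‖G (∑ i ∈ s, a i • c0e 𝕜 i)‖ := by
  have : ProperSpace 𝕜 := FiniteDimensional.proper_rclike 𝕜 𝕜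
  have hK : IsCompact (Set.pi Set.univ (fun _ : ℕ => Metric.closedBall (0 : 𝕜) 1)) :=
    isCompact_univ_pi (fun _ => isCompact_closedBall _ _)
  have hc : Continuous (fun a : ℕ → 𝕜 => ‖G (∑ i ∈ s, a i • c0e 𝕜 i)‖) := by
    refine (G.continuous.comp (continuous_finsetSum _ (fun i _ => ?_))).norm
    exact (continuous_apply i).smul continuous_const
  obtain ⟨a, ha, hmax⟩ := hK.exists_isMaxOn ⟨0, by simp⟩ hc.continuousOn
  refine ⟨a, fun i => by simpa using ha i trivial, fun v hv hvs => ?_⟩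
  have e : v = ∑ i ∈ s, v i • c0e 𝕜 i := by
    ext j
    rw [c0sum_apply]
    by_cases h : j ∈ s
    · rw [if_pos h]
    · rw [if_neg h, hvs j h]
  have := hmax (a := fun i => v i) (fun i _ => by simpa using (c0_coord v i).trans hv)
  conv_lhs => rw [e]
  exact this

theorem mid_coord (p q : 𝕜) (b : ℝ) (hb0 : 0 < b) (hb1 : b ≤ 1) (c1 : ‖p‖ ≤ 1) (c2 : ‖q‖ ≤ 1)
    (h : b ≤ ‖p - q‖) : ‖p + q‖ / 2 ≤ 1 - b ^ 2 / 8 := by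
  have e := parallelogram_law_with_norm 𝕜 p q
  have n1 := norm_nonneg p
  have n2 := norm_nonneg q
  have hbb : b ^ 2 ≤ 1 := pow_le_one₀ hb0.le hb1
  have k0 : b * b ≤ ‖p - q‖ * ‖p - q‖ := mul_self_le_mul_self hb0.le h
  have k3 : ‖p‖ * ‖p‖ ≤ 1 := by nlinarith
  have k4 : ‖q‖ * ‖q‖ ≤ 1 := by nlinarith
  have k1 : ‖p + q‖ ^ 2 ≤ 4 - b ^ 2 := by linarith
  have k2 : ‖p + q‖ ≤ 2 * (1 - b ^ 2 / 8) := by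
    refine (abs_le_of_sq_le_sq' ?_ (by linarith)).2
    nlinarith [sq_nonneg (b ^ 2)]
  linarith

set_option maxHeartbeats 2000000 in
theorem c0_pt : Pt 𝕜 Y C₀(ℕ, 𝕜) := by
  classical
  intro ε hε
  set b := min (1 / 80) (ε / 480) with hb
  have hb0 : 0 < b := by positivity
  have hb1 : b ≤ 1 / 80 := min_le_left _ _
  have hb2 : b ≤ ε / 480 := min_le_right _ _
  refine ⟨b ^ 16 / 2 ^ 19, by positivity, ?_⟩
  set η := b ^ 16 / 2 ^ 19 with hη
  intro y hy R hRc hR x hx hRx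
  have hη0 : 0 < η := by positivity
  have hpow : ∀ n : ℕ, b ^ n ≤ 1 := fun n => pow_le_one₀ hb0.le (by linarith)
  have hη7 : η ≤ b ^ 7 / 512 := by
    rw [hη, div_le_div_iff₀ (by norm_num) (by norm_num), show b ^ 16 = b ^ 7 * b ^ 9 by ring]
    have := mul_le_mul_of_nonneg_left (hpow 9) (by positivity : 0 ≤ b ^ 7)
    linarith [pow_pos hb0 7]
  have hη2 : η ≤ b ^ 2 := by
    have := mul_le_mul_of_nonneg_left (hpow 5) (by positivity : 0 ≤ b ^ 2)
    rw [← pow_add, mul_one] at this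
    norm_num at this
    linarith [pow_pos hb0 7, pow_pos hb0 2]
  -- the finite set
  have hfin := c0_finite x (1 - b) (by linarith)
  set A := hfin.toFinset with hA
  have hmemA : ∀ i, i ∈ A ↔ 1 - b < ‖x i‖ := fun i => by simp [hA]
  have hAne : ∃ i, i ∈ A := by
    by_contra! h
    have : ‖x‖ ≤ 1 - b := (c0_norm_le _ _ (by linarith)).2 (fun i => not_lt.1 (fun hh => h i ((hmemA i).2 hh)))
    linarith
  -- signs
  let s : ℕ → 𝕜 := fun i => (‖x i‖ : 𝕜)⁻¹ * x i
  have hs1 : ∀ i ∈ A, ‖s i‖ = 1 := by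
    intro i hi
    have : 0 < ‖x i‖ := by linarith [(hmemA i).1 hi]
    simp only [s]
    rw [norm_mul, norm_inv, RCLike.norm_ofReal, abs_norm]
    exact inv_mul_cancel₀ this.ne'
  have hsx : ∀ i ∈ A, ‖s i - x i‖ ≤ b := by
    intro i hi
    have h0 := (hmemA i).1 hi
    have h1 : 0 < ‖x i‖ := by linarith
    have : s i - x i = s i * ((1 - ‖x i‖ : ℝ) : 𝕜) := by
      simp only [s]
      have : (‖x i‖ : 𝕜) ≠ 0 := by exact_mod_cast h1.ne'
      push_cast
      field_simp
    rw [this, norm_mul, hs1 i hi, one_mul, RCLike.norm_ofReal, abs_of_nonneg]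
    · linarith
    · linarith [(c0_coord x i)]
  set z : C₀(ℕ, 𝕜) := x + ∑ i ∈ A, (s i - x i) • c0e 𝕜 i with hz
  have hzA : ∀ i ∈ A, z i = s i := by
    intro i hi
    rw [hz, ZeroAtInftyContinuousMap.add_apply, c0sum_apply, if_pos hi]; ring
  have hz1 : ‖z‖ = 1 := by
    apply le_antisymm
    · rw [c0_norm_le _ _ zero_le_one]
      intro i
      by_cases hi : i ∈ A
      · rw [hzA i hi, hs1 i hi]
      · rw [hz, ZeroAtInftyContinuousMap.add_apply, c0sum_apply, if_neg hi, add_zero, ← hx]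
        exact c0_coord x i
    · obtain ⟨i, hi⟩ := hAne
      rw [← hs1 i hi, ← hzA i hi]; exact c0_coord z i
  have hzx : ‖z - x‖ ≤ b := by
    rw [hz, add_sub_cancel_left, c0_norm_le _ _ hb0.le]
    intro i
    rw [c0sum_apply]
    split_ifs with hi
    · exact hsx i hi
    · simpa using hb0.le
  -- R is small off A
  have hoff : ∀ v : C₀(ℕ, 𝕜), ‖v‖ ≤ 1 → (∀ i ∈ A, v i = 0) → ‖R v‖ ≤ b ^ 7 / 512 := by
    intro v hv hvA
    refine c0_small R hR y hy x η hRx.le hx.le b _ hb0 (by positivity) ?_ v hv ?_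
    · rw [hη]; apply le_of_eq; ring
    · intro i
      by_cases hi : i ∈ A
      · exact Or.inl (hvA i hi)
      · exact Or.inr (not_lt.1 (fun h => hi ((hmemA i).2 h)))
  let φ : C₀(ℕ, 𝕜) →L[𝕜] 𝕜 := (innerSL 𝕜 y).comp R
  have hφ : ∀ v, φ v = inner 𝕜 y (R v) := fun v => rfl
  have hφn : ∀ v, ‖φ v‖ ≤ ‖v‖ := by
    intro v
    rw [hφ]
    refine (norm_inner_le_norm _ _).trans ?_
    rw [hy, one_mul]
    exact (R.le_of_opNorm_le hR v).trans (by rw [one_mul])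
  let G : C₀(ℕ, 𝕜) →L[𝕜] Y := R + ((b : 𝕜) • φ).smulRight y
  have hG : ∀ v, G v = R v + ((b : 𝕜) * φ v) • y := fun v => rfl
  have hGc : IsCompactOperator G := hRc.add (compact_rankOne _ y)
  obtain ⟨a₀, ha₀, hmax₀⟩ := c0_attain G A
  set x₀ := ∑ i ∈ A, a₀ i • c0e 𝕜 i with hx₀
  obtain ⟨u, hu, hux⟩ := unimod (φ x₀)
  let a : ℕ → 𝕜 := fun i => u * a₀ i
  have ha : ∀ i, ‖a i‖ ≤ 1 := fun i => by simp only [a]; rw [norm_mul, hu, one_mul]; exact ha₀ i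
  set x₁ := ∑ i ∈ A, a i • c0e 𝕜 i with hx₁
  have hx₁u : x₁ = u • x₀ := by
    rw [hx₁, hx₀, Finset.smul_sum]
    exact Finset.sum_congr rfl (fun i _ => by simp only [a]; rw [mul_smul])
  have hx₁i : ∀ i, x₁ i = if i ∈ A then a i else 0 := fun i => c0sum_apply A a i
  have hx₁1 : ‖x₁‖ ≤ 1 := by
    rw [c0_norm_le _ _ zero_le_one]
    intro i
    rw [hx₁i]
    split_ifs
    · exact ha i
    · simp
  have hφx₁ : φ x₁ = (‖φ x₀‖ : 𝕜) := by rw [hx₁u, map_smul, smul_eq_mul, hux]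
  have hmax : ∀ v : C₀(ℕ, 𝕜), ‖v‖ ≤ 1 → (∀ i, i ∉ A → v i = 0) → ‖G v‖ ≤ ‖G x₁‖ := by
    intro v hv hvA
    rw [hx₁u, map_smul, norm_smul, hu, one_mul]
    exact hmax₀ v hv hvA
  -- φ x₁ is nearly 1
  have hφ1 : 1 - b ^ 6 / 128 ≤ RCLike.re (φ x₁) := by
    set xA := ∑ i ∈ A, x i • c0e 𝕜 i with hxA
    have hxAi : ∀ i, xA i = if i ∈ A then x i else 0 := fun i => c0sum_apply A (fun i => x i) i
    have hxA1 : ‖xA‖ ≤ 1 := by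
      rw [c0_norm_le _ _ zero_le_one]
      intro i
      rw [hxAi]
      split_ifs
      · rw [← hx]; exact c0_coord x i
      · simp
    have hd1 : ‖x - xA‖ ≤ 1 := by
      rw [c0_norm_le _ _ zero_le_one]
      intro i
      rw [ZeroAtInftyContinuousMap.sub_apply, hxAi]
      split_ifs
      · simp
      · rw [sub_zero, ← hx]; exact c0_coord x i
    have hd := hoff (x - xA) hd1 (fun i hi => by
      rw [ZeroAtInftyContinuousMap.sub_apply, hxAi, if_pos hi, sub_self])
    have r1 : RCLike.re (φ (x - xA)) ≤ b ^ 7 / 512 := (re_inner_le y _ hy).trans hd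
    have r2 : 1 - η < RCLike.re (φ x) := hRx
    have r3 : RCLike.re (φ x) = RCLike.re (φ (x - xA)) + RCLike.re (φ xA) := by
      rw [map_sub, map_sub]; ring
    have r4 := hmax xA hxA1 (fun i hi => by rw [hxAi, if_neg hi])
    have r5 : (1 + b) * RCLike.re (φ xA) ≤ ‖G xA‖ := by
      refine le_trans (le_of_eq ?_) (re_inner_le (𝕜 := 𝕜) y (G xA) hy)
      rw [hG, inner_add_right, inner_smul_right, inner_self_eq_norm_sq_to_K, hy, ← hφ]
      rw [map_add]
      simp only [RCLike.ofReal_one, one_pow, mul_one, RCLike.re_ofReal_mul]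
      ring
    have r6 : ‖G x₁‖ ≤ 1 + b * RCLike.re (φ x₁) := by
      rw [hG]
      refine (norm_add_le _ _).trans ?_
      have q1 : ‖R x₁‖ ≤ 1 := (R.le_of_opNorm_le hR x₁).trans (by linarith)
      rw [norm_smul, hy, mul_one, norm_mul, RCLike.norm_ofReal, abs_of_pos hb0, hφx₁, RCLike.norm_ofReal,
        RCLike.ofReal_re, abs_norm]
      linarith
    have r7 : 1 - b ^ 7 / 256 ≤ RCLike.re (φ xA) := by linarith
    have r8 : (1 + b) * (1 - b ^ 7 / 256) ≤ (1 + b) * RCLike.re (φ xA) := by gcongr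
    have r9 : b * (1 - b ^ 6 / 128) ≤ b * RCLike.re (φ x₁) := by
      have : b ^ 7 * b ≤ b ^ 7 := mul_le_of_le_one_right (by positivity) (by linarith)
      nlinarith
    exact le_of_mul_le_mul_left r9 hb0
  -- midpoint
  set m : C₀(ℕ, 𝕜) := ((1 / 2 : ℝ) : 𝕜) • (x₁ + x) with hm
  have hm1 : ‖m‖ ≤ 1 := by
    rw [hm, norm_smul, RCLike.norm_ofReal, abs_of_pos (by norm_num)]
    linarith [norm_add_le x₁ x]
  have hφm : 1 - b ^ 6 / 128 ≤ RCLike.re (inner 𝕜 y (R m)) := by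
    rw [← hφ, hm, map_smul, smul_eq_mul, RCLike.re_ofReal_mul, map_add, map_add]
    have r2 : 1 - η < RCLike.re (φ x) := hRx
    have : b ^ 7 ≤ b ^ 6 := by
      rw [pow_succ]; exact mul_le_of_le_one_right (by positivity) (by linarith)
    linarith
  have hBsmall : ∀ v : C₀(ℕ, 𝕜), ‖v‖ ≤ 1 → (∀ i, v i = 0 ∨ b ≤ ‖x₁ i - x i‖) → ‖R v‖ ≤ b := by
    intro v hv hvB
    refine c0_small R hR y hy m _ hφm hm1 (b ^ 2 / 8) b (by positivity) hb0.le ?_ v hv ?_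
    · apply le_of_eq; ring
    · intro i
      rcases hvB i with h | h
      · exact Or.inl h
      · refine Or.inr ?_
        have c1 := (c0_coord x₁ i).trans hx₁1
        have c2 := (c0_coord x i).trans hx.le
        have e : ‖m i‖ = ‖x₁ i + x i‖ / 2 := by
          rw [hm, ZeroAtInftyContinuousMap.smul_apply, ZeroAtInftyContinuousMap.add_apply, norm_smul,
            RCLike.norm_ofReal, abs_of_pos (by norm_num)]; ring
        rw [e]
        exact mid_coord _ _ b hb0 (by linarith) c1 c2 h
  -- the operator
  let d : ℕ → 𝕜 := fun i => if i ∈ A then a i * (starRingEnd 𝕜) (s i) else 0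
  have hd : ∀ i, ‖d i‖ ≤ 1 := by
    intro i
    simp only [d]
    split_ifs with hi
    · rw [norm_mul, RCLike.norm_conj, hs1 i hi, mul_one]; exact ha i
    · simp
  let T : C₀(ℕ, 𝕜) →L[𝕜] Y := G.comp (c0mul d hd)
  have hTc : IsCompactOperator T := hGc.comp_clm _
  have hDz : c0mul d hd z = x₁ := by
    ext i
    rw [c0mul_apply, hx₁i]
    simp only [d]
    split_ifs with hi
    · rw [hzA i hi, mul_assoc, RCLike.conj_mul, hs1 i hi]; simp
    · rw [zero_mul]
  have hTz : ‖T z‖ = ‖T‖ := by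
    apply le_antisymm
    · simpa [hz1] using T.le_opNorm z
    · have : ‖T z‖ = ‖G x₁‖ := by change ‖G (c0mul d hd z)‖ = _; rw [hDz]
      rw [this]
      refine ContinuousLinearMap.opNorm_le_of_unit_norm (norm_nonneg _) (fun v hv => ?_)
      refine hmax (c0mul d hd v) ?_ ?_
      · exact ((c0mul d hd).le_of_opNorm_le (c0mul_norm d hd) v).trans (by rw [hv, one_mul])
      · intro i hi
        rw [c0mul_apply]
        simp only [d]
        rw [if_neg hi, zero_mul]
  have hd3 : ∀ i ∈ A, ‖x₁ i - x i‖ < b → ‖d i - 1‖ ≤ 2 * b := by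
    intro i hi hlt
    have e1 : d i - 1 = (a i - s i) * (starRingEnd 𝕜) (s i) := by
      have : s i * (starRingEnd 𝕜) (s i) = 1 := by rw [RCLike.mul_conj, hs1 i hi]; simp
      simp only [d]
      rw [if_pos hi, sub_mul, this]
    rw [e1, norm_mul, RCLike.norm_conj, hs1 i hi, mul_one]
    have e2 : a i - s i = (x₁ i - x i) - (s i - x i) := by
      rw [hx₁i, if_pos hi]; ring
    rw [e2]
    refine (norm_sub_le _ _).trans ?_
    linarith [hsx i hi]
  let d1 : ℕ → 𝕜 := fun i => if i ∈ A then 0 else -1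
  let d2 : ℕ → 𝕜 := fun i => if i ∈ A ∧ b ≤ ‖x₁ i - x i‖ then (d i - 1) / 2 else 0
  let d3 : ℕ → 𝕜 := fun i => if i ∈ A ∧ ¬ b ≤ ‖x₁ i - x i‖ then d i - 1 else 0
  have hd1 : ∀ i, ‖d1 i‖ ≤ 1 := by
    intro i
    simp only [d1]
    split_ifs <;> simp
  have hd2 : ∀ i, ‖d2 i‖ ≤ 1 := by
    intro i
    simp only [d2]
    split_ifs
    · rw [norm_div, RCLike.norm_ofNat]
      have := norm_sub_le (d i) 1
      rw [norm_one] at this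
      linarith [hd i]
    · simp
  have hd3n : ∀ i, ‖d3 i‖ ≤ 2 * b := by
    intro i
    simp only [d3]
    split_ifs with h
    · exact hd3 i h.1 (not_le.1 h.2)
    · simpa using hb0.le
  have hd31 : ∀ i, ‖d3 i‖ ≤ 1 := fun i => (hd3n i).trans (by linarith)
  have hdd : ∀ i, d i - 1 = d1 i + 2 * d2 i + d3 i := by
    intro i
    by_cases hi : i ∈ A
    · by_cases h : b ≤ ‖x₁ i - x i‖
      · simp only [d1, d2, d3, hi, h, if_true, and_self, not_true, and_false, if_false]; ring
      · simp only [d1, d2, d3, hi, h, if_true, and_self, and_false, if_false, not_false_iff]; ring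
    · simp only [d, d1, d2, d3, hi, false_and, if_false]; ring
  have hTR : ‖T - R‖ ≤ 8 * b := by
    refine ContinuousLinearMap.opNorm_le_of_unit_norm (by positivity) (fun v hv => ?_)
    have hcn : ∀ (f : ℕ → 𝕜) (hf : ∀ i, ‖f i‖ ≤ 1), ‖c0mul f hf v‖ ≤ 1 := fun f hf =>
      ((c0mul f hf).le_of_opNorm_le (c0mul_norm f hf) v).trans (by rw [hv, one_mul])
    have ew : c0mul d hd v = v + c0mul d1 hd1 v + (2 : 𝕜) • c0mul d2 hd2 v + c0mul d3 hd31 v := by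
      ext i
      simp only [ZeroAtInftyContinuousMap.add_apply, ZeroAtInftyContinuousMap.smul_apply, c0mul_apply, smul_eq_mul]
      linear_combination (v i) * hdd i
    have eT : (T - R) v = R (c0mul d1 hd1 v) + (2 : 𝕜) • R (c0mul d2 hd2 v) + R (c0mul d3 hd31 v)
        + ((b : 𝕜) * φ (c0mul d hd v)) • y := by
      have : (T - R) v = R (c0mul d hd v) + ((b : 𝕜) * φ (c0mul d hd v)) • y - R v := rfl
      rw [this]
      have : R (c0mul d hd v) = R v + R (c0mul d1 hd1 v) + (2 : 𝕜) • R (c0mul d2 hd2 v) + R (c0mul d3 hd31 v) := by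
        rw [ew]; simp only [map_add, map_smul]
      rw [this]; abel
    have q1 : ‖R (c0mul d1 hd1 v)‖ ≤ b ^ 7 / 512 := by
      refine hoff _ (hcn _ _) (fun i hi => ?_)
      rw [c0mul_apply]; simp only [d1]; rw [if_pos hi, zero_mul]
    have q2 : ‖R (c0mul d2 hd2 v)‖ ≤ b := by
      refine hBsmall _ (hcn _ _) (fun i => ?_)
      by_cases h : b ≤ ‖x₁ i - x i‖
      · exact Or.inr h
      · refine Or.inl ?_
        rw [c0mul_apply]; simp only [d2]; rw [if_neg (fun hh => h hh.2), zero_mul]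
    have q3 : ‖R (c0mul d3 hd31 v)‖ ≤ 2 * b := by
      refine (R.le_of_opNorm_le hR _).trans ?_
      rw [one_mul, c0_norm_le _ _ (by positivity)]
      intro i
      rw [c0mul_apply, norm_mul]
      calc _ ≤ 2 * b * 1 := mul_le_mul (hd3n i) ((c0_coord v i).trans hv.le) (norm_nonneg _) (by positivity)
        _ = _ := mul_one _
    have q4 : ‖((b : 𝕜) * φ (c0mul d hd v)) • y‖ ≤ b := by
      rw [norm_smul, hy, mul_one, norm_mul, RCLike.norm_ofReal, abs_of_pos hb0]
      exact mul_le_of_le_one_right hb0.le ((hφn _).trans (hcn _ _))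
    have q5 : ‖(2 : 𝕜) • R (c0mul d2 hd2 v)‖ ≤ 2 * b := by
      rw [norm_smul, RCLike.norm_ofNat]; linarith
    rw [eT]
    have q6 : b ^ 7 ≤ b := by
      have := mul_le_mul_of_nonneg_left (hpow 6) hb0.le
      rw [mul_one] at this
      calc b ^ 7 = b * b ^ 6 := by ring
        _ ≤ b := this
    have t1 := norm_add_le (R (c0mul d1 hd1 v) + (2 : 𝕜) • R (c0mul d2 hd2 v) + R (c0mul d3 hd31 v))
      (((b : 𝕜) * φ (c0mul d hd v)) • y)
    have t2 := norm_add_le (R (c0mul d1 hd1 v) + (2 : 𝕜) • R (c0mul d2 hd2 v)) (R (c0mul d3 hd31 v))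
    have t3 := norm_add_le (R (c0mul d1 hd1 v)) ((2 : 𝕜) • R (c0mul d2 hd2 v))
    linarith
  obtain ⟨S, hS1, hS2, hS3, hS4⟩ := fin_lemma R T y x z (8 * b) hR hy hz1 hx hTc hTz hTR (by linarith) (by linarith)
    (by nlinarith)
  exact ⟨S, z, hS1, hS2, hz1, hS3, hS4.trans (by linarith), hzx.trans (by linarith)⟩
end PartI2

/-- If Y is a Hilbert space, then (L₁(μ, c₀), Y) and (L₁(μ, L_p(ν)), Y) (1 < p < ∞)
have the BPBp for compact operators. -/
theorem bpbp_compact_L1_c0_Lp_hilbert {𝕜 : Type*} [RCLike 𝕜] {Y : Type*}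
    [NormedAddCommGroup Y] [InnerProductSpace 𝕜 Y] [CompleteSpace Y]
    {Ω : Type*} [MeasurableSpace Ω] (μ : MeasureTheory.Measure Ω) :
    BPBpCompact 𝕜 (MeasureTheory.Lp (ZeroAtInftyContinuousMap ℕ 𝕜) 1 μ) Y ∧
    ∀ (Ω' : Type) (_ : MeasurableSpace Ω') (ν : MeasureTheory.Measure Ω') (p : ℝ≥0∞),
      ∀ (hp : 1 < p), p ≠ ⊤ →
        haveI : Fact (1 ≤ p) := ⟨hp.le⟩
        BPBpCompact 𝕜 (MeasureTheory.Lp (MeasureTheory.Lp 𝕜 p ν) 1 μ) Y := by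
  refine ⟨bpbp_of c0_osc c0_pt, fun Ω' _ ν p hp hpt => ?_⟩
  have : Fact (1 ≤ p) := ⟨hp.le⟩
  exact bpbp_of (osc_of_smo (smo_lp hp hpt)) (pt_of_uc (uc_lp hp hpt))
end
end

section
/- Let X and Y be Banach spaces and let 1 ≤ p < ∞. If the pair (X, ℓ_p(Y)) has the BPBp for compact operators, then the pair (X, L_p(μ, Y)) has the BPBp for compact operators for every measure space (Ω, Σ, μ) such that L₁(μ) is infinite-dimensional. -/
open MeasureTheory

noncomputable section

open scoped ENNReal


lemma bpb_exists_disjoint {𝕜 : Type*} [RCLike 𝕜] {Ω : Type*} [MeasurableSpace Ω] (μ : Measure Ω)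
    (hμ : ¬FiniteDimensional 𝕜 (Lp 𝕜 1 μ)) :
    ∃ B : ℕ → Set Ω, (∀ n, MeasurableSet (B n)) ∧ Pairwise (Function.onFun Disjoint B) ∧
      (∀ n, 0 < μ (B n)) ∧ ∀ n, μ (B n) < ∞ := by
  obtain ⟨f, hf⟩ : ∃ f : ℕ → Lp 𝕜 1 μ, LinearIndependent 𝕜 f := by
    let b := Module.Basis.ofVectorSpace 𝕜 (Lp 𝕜 1 μ)
    have : Infinite (Module.Basis.ofVectorSpaceIndex 𝕜 (Lp 𝕜 1 μ)) := by
      by_contra hfin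
      rw [not_infinite_iff_finite] at hfin
      exact hμ (Module.Finite.of_basis b)
    exact ⟨b ∘ Infinite.natEmbedding _, b.linearIndependent.comp _ (Infinite.natEmbedding _).injective⟩
  let g : Ω → (ℕ → 𝕜) := fun ω n => f n ω
  have hgm : Measurable g := measurable_pi_lambda _ fun n => (Lp.stronglyMeasurable (f n)).measurable
  set ν := μ.map g with hν
  have hS : ν ν.supportᶜ = 0 := Measure.measure_compl_support
  have hSm : MeasurableSet ν.support := Measure.isClosed_support.measurableSet
  have hSμ : ∀ᵐ ω ∂μ, g ω ∈ ν.support := by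
    rw [hν, Measure.map_apply hgm hSm.compl] at hS
    exact hS
  have hSinf : ν.support.Infinite := by
    intro hfin
    have := hfin.fintype
    have hli : LinearIndependent 𝕜 (fun n : ℕ => (fun z : ν.support => (z : ℕ → 𝕜) n)) := by
      rw [linearIndependent_iff'] at hf ⊢
      intro s c hc
      apply hf s c
      have h1 : (∑ n ∈ s, c n • f n : Lp 𝕜 1 μ) =ᵐ[μ] fun ω => ∑ n ∈ s, c n * f n ω := by
        refine (Lp.coeFn_finsetSum s _).trans ?_
        have : ∀ᵐ ω ∂μ, ∀ n, (c n • f n : Lp 𝕜 1 μ) ω = c n * f n ω := by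
          rw [ae_all_iff]
          intro n
          filter_upwards [Lp.coeFn_smul (c n) (f n)] with ω h
          simpa using h
        filter_upwards [this] with ω h
        simp [h]
      apply Lp.ext
      refine h1.trans ?_
      filter_upwards [hSμ, Lp.coeFn_zero 𝕜 1 μ] with ω h2 h3
      rw [h3]
      have := congrFun hc ⟨g ω, h2⟩
      simpa [g] using this
    have := hli.finite
    exact not_finite ℕ
  have hT : (ν.support \ {0}).Infinite := hSinf.sdiff (Set.finite_singleton 0)
  set T := ν.support \ {0} with hTdef
  have hTm : MeasurableSet T := hSm.diff (measurableSet_singleton 0)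
  have := hT.to_subtype
  obtain ⟨U, hU1, hU2, hU3⟩ := exists_seq_infinite_isOpen_pairwise_disjoint T
  choose O hO1 hO2 using fun n => isOpen_induced_iff.1 (hU2 n)
  let D : ℕ → Set Ω := fun n => g ⁻¹' (O n ∩ T)
  have hDm : ∀ n, MeasurableSet (D n) := fun n => hgm ((hO1 n).measurableSet.inter hTm)
  have hDd : Pairwise (Function.onFun Disjoint D) := by
    intro i j hij
    rw [Function.onFun, Set.disjoint_left]
    intro ω hi hj
    have h1 : (⟨g ω, hi.2⟩ : T) ∈ U i := by rw [← hO2]; exact hi.1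
    have h2 : (⟨g ω, hi.2⟩ : T) ∈ U j := by rw [← hO2]; exact hj.1
    exact Set.disjoint_left.1 (hU3 hij) h1 h2
  have hDpos : ∀ n, μ (D n) ≠ 0 := by
    intro n h0
    obtain ⟨x, hx⟩ := (hU1 n).nonempty
    have hxO : (x : ℕ → 𝕜) ∈ O n := by rw [← hO2] at hx; exact hx
    have hpos := (Measure.mem_support_iff_forall _).1 x.2.1 (O n \ {0})
      (((hO1 n).sdiff isClosed_singleton).mem_nhds ⟨hxO, x.2.2⟩)
    have h1 : ν (O n \ {0}) ≤ ν (O n ∩ T) + ν ν.supportᶜ := by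
      refine (measure_mono ?_).trans (measure_union_le _ _)
      intro z hz
      by_cases hzS : z ∈ ν.support
      · exact Or.inl ⟨hz.1, hzS, hz.2⟩
      · exact Or.inr hzS
    rw [hS, add_zero, hν, Measure.map_apply hgm ((hO1 n).measurableSet.inter hTm)] at h1
    rw [hν] at hpos
    exact absurd (hpos.trans_le h1) (by rw [h0]; exact lt_irrefl _)
  have key : ∀ n, ∃ mk : ℕ × ℕ, μ (D n ∩ {ω | 1 / ((mk.2 : ℝ) + 1) < ‖f mk.1 ω‖}) ≠ 0 := by
    intro n
    by_contra! hcon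
    apply hDpos n
    refine measure_mono_null ?_ (measure_iUnion_null hcon)
    intro ω hω
    have h0 : g ω ≠ 0 := hω.2.2
    obtain ⟨m, hm⟩ := Function.ne_iff.1 h0
    obtain ⟨k, hk⟩ := exists_nat_one_div_lt (norm_pos_iff.2 hm)
    exact Set.mem_iUnion.2 ⟨(m, k), hω, hk⟩
  choose mk hmk using key
  refine ⟨fun n => D n ∩ {ω | 1 / (((mk n).2 : ℝ) + 1) < ‖f (mk n).1 ω‖}, ?_, ?_, ?_, ?_⟩
  · intro n
    exact (hDm n).inter (measurableSet_lt measurable_const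
      (Lp.stronglyMeasurable _).measurable.norm)
  · intro i j hij
    exact (hDd hij).mono Set.inter_subset_left Set.inter_subset_left
  · intro n
    exact pos_iff_ne_zero.2 (hmk n)
  · intro n
    exact (measure_mono Set.inter_subset_right).trans_lt
      ((L1.integrable_coeFn (f (mk n).1)).measure_norm_gt_lt_top (by positivity))

instance bpbMS : MeasurableSpace (Option ℕ) := ⊤

instance bpbDMS : DiscreteMeasurableSpace (Option ℕ) := ⟨fun _ => trivial⟩

section JQ
variable {𝕜 : Type*} [RCLike 𝕜] {Y : Type*}
    [NormedAddCommGroup Y] [NormedSpace 𝕜 Y] [NormedSpace ℝ Y] [SMulCommClass ℝ 𝕜 Y]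
    (p : ℝ≥0∞) [Fact (1 ≤ p)]
    {Ω : Type*} [MeasurableSpace Ω] (μ : Measure Ω) (idx : Ω → Option ℕ)

/-- pointwise version of the embedding -/
def bpbJ (y : ℕ → Y) : Option ℕ → Y
  | none => 0
  | some n => (μ.real (idx ⁻¹' {some n}) ^ (-(1 / p.toReal))) • y n

/-- pointwise version of the projection -/
def bpbQ (f : Ω → Y) (n : ℕ) : Y :=
  (μ.real (idx ⁻¹' {some n}) ^ (1 / p.toReal - 1)) • ∫ ω in idx ⁻¹' {some n}, f ω ∂μ

lemma bpbJ_lintegral (hp : p ≠ ⊤) (hidx : Measurable idx) (hpos : ∀ n, 0 < μ (idx ⁻¹' {some n}))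
    (hfin : ∀ n, μ (idx ⁻¹' {some n}) < ∞) (y : ℕ → Y) :
    ∫⁻ ω, ‖bpbJ p μ idx y (idx ω)‖ₑ ^ p.toReal ∂μ = ∑' n, ‖y n‖ₑ ^ p.toReal := by
  have hq : 0 < p.toReal := ENNReal.toReal_pos (zero_lt_one.trans_le Fact.out).ne' hp
  rw [← lintegral_map (μ := μ) (f := fun o => ‖bpbJ p μ idx y o‖ₑ ^ p.toReal) (g := idx)
    (measurable_of_countable _) hidx, lintegral_countable']
  rw [← Function.Injective.tsum_eq (Option.some_injective ℕ)]
  · congr 1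
    ext n
    rw [Measure.map_apply hidx (measurableSet_singleton _)]
    have ha : 0 < μ.real (idx ⁻¹' {some n}) := ENNReal.toReal_pos (hpos n).ne' (hfin n).ne
    have h1 : μ (idx ⁻¹' {some n}) = ENNReal.ofReal (μ.real (idx ⁻¹' {some n})) :=
      (ENNReal.ofReal_toReal (hfin n).ne).symm
    set a := μ.real (idx ⁻¹' {some n}) with hadef
    have h2 : bpbJ p μ idx y (some n) = (a ^ (-(1 / p.toReal))) • y n := rfl
    rw [h2, h1, enorm_smul, Real.enorm_of_nonneg (by positivity),
      ENNReal.mul_rpow_of_nonneg _ _ hq.le, ENNReal.ofReal_rpow_of_nonneg (by positivity) hq.le,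
      ← Real.rpow_mul ha.le]
    have h3 : -(1 / p.toReal) * p.toReal = -1 := by field_simp
    rw [h3, mul_right_comm, ← ENNReal.ofReal_mul (by positivity), Real.rpow_neg_one,
      inv_mul_cancel₀ ha.ne']
    simp
  · intro o ho
    cases o with
    | none => simp [bpbJ, hq] at ho
    | some n => exact ⟨n, rfl⟩

lemma bpbQ_enorm_le (hp : p ≠ ⊤) (hpos : ∀ n, 0 < μ (idx ⁻¹' {some n}))
    (hfin : ∀ n, μ (idx ⁻¹' {some n}) < ∞) (f : Ω → Y) (hf : AEStronglyMeasurable f μ) (n : ℕ) :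
    ‖bpbQ p μ idx f n‖ₑ ^ p.toReal ≤ ∫⁻ ω in idx ⁻¹' {some n}, ‖f ω‖ₑ ^ p.toReal ∂μ := by
  have h1p : 1 ≤ p := Fact.out
  have hp0 : p ≠ 0 := (zero_lt_one.trans_le h1p).ne'
  have hq : 0 < p.toReal := ENNReal.toReal_pos hp0 hp
  have ha : 0 < μ.real (idx ⁻¹' {some n}) := ENNReal.toReal_pos (hpos n).ne' (hfin n).ne
  have h1 : μ (idx ⁻¹' {some n}) = ENNReal.ofReal (μ.real (idx ⁻¹' {some n})) :=
      (ENNReal.ofReal_toReal (hfin n).ne).symm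
  have h2 : ‖∫ ω in idx ⁻¹' {some n}, f ω ∂μ‖ₑ ≤
      eLpNorm f p (μ.restrict (idx ⁻¹' {some n})) * μ (idx ⁻¹' {some n}) ^ (1 - 1 / p.toReal) := by
    refine (enorm_integral_le_lintegral_enorm _).trans ?_
    rw [← eLpNorm_one_eq_lintegral_enorm]
    simpa using eLpNorm_le_eLpNorm_mul_rpow_measure_univ h1p
      (hf.restrict (s := idx ⁻¹' {some n}))
  have h3 : ‖bpbQ p μ idx f n‖ₑ ≤ eLpNorm f p (μ.restrict (idx ⁻¹' {some n})) := by
    rw [bpbQ, enorm_smul, Real.enorm_of_nonneg (by positivity)]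
    refine (mul_le_mul_right h2 _).trans ?_
    rw [h1, ENNReal.ofReal_rpow_of_pos ha, mul_left_comm, ← ENNReal.ofReal_mul (by positivity),
      ← Real.rpow_add ha]
    simp
  refine (ENNReal.rpow_le_rpow h3 hq.le).trans ?_
  rw [eLpNorm_eq_lintegral_rpow_enorm_toReal hp0 hp, ← ENNReal.rpow_mul]
  simp [hq.ne']

lemma bpbQ_sum_le (hp : p ≠ ⊤) (hidx : Measurable idx) (hpos : ∀ n, 0 < μ (idx ⁻¹' {some n}))
    (hfin : ∀ n, μ (idx ⁻¹' {some n}) < ∞) (f : Lp Y p μ) (s : Finset ℕ) :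
    ∑ n ∈ s, ‖bpbQ p μ idx f n‖ ^ p.toReal ≤ ‖f‖ ^ p.toReal := by
  have h1p : 1 ≤ p := Fact.out
  have hp0 : p ≠ 0 := (zero_lt_one.trans_le h1p).ne'
  have hq : 0 < p.toReal := ENNReal.toReal_pos hp0 hp
  have h1 : ∑ n ∈ s, ‖bpbQ p μ idx f n‖ₑ ^ p.toReal ≤ ‖f‖ₑ ^ p.toReal := by
    refine (Finset.sum_le_sum fun n _ => bpbQ_enorm_le p μ idx hp hpos hfin f
      (Lp.aestronglyMeasurable f) n).trans ?_
    rw [← lintegral_biUnion_finset]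
    · refine (setLIntegral_le_lintegral _ _).trans ?_
      rw [Lp.enorm_def, eLpNorm_eq_lintegral_rpow_enorm_toReal hp0 hp, ← ENNReal.rpow_mul]
      simp [hq.ne']
    · intro i _ j _ hij
      rw [Function.onFun, Set.disjoint_left]
      intro ω hi hj
      simp only [Set.mem_preimage, Set.mem_singleton_iff] at hi hj
      exact hij (Option.some_injective _ (hi.symm.trans hj))
    · intro n _
      exact hidx (measurableSet_singleton _)
  simp only [← ofReal_norm, ENNReal.ofReal_rpow_of_nonneg (norm_nonneg _) hq.le] at h1
  rw [← ENNReal.ofReal_sum_of_nonneg (fun _ _ => by positivity)] at h1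
  exact (ENNReal.ofReal_le_ofReal_iff (by positivity)).1 h1

lemma bpb_exists_JQ [CompleteSpace Y] (hp : p ≠ ⊤) (hidx : Measurable idx) (hpos : ∀ n, 0 < μ (idx ⁻¹' {some n}))
    (hfin : ∀ n, μ (idx ⁻¹' {some n}) < ∞) :
    ∃ (J : lp (fun _ : ℕ => Y) p →L[𝕜] Lp Y p μ) (Q : Lp Y p μ →L[𝕜] lp (fun _ : ℕ => Y) p),
      (∀ y, ‖J y‖ = ‖y‖) ∧ (∀ f, ‖Q f‖ ≤ ‖f‖) ∧
      ∀ f : Lp Y p μ, (∃ h : Option ℕ → Y, h none = 0 ∧ f =ᵐ[μ] h ∘ idx) → J (Q f) = f := by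
  have h1p : 1 ≤ p := Fact.out
  have hp0 : p ≠ 0 := (zero_lt_one.trans_le h1p).ne'
  have hq : 0 < p.toReal := ENNReal.toReal_pos hp0 hp
  have hJn : ∀ y : lp (fun _ : ℕ => Y) p,
      eLpNorm (fun ω => bpbJ p μ idx y (idx ω)) p μ = ENNReal.ofReal ‖y‖ := by
    intro y
    have hs : Summable fun n => ‖y n‖ ^ p.toReal := (lp.memℓp y).summable hq
    rw [eLpNorm_eq_lintegral_rpow_enorm_toReal hp0 hp, bpbJ_lintegral p μ idx hp hidx hpos hfin]
    simp only [← ofReal_norm, ENNReal.ofReal_rpow_of_nonneg (norm_nonneg _) hq.le]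
    rw [← ENNReal.ofReal_tsum_of_nonneg (fun _ => by positivity) hs, ← lp.norm_rpow_eq_tsum hq,
      ENNReal.ofReal_rpow_of_nonneg (by positivity) (by positivity), ← Real.rpow_mul (by positivity)]
    simp [hq.ne']
  have hJm : ∀ y : lp (fun _ : ℕ => Y) p, MemLp (fun ω => bpbJ p μ idx y (idx ω)) p μ := by
    intro y
    refine ⟨?_, by rw [hJn]; exact ENNReal.ofReal_lt_top⟩
    exact (StronglyMeasurable.of_discrete (f := bpbJ p μ idx (y : ℕ → Y))).comp_measurable hidx
      |>.aestronglyMeasurable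
  let J0 : lp (fun _ : ℕ => Y) p →ₗ[𝕜] Lp Y p μ :=
    { toFun := fun y => (hJm y).toLp
      map_add' := by
        intro y z
        rw [← MemLp.toLp_add]
        apply MemLp.toLp_congr
        refine Filter.Eventually.of_forall fun ω => ?_
        show bpbJ p μ idx ((y : ℕ → Y) + (z : ℕ → Y)) (idx ω) =
          bpbJ p μ idx (y : ℕ → Y) (idx ω) + bpbJ p μ idx (z : ℕ → Y) (idx ω)
        cases idx ω <;> simp [bpbJ]
      map_smul' := by
        intro c y
        rw [RingHom.id_apply, ← MemLp.toLp_const_smul]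
        apply MemLp.toLp_congr
        refine Filter.Eventually.of_forall fun ω => ?_
        show bpbJ p μ idx (c • (y : ℕ → Y)) (idx ω) = c • bpbJ p μ idx (y : ℕ → Y) (idx ω)
        cases idx ω with
        | none => simp [bpbJ]
        | some n => exact smul_comm _ c (y n) }
  have hJ0 : ∀ y, ‖J0 y‖ = ‖y‖ := by
    intro y
    show ‖(hJm y).toLp‖ = _
    rw [Lp.norm_toLp, hJn, ENNReal.toReal_ofReal (norm_nonneg _)]
  have hint : ∀ (f : Lp Y p μ) n, IntegrableOn f (idx ⁻¹' {some n}) μ := fun f n =>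
    integrableOn_Lp_of_measure_ne_top f h1p (hfin n).ne
  let Q0 : Lp Y p μ →ₗ[𝕜] lp (fun _ : ℕ => Y) p :=
    { toFun := fun f => ⟨bpbQ p μ idx f, memℓp_gen' (bpbQ_sum_le p μ idx hp hidx hpos hfin f)⟩
      map_add' := by
        intro f g
        ext n
        show bpbQ p μ idx (f + g : Lp Y p μ) n = bpbQ p μ idx f n + bpbQ p μ idx g n
        rw [bpbQ, integral_congr_ae (ae_restrict_of_ae (Lp.coeFn_add f g))]
        simp only [Pi.add_apply]
        rw [integral_add (hint f n) (hint g n), smul_add]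
        rfl
      map_smul' := by
        intro c f
        ext n
        show bpbQ p μ idx (c • f : Lp Y p μ) n = c • bpbQ p μ idx f n
        rw [bpbQ, integral_congr_ae (ae_restrict_of_ae (Lp.coeFn_smul c f))]
        simp only [Pi.smul_apply]
        rw [integral_smul, smul_comm]
        rfl }
  refine ⟨J0.mkContinuous 1 (by simp [hJ0]), Q0.mkContinuous 1 ?_, hJ0, ?_, ?_⟩
  · intro f
    rw [one_mul]
    exact lp.norm_le_of_forall_sum_le hq (norm_nonneg f) (bpbQ_sum_le p μ idx hp hidx hpos hfin f)
  · intro f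
    exact lp.norm_le_of_forall_sum_le hq (norm_nonneg f) (bpbQ_sum_le p μ idx hp hidx hpos hfin f)
  · rintro f ⟨h, h0, hf⟩
    show (hJm (Q0 f)).toLp = f
    apply Lp.ext
    refine (MemLp.coeFn_toLp _).trans (Filter.EventuallyEq.trans ?_ hf.symm)
    refine Filter.Eventually.of_forall fun ω => ?_
    simp only [Function.comp]
    cases ho : idx ω with
    | none => simp [bpbJ, h0]
    | some n =>
      have ha : 0 < μ.real (idx ⁻¹' {some n}) := ENNReal.toReal_pos (hpos n).ne' (hfin n).ne
      show (μ.real (idx ⁻¹' {some n}) ^ (-(1 / p.toReal))) • bpbQ p μ idx f n = _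
      have : ∫ ω in idx ⁻¹' {some n}, f ω ∂μ = μ.real (idx ⁻¹' {some n}) • h (some n) := by
        rw [integral_congr_ae (ae_restrict_of_ae hf), ← setIntegral_const]
        refine setIntegral_congr_fun (hidx (measurableSet_singleton _)) ?_
        intro ω hω
        simp only [Set.mem_preimage, Set.mem_singleton_iff] at hω
        simp [hω]
      rw [bpbQ, this, smul_smul, smul_smul, ← Real.rpow_add ha]
      have : -(1 / p.toReal) + (1 / p.toReal - 1) = -1 := by ring
      rw [this, Real.rpow_neg_one, inv_mul_cancel₀ ha.ne', one_smul]
end JQ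

lemma bpb_exists_idx {Ω : Type*} [MeasurableSpace Ω] {κ : Type*} (e : κ ≃ ℕ) (A : κ → Set Ω)
    (hA : ∀ k, MeasurableSet (A k)) (hd : Pairwise (Function.onFun Disjoint A)) :
    ∃ idx : Ω → Option ℕ, Measurable idx ∧ ∀ k ω, idx ω = some (e k) ↔ ω ∈ A k := by
  classical
  have : Countable κ := e.injective.countable
  let idx : Ω → Option ℕ := fun ω => if h : ∃ k, ω ∈ A k then some (e h.choose) else none
  have h1 : ∀ k ω, idx ω = some (e k) ↔ ω ∈ A k := by
    intro k ω
    by_cases h : ∃ k, ω ∈ A k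
    · have h2 : idx ω = some (e h.choose) := dif_pos h
      rw [h2]
      constructor
      · intro h3
        have := e.injective (Option.some_injective _ h3)
        rw [← this]; exact h.choose_spec
      · intro h3
        by_contra hne
        have : h.choose ≠ k := fun h4 => hne (by rw [h4])
        exact Set.disjoint_left.1 (hd this) h.choose_spec h3
    · have h2 : idx ω = none := dif_neg h
      rw [h2]
      simp only [reduceCtorEq, false_iff]
      exact fun h3 => h ⟨k, h3⟩
  refine ⟨idx, ?_, h1⟩
  have hs : ∀ n, MeasurableSet (idx ⁻¹' {some n}) := by
    intro n
    convert hA (e.symm n) using 1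
    ext ω
    have := h1 (e.symm n) ω
    simpa using this
  apply measurable_to_countable'
  intro o
  cases o with
  | some n => exact hs n
  | none =>
    convert (MeasurableSet.iUnion hs).compl using 1
    ext ω
    simp only [Set.mem_preimage, Set.mem_singleton_iff, Set.mem_compl_iff, Set.mem_iUnion, not_exists]
    cases idx ω <;> simp

lemma bpb_approx {Y : Type*} [NormedAddCommGroup Y] (p : ℝ≥0∞) [Fact (1 ≤ p)] (hp : p ≠ ⊤)
    {Ω : Type*} [MeasurableSpace Ω] (μ : Measure Ω) (B : ℕ → Set Ω)
    (hBm : ∀ n, MeasurableSet (B n)) (hBd : Pairwise (Function.onFun Disjoint B))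
    (hBpos : ∀ n, 0 < μ (B n)) (hBfin : ∀ n, μ (B n) < ∞)
    {ι : Type*} [Fintype ι] (F : ι → Lp Y p μ) (δ : ℝ) (hδ : 0 < δ) :
    ∃ idx : Ω → Option ℕ, Measurable idx ∧ (∀ n, 0 < μ (idx ⁻¹' {some n})) ∧
      (∀ n, μ (idx ⁻¹' {some n}) < ∞) ∧ ∀ i, ∃ g : Lp Y p μ, ‖F i - g‖ ≤ δ ∧
        ∃ h : Option ℕ → Y, h none = 0 ∧ g =ᵐ[μ] h ∘ idx := by
  have h1p : 1 ≤ p := Fact.out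
  have hp0 : p ≠ 0 := (zero_lt_one.trans_le h1p).ne'
  let G : Ω → ι → Y := fun ω i => F i ω
  have hG : MemLp G p μ := MemLp.of_eval fun i => Lp.memLp (F i)
  obtain ⟨s, hs1, hs2⟩ := hG.exists_simpleFunc_eLpNorm_sub_lt hp (ε := ENNReal.ofReal (δ / 2))
    (by simpa using hδ)
  let D : ℕ → Set Ω := fun K => ⋃ k, B (K + k)
  have hDm : ∀ K, MeasurableSet (D K) := fun K => MeasurableSet.iUnion fun k => hBm _
  have hF0 : μ (Function.support s) < ∞ := s.measure_support_lt_top_of_memLp hs2 hp0 hp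
  have hF0m : MeasurableSet (Function.support s) := s.measurableSet_support
  obtain ⟨δ', hδ', hind⟩ := hs2.eLpNorm_indicator_le h1p hp (half_pos hδ)
  have hlim : Filter.Tendsto (fun K => μ (D K ∩ Function.support s)) Filter.atTop (nhds 0) := by
    have h0 : (⋂ K, D K ∩ Function.support s) = ∅ := by
      ext ω
      simp only [Set.mem_iInter, Set.mem_empty_iff_false, iff_false]
      intro h
      obtain ⟨k, hk⟩ := Set.mem_iUnion.1 (h 0).1
      obtain ⟨j, hj⟩ := Set.mem_iUnion.1 (h (0 + k + 1)).1
      have hne : (0 + k) ≠ (0 + k + 1 + j) := by omega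
      exact Set.disjoint_left.1 (hBd hne) hk hj
    have := tendsto_measure_iInter_atTop (μ := μ) (s := fun K => D K ∩ Function.support s)
      (fun K => ((hDm K).inter hF0m).nullMeasurableSet) ?_
      ⟨0, ((measure_mono Set.inter_subset_right).trans_lt hF0).ne⟩
    · rwa [h0, measure_empty] at this
    · intro a b hab
      refine Set.inter_subset_inter_left _ ?_
      intro ω hω
      obtain ⟨j, hj⟩ := Set.mem_iUnion.1 hω
      refine Set.mem_iUnion.2 ⟨b - a + j, ?_⟩
      have : a + (b - a + j) = b + j := by omega
      rwa [this]
  obtain ⟨K, hK⟩ := (hlim.eventually (ge_mem_nhds (ENNReal.ofReal_pos.2 hδ'))).exists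
  let s' : SimpleFunc Ω (ι → Y) := SimpleFunc.piecewise (D K) (hDm K) 0 s
  have hs'D : ∀ ω ∈ D K, s' ω = 0 := by
    intro ω hω
    simp [s', hω]
  have hs'N : ∀ ω ∉ D K, s' ω = s ω := by
    intro ω hω
    simp [s', hω]
  have hsub : ⇑s - ⇑s' = (D K ∩ Function.support s).indicator s := by
    ext1 ω
    by_cases hω : ω ∈ D K
    · by_cases h2 : s ω = 0
      · simp [hs'D ω hω, h2]
      · simp [hs'D ω hω, h2, hω]
    · simp [hs'N ω hω, hω]
  have hss' : eLpNorm (⇑s - ⇑s') p μ ≤ ENNReal.ofReal (δ / 2) := by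
    rw [hsub]
    exact hind _ ((hDm K).inter hF0m) hK
  have hs'm : MemLp s' p μ := by
    have h2 : (s' : Ω → ι → Y) = ⇑s - (D K ∩ Function.support s).indicator s := by
      rw [← hsub]; simp
    rw [h2]
    exact hs2.sub (hs2.indicator ((hDm K).inter hF0m))
  have hGs' : eLpNorm (G - ⇑s') p μ ≤ ENNReal.ofReal δ := by
    have h2 : G - ⇑s' = (G - ⇑s) + (⇑s - ⇑s') := by simp
    rw [h2]
    refine (eLpNorm_add_le (hG.sub hs2).1 (hs2.sub hs'm).1 h1p).trans ?_
    refine (add_le_add hs1.le hss').trans ?_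
    rw [← ENNReal.ofReal_add (by positivity) (by positivity), add_halves]
  let V := {v : ι → Y // v ∈ s'.range ∧ v ≠ 0 ∧ μ (s' ⁻¹' {v}) ≠ 0}
  have : Finite V := by
    refine Set.Finite.subset (s'.range.finite_toSet) ?_
    intro v hv
    exact hv.1
  obtain ⟨e⟩ : Nonempty (V ⊕ ℕ ≃ ℕ) := nonempty_equiv_of_countable
  let A : V ⊕ ℕ → Set Ω := Sum.elim (fun v => s' ⁻¹' {v.1}) (fun k => B (K + k))
  have hVB : ∀ (v : V) k, Disjoint (s' ⁻¹' {v.1}) (B (K + k)) := by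
    intro v k
    rw [Set.disjoint_left]
    intro ω h1 h2
    have h3 := hs'D ω (Set.mem_iUnion.2 ⟨k, h2⟩)
    exact v.2.2.1 (h1.symm.trans h3)
  obtain ⟨idx, hidx, hidxA⟩ := bpb_exists_idx e A
    (by
      rintro (v | k)
      · exact s'.measurableSet_fiber _
      · exact hBm _)
    (by
      rintro (v | k) (w | l) hne
      · rw [Function.onFun, Set.disjoint_left]
        intro ω h1 h2
        exact hne (congrArg Sum.inl (Subtype.ext (h1.symm.trans h2)))
      · exact hVB v l
      · exact (hVB w k).symm
      · exact hBd fun h => hne (by congr 1; omega))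
  have hpre : ∀ n, idx ⁻¹' {some n} = A (e.symm n) := by
    intro n
    ext ω
    have := hidxA (e.symm n) ω
    simpa using this
  refine ⟨idx, hidx, ?_, ?_, ?_⟩
  · intro n
    rw [hpre]
    rcases e.symm n with v | k
    · exact pos_iff_ne_zero.2 v.2.2.2
    · exact hBpos _
  · intro n
    rw [hpre]
    rcases e.symm n with v | k
    · exact s'.measure_preimage_lt_top_of_memLp hp0 hp hs'm v.1 v.2.2.1
    · exact hBfin _
  intro i
  have hgi : MemLp (fun ω => s' ω i) p μ := hs'm.eval i
  refine ⟨hgi.toLp, ?_, fun o => o.elim 0 fun n => Sum.elim (fun v : V => v.1 i) (fun _ => 0) (e.symm n),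
    rfl, ?_⟩
  · rw [Lp.norm_def]
    refine ENNReal.toReal_le_of_le_ofReal hδ.le (le_trans ?_ hGs')
    apply eLpNorm_mono_ae
    filter_upwards [Lp.coeFn_sub (F i) hgi.toLp, hgi.coeFn_toLp] with ω h1 h2
    rw [h1, Pi.sub_apply, h2]
    exact norm_le_pi_norm ((G - ⇑s') ω) i
  · have hae : ∀ᵐ ω ∂μ, μ (s' ⁻¹' {s' ω}) ≠ 0 := by
      have hnull : μ (⋃ v ∈ {v | v ∈ s'.range ∧ μ (s' ⁻¹' {v}) = 0}, s' ⁻¹' {v}) = 0 := by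
        rw [measure_biUnion_null_iff]
        · exact fun v hv => hv.2
        · exact (s'.range.finite_toSet.subset fun v hv => hv.1).countable
      refine measure_mono_null ?_ hnull
      intro ω hω
      simp only [Set.mem_compl_iff, Set.mem_setOf_eq, not_not] at hω
      exact Set.mem_biUnion (x := s' ω) ⟨s'.mem_range_self ω, hω⟩ rfl
    filter_upwards [hgi.coeFn_toLp, hae] with ω h1 h2
    rw [h1]
    simp only [Function.comp]
    cases ho : idx ω with
    | none =>
      by_cases h0 : s' ω = 0
      · simp [h0]
      · have := (hidxA (Sum.inl ⟨s' ω, s'.mem_range_self ω, h0, h2⟩) ω).2 rfl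
        rw [ho] at this
        simp at this
    | some n =>
      have h3 : ω ∈ A (e.symm n) := by rw [← hpre]; exact ho
      simp only [Option.elim]
      rcases hn : e.symm n with v | k
      · rw [hn] at h3
        exact congrFun h3 i
      · rw [hn] at h3
        rw [hs'D ω (Set.mem_iUnion.2 ⟨k, h3⟩)]
        rfl

lemma bpb_main {𝕜 : Type*} [RCLike 𝕜] {X Y : Type*}
    [NormedAddCommGroup X] [NormedSpace 𝕜 X]
    [NormedAddCommGroup Y] [NormedSpace 𝕜 Y] [CompleteSpace Y]
    [NormedSpace ℝ Y] [SMulCommClass ℝ 𝕜 Y]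
    (p : ℝ≥0∞) [Fact (1 ≤ p)] (hp : p ≠ ⊤)
    (h : BPBpCompact 𝕜 X (lp (fun _ : ℕ => Y) p))
    {Ω : Type*} [MeasurableSpace Ω] (μ : MeasureTheory.Measure Ω)
    (hμ : ¬FiniteDimensional 𝕜 (MeasureTheory.Lp 𝕜 1 μ)) :
    BPBpCompact 𝕜 X (MeasureTheory.Lp Y p μ) := by
  obtain ⟨B, hBm, hBd, hBpos, hBfin⟩ := bpb_exists_disjoint μ hμ
  obtain ⟨η, hη⟩ := h
  refine ⟨fun ε => η (ε / 2), fun ε hε => ?_⟩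
  obtain ⟨hη0, hη1⟩ := hη (ε / 2) (half_pos hε)
  refine ⟨hη0, fun T hT hT1 x₀ hx₀ hTx₀ => ?_⟩
  obtain ⟨δ, hδ, hδ1, hδ2, hδ3⟩ : ∃ δ : ℝ, 0 < δ ∧ δ ≤ ε / 4 ∧ δ ≤ 1 / 2 ∧
      1 - η (ε / 2) < ‖T x₀‖ - δ := by
    refine ⟨min (min (ε / 4) (1 / 2)) ((‖T x₀‖ - (1 - η (ε / 2))) / 2), ?_, ?_, ?_, ?_⟩
    · have : 0 < ‖T x₀‖ - (1 - η (ε / 2)) := by linarith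
      positivity
    · exact (min_le_left _ _).trans (min_le_left _ _)
    · exact (min_le_left _ _).trans (min_le_right _ _)
    · have := min_le_right (min (ε / 4) (1 / 2)) ((‖T x₀‖ - (1 - η (ε / 2))) / 2)
      linarith
  obtain ⟨K, hK, hTK⟩ := IsCompactOperator.image_closedBall_subset_compact
    (f := (T : X →ₗ[𝕜] Lp Y p μ)) hT 1
  obtain ⟨t, ht, hKt⟩ := Metric.totallyBounded_iff.1 hK.totallyBounded (δ / 4) (by positivity)
  have := ht.fintype
  obtain ⟨idx, hidx, hpos, hfin, happ⟩ := bpb_approx p hp μ B hBm hBd hBpos hBfin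
    (fun f : t => (f : Lp Y p μ)) (δ / 4) (by positivity)
  obtain ⟨J, Q, hJ, hQ, hJQ⟩ := bpb_exists_JQ (𝕜 := 𝕜) (Y := Y) p μ idx hp hidx hpos hfin
  have hclose : ∀ x : X, ‖x‖ ≤ 1 → ‖J (Q (T x)) - T x‖ ≤ δ := by
    intro x hx
    have hx1 : T x ∈ K := hTK ⟨x, by simpa using hx, rfl⟩
    obtain ⟨f, hf, hfx⟩ := Set.mem_iUnion₂.1 (hKt hx1)
    obtain ⟨g, hg, hgh⟩ := happ ⟨f, hf⟩
    have h1 := hJQ g hgh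
    have h2 : ‖T x - g‖ ≤ δ / 2 := by
      have h3 : ‖T x - f‖ < δ / 4 := by simpa [dist_eq_norm] using hfx
      have h4 : ‖f - g‖ ≤ δ / 4 := hg
      have h5 := norm_sub_le_norm_sub_add_norm_sub (T x) f g
      linarith
    have h6 : J (Q (T x)) - T x = J (Q (T x - g)) - (T x - g) := by
      rw [map_sub, map_sub, h1]; abel
    rw [h6]
    have h7 : ‖J (Q (T x - g))‖ ≤ ‖T x - g‖ := by rw [hJ]; exact hQ _
    have h8 := norm_sub_le (J (Q (T x - g))) (T x - g)
    linarith
  let R : X →L[𝕜] lp (fun _ : ℕ => Y) p := Q.comp T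
  have hR1 : ‖R‖ ≤ 1 := by
    refine R.opNorm_le_bound zero_le_one fun x => ?_
    refine (hQ _).trans ?_
    rw [← hT1]; exact T.le_opNorm x
  have hJR : ‖J.comp R - T‖ ≤ δ := by
    refine ContinuousLinearMap.opNorm_le_of_unit_norm hδ.le fun x hx => ?_
    exact hclose x hx.le
  have hJnorm : ∀ S : X →L[𝕜] lp (fun _ : ℕ => Y) p, ‖J.comp S‖ = ‖S‖ := by
    intro S
    apply le_antisymm
    · refine ContinuousLinearMap.opNorm_le_bound _ (norm_nonneg _) fun x => ?_
      rw [ContinuousLinearMap.comp_apply, hJ]; exact S.le_opNorm x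
    · refine ContinuousLinearMap.opNorm_le_bound _ (norm_nonneg _) fun x => ?_
      rw [← hJ]; exact (J.comp S).le_opNorm x
  have hR2 : 1 - δ ≤ ‖R‖ := by
    have h1 := norm_sub_norm_le T (T - J.comp R)
    rw [sub_sub_cancel, hJnorm, hT1, norm_sub_rev] at h1
    linarith
  have hR0 : 0 < ‖R‖ := by linarith
  have hRx : 1 - η (ε / 2) < ‖R x₀‖ := by
    have h1 := hclose x₀ hx₀.le
    have h2 : ‖J (Q (T x₀))‖ = ‖R x₀‖ := hJ _
    have h3 := norm_sub_norm_le (T x₀) (J (Q (T x₀)))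
    rw [norm_sub_rev] at h3
    linarith
  let c : 𝕜 := ((‖R‖⁻¹ : ℝ) : 𝕜)
  have hc : ‖c‖ = ‖R‖⁻¹ := by simp [c]
  have hRc : IsCompactOperator R := hT.clm_comp Q
  obtain ⟨S, x₁, hS, hS1, hx₁, hSx₁, hxx, hSR⟩ := hη1 (c • R) (hRc.smul c)
    (by rw [norm_smul, hc, inv_mul_cancel₀ hR0.ne']) x₀ hx₀ (by
      rw [ContinuousLinearMap.smul_apply, norm_smul, hc]
      refine hRx.trans_le ?_
      exact le_mul_of_one_le_left (norm_nonneg _) ((one_le_inv₀ hR0).2 hR1))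
  refine ⟨J.comp S, x₁, hS.clm_comp J, by rw [hJnorm, hS1], hx₁, ?_, by linarith, ?_⟩
  · rw [ContinuousLinearMap.comp_apply, hJ, hSx₁]
  · have h1 : ‖c • R - R‖ ≤ δ := by
      have h2 : c • R - R = ((‖R‖⁻¹ - 1 : ℝ) : 𝕜) • R := by
        simp [c, sub_smul]
      rw [h2, norm_smul, RCLike.norm_ofReal, abs_of_nonneg (by
        rw [sub_nonneg]; exact (one_le_inv₀ hR0).2 hR1), sub_mul, inv_mul_cancel₀ hR0.ne']
      linarith
    have h3 : J.comp S - T = J.comp (S - c • R) + J.comp (c • R - R) + (J.comp R - T) := by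
      simp only [ContinuousLinearMap.comp_sub]; abel
    rw [h3]
    have h4 := norm_add₃_le (a := J.comp (S - c • R)) (b := J.comp (c • R - R)) (c := J.comp R - T)
    rw [hJnorm, hJnorm] at h4
    linarith

/-- Theorem 3.14 (a): if (X, ℓ_p(Y)) has the BPBp for compact operators, then so does
(X, L_p(μ, Y)) whenever L₁(μ) is infinite-dimensional. -/
theorem bpbp_compact_Lp_range {𝕜 : Type*} [RCLike 𝕜] {X Y : Type*}
    [NormedAddCommGroup X] [NormedSpace 𝕜 X] [CompleteSpace X]
    [NormedAddCommGroup Y] [NormedSpace 𝕜 Y] [CompleteSpace Y]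
    (p : ℝ≥0∞) [Fact (1 ≤ p)] (hp : p ≠ ⊤)
    (h : BPBpCompact 𝕜 X (lp (fun _ : ℕ => Y) p))
    {Ω : Type*} [MeasurableSpace Ω] (μ : MeasureTheory.Measure Ω)
    (hμ : ¬FiniteDimensional 𝕜 (MeasureTheory.Lp 𝕜 1 μ)) :
    BPBpCompact 𝕜 X (MeasureTheory.Lp Y p μ) := by
  letI : NormedSpace ℝ Y := NormedSpace.restrictScalars ℝ 𝕜 Y
  haveI : SMulCommClass ℝ 𝕜 Y := ⟨fun r c y => by
    show (algebraMap ℝ 𝕜 r) • c • y = c • (algebraMap ℝ 𝕜 r) • y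
    exact smul_comm _ _ _⟩
  exact bpb_main p hp h μ hμ
end
end
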